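/- arXiv:2306.16249 — 3 statements merged into one kernel-verified Lean document; each statement's English description precedes it below -/
import Mathlib

section
/- Let k be a field and R a principal ideal domain containing k. If A is an 𝔸²-fibration over R which is also an 𝔸²-form over R with respect to k, then A is isomorphic as an R-algebra to a polynomial ring in two variables over R. -/
/-!
# Forms that are `𝔸²`-fibrations over a principal ideal domain are trivial

Since the generic fibre is `K[x, y]`, with `K = Frac R`, the algebra `A` is an `R`-lattice in
`K[x, y]`, and there are pairs `(P, Q)` in `A` that generate `A` after tensoring with `K`. A nonzero
multiple of the Jacobian determinant is a biderivation `D` of `A` over `R`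
(`exists_biderivation`), and `D P Q` is a nonzero element of `R` for the first pair. If
`R[P, Q] ≠ A`, then `R[P, Q]` fails to be saturated in `A` at some prime `π` of `R`. It is shown
(`step`) that the pair can then be improved: there is a pair `(P₁, Q₁)` of the same kind with
`D P Q = π • D P₁ Q₁`. As `D P Q` has finitely many prime factors, a generating pair is reached
(`exists_generators`).

The improvement at `π` uses the form. A valuation ring `V` of an algebraic closure of `K` that
dominates `R_(π)` is integrally closed, so it contains an algebraic closure of `k`, and
`V ⊗ A = V[x, y]` (`exists_trivializing`). As `(P, Q)` does not generate `V[x, y]`, it factors as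
`(P, Q) = (α, β)(ϖ x₁, y₁)` with `ϖ` in the maximal ideal of `V` and `(α, β)` an automorphism over
`V` (`valuation_dichotomy`); the finitely many coefficients that occur lie in a discrete valuation
ring, where this is `lattice_theorem`. Modulo the maximal ideal, `(P, Q)` therefore becomes the
restriction of a coordinate pair `(α, β)` to the line `x = 0`, composed with a polynomial.
Elementary reductions of `(α, β)` then give elementary reductions of `(P, Q)` on the fibre of `A` at
`π`. The fibre is a polynomial ring over the residue field of `R` at `π`, so the constants of these
reductions, being quotients of leading coefficients, lie in that residue field (`red_of_line`).
They lift to `R`, and make one of `P, Q` congruent to a constant modulo `π`, so that a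
factor `π` can be split off (`lift_red`).

`lattice_theorem` rests on a confluence property of the elementary enlargements of a lattice
`O[a, b]` to `O[a / π, b]` (`Reach.up`). The tameness of the automorphisms of `F[x, y]` over an
arbitrary field (`coord_induction`) is deduced from the degree reduction `vdk_step`, which is proved
by computing with the valuation `-deg_y` and bounding the value of a polynomial by that of a
Jacobian (`JacVal.v_ev_le`).
-/

set_option synthInstance.maxHeartbeats 1000000
set_option maxHeartbeats 1000000

open TensorProduct

/-- The residue field `κ(p)` of a commutative ring at a prime ideal `p`. -/
noncomputable abbrev ResidueFieldAt {R : Type*} [CommRing R] (p : Ideal R) [p.IsPrime] :=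
  IsLocalRing.ResidueField (Localization.AtPrime p)

/-- `A` is an `𝔸²`-fibration over `R`: a finitely generated flat `R`-algebra all of whose
fibers `A ⊗_R κ(p)` are polynomial rings in two variables over `κ(p)`. -/
def IsA2Fibration (R A : Type*) [CommRing R] [CommRing A] [Algebra R A] : Prop :=
  Algebra.FiniteType R A ∧ Module.Flat R A ∧
  ∀ (p : Ideal R) [p.IsPrime],
    Nonempty ((ResidueFieldAt p ⊗[R] A) ≃ₐ[ResidueFieldAt p]
      MvPolynomial (Fin 2) (ResidueFieldAt p))

namespace A2

open Polynomial

/-! ### Evaluation of bivariate polynomials -/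

section Ev

variable {S B B₂ : Type*} [CommRing S] [CommRing B] [Algebra S B] [CommRing B₂] [Algebra S B₂]

/-- Evaluation at `(x, y)` of a polynomial in two variables, the latter being encoded as
`S[X][X]`: the inner variable `C X` goes to `x` and the outer variable `X` goes to `y`. -/
noncomputable def ev (x y : B) : S[X][X] →ₐ[S] B :=
  { eval₂RingHom (aeval x : S[X] →ₐ[S] B).toRingHom y with
    commutes' := fun r => by
      rw [Polynomial.algebraMap_apply, Polynomial.algebraMap_apply]
      simp }

theorem ev_apply (x y : B) (H : S[X][X]) :
    ev x y H = H.eval₂ (aeval x : S[X] →ₐ[S] B).toRingHom y := rfl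

@[simp] theorem ev_C (x y : B) (p : S[X]) : ev x y (C p) = aeval x p := by
  simp [ev_apply]

@[simp] theorem ev_X (x y : B) : ev (S := S) x y X = y := by
  simp [ev_apply]

theorem algHom_ext2 {φ ψ : S[X][X] →ₐ[S] B} (hx : φ (C X) = ψ (C X)) (hy : φ X = ψ X) :
    φ = ψ := by
  apply Polynomial.algHom_ext'
  · apply Polynomial.algHom_ext
    simpa using hx
  · exact hy

theorem eq_ev (φ : S[X][X] →ₐ[S] B) : φ = ev (φ (C X)) (φ X) :=
  algHom_ext2 (by simp) (by simp)

theorem map_ev (φ : B →ₐ[S] B₂) (x y : B) (H : S[X][X]) :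
    φ (ev x y H) = ev (φ x) (φ y) H := by
  have : φ.comp (ev x y) = ev (φ x) (φ y) := algHom_ext2 (by simp) (by simp)
  exact DFunLike.congr_fun this H

theorem ev_self (H : S[X][X]) : ev (S := S) (C X : S[X][X]) X H = H := by
  have : ev (S := S) (C X : S[X][X]) X = AlgHom.id S S[X][X] := algHom_ext2 (by simp) (by simp)
  rw [this]; rfl

theorem ev_ev (x y : B) (P Q H : S[X][X]) :
    ev x y (ev P Q H) = ev (ev x y P) (ev x y Q) H := map_ev _ _ _ _

theorem ev_comp_outer (x y : B) (H Q : S[X][X]) :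
    ev x y (H.comp Q) = ev x (ev x y Q) H := by
  have h1 : H.comp Q = ev (C X) Q H := by
    rw [ev_apply, Polynomial.comp]
    congr 1
    ext <;> simp
  rw [h1, ev_ev]; simp

theorem range_ev (x y : B) : (ev (S := S) x y).range = Algebra.adjoin S {x, y} := by
  apply le_antisymm
  · rintro _ ⟨H, rfl⟩
    change ev x y H ∈ _
    induction H using Polynomial.induction_on' with
    | add p q hp hq => rw [map_add]; exact add_mem hp hq
    | monomial n a =>
      rw [← C_mul_X_pow_eq_monomial, map_mul, map_pow, ev_C, ev_X]
      refine mul_mem ?_ (pow_mem (Algebra.subset_adjoin (by simp)) _)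
      exact Algebra.adjoin_mono (s := {x}) (Set.singleton_subset_iff.2 (Set.mem_insert _ _))
        (aeval_mem_adjoin_singleton S x)
  · rw [Algebra.adjoin_le_iff]
    rintro _ (rfl | rfl)
    · exact ⟨C X, by simp⟩
    · exact ⟨X, by simp⟩

theorem mem_adjoin_pair {x y b : B} :
    b ∈ Algebra.adjoin S {x, y} ↔ ∃ H : S[X][X], ev x y H = b := by
  rw [← range_ev]; rfl

variable {T : Type*} [CommRing T]

/-- Change of coefficients in a bivariate polynomial. -/
noncomputable def map2 (σ : S →+* T) : S[X][X] →+* T[X][X] := mapRingHom (mapRingHom σ)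

@[simp] theorem map2_X (σ : S →+* T) : map2 σ X = X := by simp [map2]

@[simp] theorem map2_C (σ : S →+* T) (p : S[X]) : map2 σ (C p) = C (p.map σ) := by simp [map2]

theorem coeff_map2 (σ : S →+* T) (H : S[X][X]) (i j : ℕ) :
    ((map2 σ H).coeff j).coeff i = σ ((H.coeff j).coeff i) := by
  simp [map2]

theorem map2_injective {σ : S →+* T} (h : Function.Injective σ) : Function.Injective (map2 σ) :=
  Polynomial.map_injective _ (Polynomial.map_injective _ h)

theorem map2_comp {U : Type*} [CommRing U] (σ : S →+* T) (τ : T →+* U) (H : S[X][X]) :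
    map2 τ (map2 σ H) = map2 (τ.comp σ) H := by
  ext; simp [coeff_map2]

theorem ev_map2 {B : Type*} [CommRing B] [Algebra S T] [Algebra S B] [Algebra T B]
    [IsScalarTower S T B] (x y : B) (H : S[X][X]) :
    ev x y (map2 (algebraMap S T) H) = ev x y H := by
  rw [ev_apply, ev_apply, map2, coe_mapRingHom, eval₂_map]
  congr 1
  ext <;> simp [← IsScalarTower.algebraMap_apply]

/-- Evaluation commutes with a change of coefficients along semilinear data. -/
theorem ringHom_ev {B : Type*} [CommRing B] [Algebra S B] {B₂ : Type*} [CommRing B₂] [Algebra T B₂]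
    (σ : S →+* T) (φ : B →+* B₂)
    (h : ∀ s, φ (algebraMap S B s) = algebraMap T B₂ (σ s)) (x y : B) (H : S[X][X]) :
    φ (ev x y H) = ev (φ x) (φ y) (map2 σ H) := by
  have : φ.comp (ev x y : S[X][X] →ₐ[S] B).toRingHom
      = (ev (φ x) (φ y) : T[X][X] →ₐ[T] B₂).toRingHom.comp (map2 σ) := by
    ext <;> simp [h]
  exact DFunLike.congr_fun this H

theorem map2_ev (σ : S →+* T) (P Q H : S[X][X]) :
    map2 σ (ev P Q H) = ev (map2 σ P) (map2 σ Q) (map2 σ H) :=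
  ringHom_ev σ (map2 σ) (fun s => by
    rw [Polynomial.algebraMap_apply, Polynomial.algebraMap_apply, Polynomial.algebraMap_apply,
      Polynomial.algebraMap_apply]; simp) _ _ _

end Ev

/-! ### A divisorial valuation with a Jacobian, and the blow-up estimate -/

/-- A discrete valuation `v` (given by its values on nonzero elements) on an extension `M` of a
field `F`, trivial on `F`, with two `F`-derivations that are compatible with `v` as `∂/∂x` and
`∂/∂y` are with `-deg_y`, and such that every element of the residue field is either in `F` or
transcendental over `F`. -/
structure JacVal (F M : Type*) [Field F] [Field M] [Algebra F M] where
  v : M → ℤ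
  dx : Derivation F M M
  dy : Derivation F M M
  v_mul : ∀ a b, a ≠ 0 → b ≠ 0 → v (a * b) = v a + v b
  v_add : ∀ a b, a ≠ 0 → b ≠ 0 → a + b ≠ 0 → min (v a) (v b) ≤ v (a + b)
  v_alg : ∀ c : F, c ≠ 0 → v (algebraMap F M c) = 0
  v_dx : ∀ a, dx a ≠ 0 → v a ≤ v (dx a)
  v_dy : ∀ a, dy a ≠ 0 → v a + 1 ≤ v (dy a)
  v_res : ∀ a, a ≠ 0 → v a = 0 →
    (∃ c : F, a - algebraMap F M c = 0 ∨ 1 ≤ v (a - algebraMap F M c)) ∨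
      ∃ ρ : M, (a - ρ = 0 ∨ 1 ≤ v (a - ρ)) ∧
        ∀ h : F[X], h ≠ 0 → aeval ρ h ≠ 0 ∧ v (aeval ρ h) = 0

theorem coeff_swap {S : Type*} [CommRing S] (H : S[X][X]) (i j : ℕ) :
    ((Bivariate.swap H).coeff i).coeff j = (H.coeff j).coeff i := by
  induction H using Polynomial.induction_on' with
  | add p q hp hq => simp only [map_add, coeff_add, hp, hq]
  | monomial n a =>
    induction a using Polynomial.induction_on' with
    | add p q hp hq => simp only [map_add, coeff_add, hp, hq]
    | monomial m r =>
      rw [Bivariate.swap_monomial_monomial]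
      simp only [coeff_monomial]
      split_ifs <;> simp_all [coeff_monomial]

namespace JacVal

variable {F M : Type*} [Field F] [Field M] [Algebra F M] (D : JacVal F M)

/-- The Jacobian determinant of a pair. -/
def J (a b : M) : M := D.dx a * D.dy b - D.dy a * D.dx b

/-- `v a ≥ n`, with the convention `v 0 = ∞`. -/
def Ge (n : ℤ) (a : M) : Prop := a = 0 ∨ n ≤ D.v a

variable {D}

theorem Ge.add {n : ℤ} {a b : M} (ha : D.Ge n a) (hb : D.Ge n b) : D.Ge n (a + b) := by
  by_cases h0 : a = 0
  · simpa [h0] using hb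
  by_cases h1 : b = 0
  · simpa [h1] using ha
  by_cases h2 : a + b = 0
  · exact Or.inl h2
  have := D.v_add a b h0 h1 h2
  have ha' := ha.resolve_left h0
  have hb' := hb.resolve_left h1
  right; omega

theorem Ge.mul {n m : ℤ} {a b : M} (ha : D.Ge n a) (hb : D.Ge m b) : D.Ge (n + m) (a * b) := by
  by_cases h0 : a = 0
  · left; simp [h0]
  by_cases h1 : b = 0
  · left; simp [h1]
  have ha' := ha.resolve_left h0
  have hb' := hb.resolve_left h1
  right; rw [D.v_mul a b h0 h1]; omega

theorem Ge.mono {n m : ℤ} {a : M} (ha : D.Ge n a) (h : m ≤ n) : D.Ge m a := by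
  rcases ha with ha | ha
  · exact Or.inl ha
  · right; omega

theorem ge_alg (c : F) : D.Ge 0 (algebraMap F M c) := by
  by_cases h : c = 0
  · left; simp [h]
  · right; rw [D.v_alg c h]

theorem v_one : D.v 1 = 0 := by
  have := D.v_alg 1 one_ne_zero
  simpa using this

theorem v_neg (a : M) : D.v (-a) = D.v a := by
  by_cases h : a = 0
  · simp [h]
  have h1 : D.v (-1) = 0 := by
    have := D.v_alg (-1) (by simp)
    simpa using this
  rw [← neg_one_mul, D.v_mul _ _ (by simp) h, h1, zero_add]

theorem Ge.neg {n : ℤ} {a : M} (ha : D.Ge n a) : D.Ge n (-a) := by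
  rcases ha with ha | ha
  · left; simp [ha]
  · right; rwa [v_neg]

theorem v_inv {a : M} (h : a ≠ 0) : D.v a⁻¹ = - D.v a := by
  have := D.v_mul a a⁻¹ h (inv_ne_zero h)
  rw [mul_inv_cancel₀ h, v_one] at this
  omega

theorem v_div {a b : M} (ha : a ≠ 0) (hb : b ≠ 0) : D.v (a / b) = D.v a - D.v b := by
  rw [div_eq_mul_inv, D.v_mul _ _ ha (inv_ne_zero hb), v_inv hb]; omega

theorem v_pow {a : M} (ha : a ≠ 0) (n : ℕ) : D.v (a ^ n) = n * D.v a := by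
  induction n with
  | zero => simp [v_one]
  | succ n ih => rw [pow_succ, D.v_mul _ _ (pow_ne_zero n ha) ha, ih]; push_cast; ring

theorem Ge.pow {a : M} (ha : D.Ge 0 a) (n : ℕ) : D.Ge 0 (a ^ n) := by
  induction n with
  | zero => right; simp [v_one]
  | succ n ih => rw [pow_succ]; simpa using ih.mul ha

theorem ge_aeval {a : M} (ha : D.Ge 0 a) (h : F[X]) : D.Ge 0 (aeval a h) := by
  induction h using Polynomial.induction_on' with
  | add p q hp hq => rw [map_add]; exact hp.add hq
  | monomial n c =>
    rw [aeval_monomial]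
    simpa using (ge_alg c).mul (ha.pow n)

theorem ge_ev {z w : M} (hz : D.Ge 0 z) (hw : D.Ge 0 w) (H : F[X][X]) : D.Ge 0 (ev z w H) := by
  induction H using Polynomial.induction_on' with
  | add p q hp hq => rw [map_add]; exact hp.add hq
  | monomial n c =>
    rw [← C_mul_X_pow_eq_monomial, map_mul, map_pow, ev_C, ev_X]
    simpa using (ge_aeval hz c).mul (hw.pow n)

/-- Adding an element of larger value does not change the value. -/
theorem v_add_of_lt {a b : M} {n : ℤ} (ha : a ≠ 0) (hn : D.v a = n) (hb : D.Ge (n + 1) b) :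
    a + b ≠ 0 ∧ D.v (a + b) = n := by
  have h0 : a + b ≠ 0 := by
    intro h
    have h1 : a = -b := eq_neg_of_add_eq_zero_left h
    rcases hb with hb | hb
    · exact ha (by simp [h1, hb])
    · rw [h1, v_neg] at hn; omega
  refine ⟨h0, ?_⟩
  rcases hb with hb | hb
  · simp [hb, hn]
  by_cases hb0 : b = 0
  · simp [hb0, hn]
  have h1 := D.v_add a b ha hb0 h0
  have h2 := D.v_add (a + b) (-b) h0 (by simpa using hb0) (by simpa using ha)
  rw [v_neg] at h2
  simp only [add_neg_cancel_right] at h2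
  omega

/-- An element of value `0` is either congruent to a constant or residually transcendental. -/
theorem res {a : M} (ha : a ≠ 0) (h0 : D.v a = 0) :
    (∃ c : F, a - algebraMap F M c = 0 ∨ 1 ≤ D.v (a - algebraMap F M c)) ∨
      ∀ h : F[X], h ≠ 0 → aeval a h ≠ 0 ∧ D.v (aeval a h) = 0 := by
  rcases D.v_res a ha h0 with h | ⟨ρ, h1, h2⟩
  · exact Or.inl h
  right
  have ha0 : D.Ge 0 a := Or.inr h0.ge
  have h1 : D.Ge 1 (a - ρ) := h1
  have hρ : D.Ge 0 ρ := by
    have := ha0.add (h1.mono (by omega : (0 : ℤ) ≤ 1)).neg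
    simpa using this
  have hpow : ∀ n : ℕ, D.Ge 1 (a ^ n - ρ ^ n) := by
    intro n
    induction n with
    | zero => left; simp
    | succ n ih =>
      have h3 : a ^ (n + 1) - ρ ^ (n + 1) = a ^ n * (a - ρ) + (a ^ n - ρ ^ n) * ρ := by ring
      rw [h3]
      exact (((ha0.pow n).mul h1).mono (by omega)).add ((ih.mul hρ).mono (by omega))
  have key : ∀ h : F[X], D.Ge 1 (aeval a h - aeval ρ h) := by
    intro h
    induction h using Polynomial.induction_on' with
    | add p q hp hq =>
      have := hp.add hq
      simp only [map_add]
      convert this using 1; ring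
    | monomial n c =>
      rw [aeval_monomial, aeval_monomial, ← mul_sub]
      exact ((ge_alg c).mul (hpow n)).mono (by omega)
  intro h hh
  obtain ⟨h3, h4⟩ := h2 h hh
  have := v_add_of_lt h3 h4 (by simpa using key h)
  simpa using this

theorem J_swap (a b : M) : D.J b a = - D.J a b := by
  simp only [J]; ring

theorem J_sub_alg (a b : M) (c : F) : D.J a (b - algebraMap F M c) = D.J a b := by
  simp [J]

theorem J_div {a b : M} (ha : a ≠ 0) : D.J a (b / a) = D.J a b / a := by
  simp only [J, Derivation.leibniz_div, smul_eq_mul]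
  field_simp
  ring

theorem ge_dx {a : M} {n : ℤ} (ha : D.Ge n a) : D.Ge n (D.dx a) := by
  rcases ha with ha | ha
  · left; simp [ha]
  · by_cases h : D.dx a = 0
    · exact Or.inl h
    · right; have := D.v_dx a h; omega

theorem ge_dy {a : M} {n : ℤ} (ha : D.Ge n a) : D.Ge (n + 1) (D.dy a) := by
  rcases ha with ha | ha
  · left; simp [ha]
  · by_cases h : D.dy a = 0
    · exact Or.inl h
    · right; have := D.v_dy a h; omega

theorem le_v_J {a b : M} (h : D.J a b ≠ 0) : D.v a + D.v b + 1 ≤ D.v (D.J a b) := by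
  have h1 : D.Ge (D.v a + D.v b + 1) (D.J a b) := by
    rw [J, sub_eq_add_neg]
    have hx : D.Ge (D.v a) a := Or.inr le_rfl
    have hy : D.Ge (D.v b) b := Or.inr le_rfl
    exact (((ge_dx hx).mul (ge_dy hy)).mono (by omega)).add
      ((((ge_dy hx).mul (ge_dx hy)).mono (by omega)).neg)
  exact h1.resolve_left h

/-- If `w` is residually transcendental and `H(0, ·) ≠ 0`, then `H(z, w)` is a unit. -/
theorem v_ev_of_transcendental {z w : M} (hz : D.Ge 1 z) (hw : D.Ge 0 w)
    (ht : ∀ h : F[X], h ≠ 0 → aeval w h ≠ 0 ∧ D.v (aeval w h) = 0)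
    (H : F[X][X]) (hH : H.map (evalRingHom 0) ≠ 0) :
    ev z w H ≠ 0 ∧ D.v (ev z w H) = 0 := by
  have key : ∀ H : F[X][X], D.Ge 1 (ev z w H - aeval w (H.map (evalRingHom 0))) := by
    intro H
    induction H using Polynomial.induction_on' with
    | add p q hp hq =>
      have := hp.add hq
      simp only [Polynomial.map_add, map_add]
      convert this using 1; ring
    | monomial n c =>
      rw [← C_mul_X_pow_eq_monomial, map_mul, map_pow, ev_C, ev_X]
      simp only [Polynomial.map_mul, map_C, Polynomial.map_pow, map_X, map_mul, map_pow, aeval_C,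
        aeval_X, coe_evalRingHom]
      rw [← sub_mul]
      have h1 : D.Ge 1 (aeval z c - algebraMap F M (eval 0 c)) := by
        obtain ⟨q, hq⟩ : X ∣ c - C (eval 0 c) := by
          rw [X_dvd_iff]; simp [coeff_zero_eq_eval_zero]
        have : aeval z c - algebraMap F M (eval 0 c) = z * aeval z q := by
          rw [← aeval_C (x := z), ← map_sub, hq]; simp
        rw [this]
        simpa using hz.mul (ge_aeval (hz.mono (by omega)) q)
      simpa using h1.mul (hw.pow n)
  obtain ⟨h1, h2⟩ := ht _ hH
  have := v_add_of_lt h1 h2 (by simpa using key H)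
  simpa using this

theorem exists_coeff_of_map_ne {m : ℕ} {P : F[X]} (hP : P ≠ 0) (hd : P.natDegree ≤ m) :
    ∃ j ≤ m, P.coeff j ≠ 0 :=
  ⟨P.natDegree, hd, by simpa using hP⟩

/-- **Blow-up estimate.** If `z, w` have positive value and nonzero Jacobian, and the polynomial
`H` has a nonzero coefficient in total degree at most `d`, then
`v (H(z, w)) ≤ d * (v (J(z, w)) - 2)`.  The proof blows up: it replaces `(z, w)` by
`(z, w / z - c)`, which lowers the value of the Jacobian. -/
theorem v_ev_le (n : ℕ) : ∀ (z w : M) (d i j : ℕ) (H : F[X][X]), z ≠ 0 → w ≠ 0 → 1 ≤ D.v z →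
    1 ≤ D.v w → D.J z w ≠ 0 → D.v (D.J z w) ≤ n → (H.coeff j).coeff i ≠ 0 → i + j ≤ d →
    ev z w H ≠ 0 ∧ D.v (ev z w H) ≤ d * (D.v (D.J z w) - 2) := by
  induction n using Nat.strong_induction_on with
  | _ n ih =>
  -- the case `v z ≤ v w`
  have main : ∀ (z w : M) (d i j : ℕ) (H : F[X][X]), z ≠ 0 → w ≠ 0 → 1 ≤ D.v z →
    D.v z ≤ D.v w → D.J z w ≠ 0 → D.v (D.J z w) ≤ n → (H.coeff j).coeff i ≠ 0 → i + j ≤ d →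
    ev z w H ≠ 0 ∧ D.v (ev z w H) ≤ d * (D.v (D.J z w) - 2) := by
    intro z w d i j H hz hw hvz hvw hJ hJn hc hij
    -- blow up: `H(z, z w₁) = zᵐ H₁(z, w₁)` where `m` is the multiplicity of `H` at the origin, and
    -- `P = H₁(0, ·)` is nonzero of degree at most `m`
    set φ : F[X][X] := H.comp (C X * X) with hφ
    have hφc : ∀ j, φ.coeff j = H.coeff j * X ^ j := fun j => by
      rw [hφ, comp_C_mul_X_coeff]
    have hφ0 : φ ≠ 0 := by
      intro h
      have h1 := hφc j
      rw [h, coeff_zero] at h1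
      have : H.coeff j ≠ 0 := fun h => hc (by simp [h])
      exact mul_ne_zero this (pow_ne_zero j X_ne_zero) h1.symm
    have hfin : FiniteMultiplicity (C X : F[X][X]) φ := by
      apply FiniteMultiplicity.of_prime_left _ hφ0
      exact Polynomial.prime_C_iff.2 prime_X
    obtain ⟨H1, hH1, hnd⟩ := hfin.exists_eq_pow_mul_and_not_dvd
    set m := multiplicity (C X : F[X][X]) φ
    have hH1c : ∀ j, H.coeff j * X ^ j = X ^ m * H1.coeff j := fun j => by
      rw [← hφc, hH1, ← C_pow, coeff_C_mul]
    have hmd : m ≤ d := by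
      by_contra hmd
      have h1 : X ^ m ∣ H.coeff j * X ^ j := ⟨_, hH1c j⟩
      rw [X_pow_dvd_iff] at h1
      have h2 := h1 (i + j) (by omega)
      rw [coeff_mul_X_pow] at h2
      exact hc h2
    set P : F[X] := H1.map (evalRingHom 0) with hP
    have hP0 : P ≠ 0 := by
      intro h
      apply hnd
      rw [C_dvd_iff_dvd_coeff]
      intro j
      have := congrArg (fun Q => coeff Q j) h
      simp only [hP, coeff_map, coe_evalRingHom, coeff_zero] at this
      rw [X_dvd_iff, coeff_zero_eq_eval_zero, this]
    have hPd : P.natDegree ≤ m := by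
      rw [natDegree_le_iff_coeff_eq_zero]
      intro j hj
      have h1 := hH1c j
      obtain ⟨e, rfl⟩ := Nat.exists_eq_add_of_lt hj
      have h2 : H1.coeff (m + e + 1) = H.coeff (m + e + 1) * X ^ (e + 1) := by
        apply mul_left_cancel₀ (pow_ne_zero m (X_ne_zero (R := F)))
        rw [← h1]; ring
      rw [hP, coeff_map, h2]; simp
    set w1 := w / z with hw1
    have hw10 : w1 ≠ 0 := div_ne_zero hw hz
    have hzw : z * w1 = w := by rw [hw1]; field_simp
    have hH : ev z w H = z ^ m * ev z w1 H1 := by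
      have h1 : ev z w1 φ = ev z w H := by
        rw [hφ, ev_comp_outer]; simp [hzw]
      rw [← h1, hH1]; simp
    have hJ1 : D.J z w1 = D.J z w / z := J_div hz
    have hJ10 : D.J z w1 ≠ 0 := by rw [hJ1]; exact div_ne_zero hJ hz
    have hvJ1 : D.v (D.J z w1) = D.v (D.J z w) - D.v z := by rw [hJ1, v_div hJ hz]
    have hvw1 : D.v w1 = D.v w - D.v z := by rw [hw1, v_div hw hz]
    have hle := le_v_J hJ10
    have hle' := le_v_J hJ
    have hdm : (m : ℤ) * (D.v (D.J z w) - 2) ≤ d * (D.v (D.J z w) - 2) := by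
      apply mul_le_mul_of_nonneg_right (by exact_mod_cast hmd); omega
    have fin : ∀ t : ℤ, ev z w1 H1 ≠ 0 → D.v (ev z w1 H1) ≤ t →
        m * D.v z + t ≤ m * (D.v (D.J z w) - 2) →
        ev z w H ≠ 0 ∧ D.v (ev z w H) ≤ d * (D.v (D.J z w) - 2) := by
      intro t h0 ht hmt
      rw [hH]
      refine ⟨mul_ne_zero (pow_ne_zero m hz) h0, ?_⟩
      rw [D.v_mul _ _ (pow_ne_zero m hz) h0, v_pow hz]
      linarith
    -- either `w / z` is residually transcendental, or it is congruent to a constant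
    have hcase : (∃ c : F, w1 - algebraMap F M c = 0 ∨ 1 ≤ D.v (w1 - algebraMap F M c)) ∨
      ∀ h : F[X], h ≠ 0 → aeval w1 h ≠ 0 ∧ D.v (aeval w1 h) = 0 := by
      by_cases h0 : D.v w1 = 0
      · exact D.res hw10 h0
      · left; exact ⟨0, Or.inr (by simp; omega)⟩
    rcases hcase with ⟨c, hc⟩ | ht
    · set w2 := w1 - algebraMap F M c with hw2
      have hJ2 : D.J z w2 = D.J z w1 := J_sub_alg _ _ _
      have hw20 : w2 ≠ 0 := by
        intro h
        rw [h] at hJ2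
        apply hJ10; rw [← hJ2]; simp [J]
      have hvw2 := hc.resolve_left hw20
      set H2 : F[X][X] := H1.comp (X + C (C c)) with hH2
      have hev : ev z w2 H2 = ev z w1 H1 := by
        rw [hH2, ev_comp_outer]; simp [hw2]
      have hP2 : H2.map (evalRingHom 0) = P.comp (X + C c) := by
        rw [hH2, Polynomial.map_comp]; simp [hP]
      have hPc0 : P.comp (X + C c) ≠ 0 := by
        intro h
        have := congrArg (fun Q => Q.comp (X - C c)) h
        simp only [comp_assoc, zero_comp] at this
        simp at this
        exact hP0 this
      obtain ⟨j', hj', hcj'⟩ := exists_coeff_of_map_ne hPc0 (m := m)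
        (by rw [natDegree_comp]; simpa using hPd)
      rw [← hP2, coeff_map, coe_evalRingHom, ← coeff_zero_eq_eval_zero] at hcj'
      have hn : (D.v (D.J z w2)).toNat < n := by rw [hJ2]; omega
      have := ih _ hn z w2 m 0 j' H2 hz hw20 hvz hvw2 (by rwa [hJ2])
        (by rw [Int.toNat_of_nonneg]; rw [hJ2]; omega) hcj' (by omega)
      rw [hev, hJ2, hvJ1] at this
      refine fin _ this.1 this.2 (le_of_eq (by ring))
    · have := v_ev_of_transcendental (D := D) (Or.inr hvz) (Or.inr (by omega : 0 ≤ D.v w1)) ht H1 hP0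
      refine fin 0 this.1 this.2.le ?_
      rw [add_zero]
      apply mul_le_mul_of_nonneg_left _ (by positivity)
      omega
  intro z w d i j H hz hw hvz hvw hJ hJn hc hij
  rcases le_total (D.v z) (D.v w) with h | h
  · exact main z w d i j H hz hw hvz h hJ hJn hc hij
  · have e1 : ev z w H = ev w z (Bivariate.swap H) := by
      have : (ev z w : F[X][X] →ₐ[F] M) = (ev w z).comp (Bivariate.swap (R := F)).toAlgHom :=
        algHom_ext2 (by simp [Bivariate.swap_apply]) (by simp [Bivariate.swap_apply])
      exact DFunLike.congr_fun this H
    have e2 : ((Bivariate.swap H).coeff i).coeff j = (H.coeff j).coeff i :=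
      coeff_swap H i j
    have hJ' : D.J w z ≠ 0 := by rw [J_swap]; simpa using hJ
    have hvJ : D.v (D.J w z) = D.v (D.J z w) := by rw [J_swap, v_neg]
    rw [e1, ← hvJ]
    exact main w z d j i _ hw hz hvw h hJ' (by rwa [hvJ]) (by rwa [e2]) (by omega)

end JacVal

/-! ### The valuation `-deg_y` on `F(x, y)` -/

/-- A derivation of a domain extends to its fraction field. -/
theorem exists_derivation_extend {F B K : Type*} [CommRing F] [CommRing B] [IsDomain B]
    [Algebra F B] [Field K] [Algebra F K] [Algebra B K] [IsScalarTower F B K] [IsFractionRing B K]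
    (d : Derivation F B B) :
    ∃ d' : Derivation F K K, ∀ b, d' (algebraMap B K b) = algebraMap B K (d b) := by
  let g : B →+* TrivSqZeroExt K K :=
    { toFun := fun b => TrivSqZeroExt.inl (algebraMap B K b) + TrivSqZeroExt.inr (algebraMap B K (d b))
      map_one' := by simp
      map_zero' := by simp
      map_add' := fun a b => by
        simp only [map_add, TrivSqZeroExt.inl_add, TrivSqZeroExt.inr_add]; abel
      map_mul' := fun a b => by
        ext
        · simp
        · simp only [TrivSqZeroExt.snd_mul, TrivSqZeroExt.snd_add, TrivSqZeroExt.snd_inl,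
            TrivSqZeroExt.snd_inr, TrivSqZeroExt.fst_add, TrivSqZeroExt.fst_inl,
            TrivSqZeroExt.fst_inr, Derivation.leibniz, map_add, map_mul, smul_eq_mul,
            MulOpposite.smul_eq_mul_unop, MulOpposite.unop_op]
          ring }
  have hg : ∀ y : nonZeroDivisors B, IsUnit (g y) := fun y => by
    rw [TrivSqZeroExt.isUnit_iff_isUnit_fst]
    have : algebraMap B K y ≠ 0 := by
      simp
    simp [g]
  let f : K →+* TrivSqZeroExt K K := IsLocalization.lift hg
  have hf : ∀ b, f (algebraMap B K b) = g b := fun b => IsLocalization.lift_eq hg b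
  have hfst : ∀ a : K, (f a).fst = a := by
    have : (TrivSqZeroExt.fstHom K K K).toRingHom.comp f = RingHom.id K := by
      apply IsLocalization.ringHom_ext (nonZeroDivisors B)
      ext b
      simp [hf, g]
    exact fun a => DFunLike.congr_fun this a
  refine ⟨Derivation.mk'
    { toFun := fun a => (f a).snd
      map_add' := fun a b => by simp
      map_smul' := fun c a => by
        rw [Algebra.smul_def, map_mul, IsScalarTower.algebraMap_apply F B K, hf]
        simp [g, hfst, Algebra.smul_def, IsScalarTower.algebraMap_apply F B K] } ?_, ?_⟩
  · intro a b
    simp only [LinearMap.coe_mk, AddHom.coe_mk, map_mul, TrivSqZeroExt.snd_mul, hfst, smul_eq_mul,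
      MulOpposite.smul_eq_mul_unop, MulOpposite.unop_op]
    ring
  · intro b
    change (f (algebraMap B K b)).snd = _
    rw [hf]
    change (TrivSqZeroExt.inl (algebraMap B K b) +
      TrivSqZeroExt.inr (algebraMap B K (d b)) : TrivSqZeroExt K K).snd = _
    rw [TrivSqZeroExt.snd_add, TrivSqZeroExt.snd_inl, TrivSqZeroExt.snd_inr, zero_add]

theorem exists_mapCoeff (F : Type*) {L : Type*} [Field F] [Field L] [Algebra F L]
    (d : Derivation F L L) :
    ∃ d' : Derivation F L[X] L[X], ∀ p n, (d' p).coeff n = d (p.coeff n) := by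
  let l : L[X] →ₗ[F] L[X] :=
    Polynomial.lsum fun n => ((monomial n : L →ₗ[L] L[X]).restrictScalars F) ∘ₗ d.toLinearMap
  have hl : ∀ n a, l (monomial n a) = monomial n (d a) := fun n a => by
    simp [l, Polynomial.lsum, sum_monomial_index]
  have hc : ∀ p n, (l p).coeff n = d (p.coeff n) := by
    intro p n
    induction p using Polynomial.induction_on' with
    | add p q hp hq => simp [hp, hq]
    | monomial m a => rw [hl, coeff_monomial, coeff_monomial]; split_ifs <;> simp
  refine ⟨Derivation.mk' l ?_, hc⟩
  intro p q
  induction p using Polynomial.induction_on' with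
  | add p p' hp hq => simp only [add_mul, map_add, hp, hq, add_smul, smul_add]; ring
  | monomial m a =>
    induction q using Polynomial.induction_on' with
    | add p p' hp hq => simp only [mul_add, map_add, hp, hq, add_smul, smul_add]; ring
    | monomial n b =>
      simp only [monomial_mul_monomial, hl, smul_eq_mul, Derivation.leibniz, map_add]
      rw [add_comm n m]

theorem natDegree_mapCoeff_le {F L : Type*} [Field F] [Field L] [Algebra F L]
    {d : Derivation F L L} {d' : Derivation F L[X] L[X]}
    (h : ∀ p n, (d' p).coeff n = d (p.coeff n)) (p : L[X]) : (d' p).natDegree ≤ p.natDegree := by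
  rw [natDegree_le_iff_coeff_eq_zero]
  intro n hn
  rw [h, coeff_eq_zero_of_natDegree_lt hn, map_zero]

/-- Bound for the degree of the derivative of a rational function, from one for polynomials. -/
theorem intDegree_derivation_le {F L : Type*} [Field F] [Field L] [Algebra F L]
    (d : Derivation F L[X] L[X]) (D : Derivation F (RatFunc L) (RatFunc L))
    (hD : ∀ b, D (algebraMap L[X] (RatFunc L) b) = algebraMap L[X] (RatFunc L) (d b)) (e : ℤ)
    (hd : ∀ p, d p ≠ 0 → ((d p).natDegree : ℤ) + e ≤ p.natDegree) (a : RatFunc L) (ha : D a ≠ 0) :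
    (D a).intDegree + e ≤ a.intDegree := by
  obtain ⟨p, q, hq, rfl⟩ := IsFractionRing.div_surjective (A := L[X]) a
  have hq0 : q ≠ 0 := nonZeroDivisors.ne_zero hq
  have hp0 : p ≠ 0 := by rintro rfl; simp at ha
  have iq : algebraMap L[X] (RatFunc L) q ≠ 0 := by simpa using hq0
  have ip : algebraMap L[X] (RatFunc L) p ≠ 0 := by simpa using hp0
  have h1 : D (algebraMap L[X] (RatFunc L) p / algebraMap L[X] (RatFunc L) q)
      = algebraMap L[X] (RatFunc L) (q * d p - p * d q) / algebraMap L[X] (RatFunc L) (q ^ 2) := by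
    rw [Derivation.leibniz_div, hD, hD]
    simp only [smul_eq_mul, map_sub, map_mul, map_pow]
    field_simp
  rw [h1] at ha ⊢
  have h2 : q * d p - p * d q ≠ 0 := by
    intro h; apply ha; simp [h]
  rw [RatFunc.intDegree_div (by simpa only [ne_eq, FaithfulSMul.algebraMap_eq_zero_iff] using h2)
    (by simpa using hq0),
    RatFunc.intDegree_div ip iq]
  simp only [RatFunc.intDegree_polynomial, natDegree_pow]
  have h3 : ((q * d p - p * d q).natDegree : ℤ) + e ≤ p.natDegree + q.natDegree := by
    have h4 : ∀ a b : L[X], d b ≠ 0 → ((a * d b).natDegree : ℤ) + e ≤ a.natDegree + b.natDegree :=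
      fun a b hb => by
        have := hd b hb
        have := natDegree_mul_le (p := a) (q := d b)
        omega
    by_cases hp : d p = 0
    · have hq' : d q ≠ 0 := fun h => h2 (by simp [hp, h])
      have := h4 p q hq'
      simp only [hp, mul_zero, zero_sub, natDegree_neg]; omega
    by_cases hq' : d q = 0
    · have := h4 q p hp
      simp only [hq', mul_zero, sub_zero]; omega
    have := h4 p q hq'
    have := h4 q p hp
    have := natDegree_sub_le (q * d p) (p * d q)
    omega
  push_cast
  omega

/-- The residue field of `-deg` on `L(y)` is `L`. -/
theorem exists_residue {L : Type*} [Field L] (a : RatFunc L) (ha : a ≠ 0) (ha0 : a.intDegree = 0) :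
    ∃ ρ : L, a - RatFunc.C ρ = 0 ∨ 1 ≤ - (a - RatFunc.C ρ).intDegree := by
  obtain ⟨p, q, hq, rfl⟩ := IsFractionRing.div_surjective (A := L[X]) a
  have hq0 : q ≠ 0 := nonZeroDivisors.ne_zero hq
  have hp0 : p ≠ 0 := by rintro rfl; simp at ha
  have iq : algebraMap L[X] (RatFunc L) q ≠ 0 := by simpa using hq0
  have ip : algebraMap L[X] (RatFunc L) p ≠ 0 := by simpa using hp0
  rw [RatFunc.intDegree_div ip iq] at ha0
  rw [RatFunc.intDegree_polynomial, RatFunc.intDegree_polynomial] at ha0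
  have hdeg : p.natDegree = q.natDegree := by omega
  set ρ : L := p.leadingCoeff / q.leadingCoeff with hρ
  have hρ0 : ρ ≠ 0 := div_ne_zero (by simpa using hp0) (by simpa using hq0)
  have hsub : algebraMap L[X] (RatFunc L) p / algebraMap L[X] (RatFunc L) q - RatFunc.C ρ
      = algebraMap L[X] (RatFunc L) (p - C ρ * q) / algebraMap L[X] (RatFunc L) q := by
    rw [map_sub, map_mul, RatFunc.algebraMap_C]; field_simp
  refine ⟨ρ, ?_⟩
  by_cases h0 : p - C ρ * q = 0
  · left; rw [hsub, h0]; simp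
  right
  have h1 : (p - C ρ * q).natDegree < q.natDegree := by
    have h2 : (p - C ρ * q).degree < p.degree := by
      apply degree_sub_lt_left _ hp0
      · rw [leadingCoeff_mul, leadingCoeff_C, hρ]
        have : q.leadingCoeff ≠ 0 := by simpa using hq0
        field_simp
      · rw [degree_C_mul hρ0, degree_eq_natDegree hp0, degree_eq_natDegree hq0, hdeg]
    rw [← hdeg]
    exact natDegree_lt_natDegree h0 h2
  rw [hsub, RatFunc.intDegree_div
    (by simpa only [ne_eq, FaithfulSMul.algebraMap_eq_zero_iff] using h0) iq]
  simp only [RatFunc.intDegree_polynomial]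
  omega

/-- `-deg_y`, with the partial derivatives, is a `JacVal` on `F(x)(y)`. -/
theorem exists_jacVal (F : Type*) [Field F] :
    ∃ (D : JacVal F (RatFunc (RatFunc F))) (ι : F[X][X] →ₐ[F] RatFunc (RatFunc F)),
      Function.Injective ι ∧ (∀ f, f ≠ 0 → D.v (ι f) = - (f.natDegree : ℤ)) ∧
      D.J (ι (C X)) (ι X) = 1 := by
  let L := RatFunc F
  let M := RatFunc L
  obtain ⟨d0, hd0⟩ := exists_derivation_extend (K := L) (derivative' (R := F))
  obtain ⟨d1, hd1⟩ := exists_mapCoeff F d0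
  obtain ⟨d2, hd2⟩ := exists_derivation_extend (K := M) d1
  obtain ⟨e2, he2⟩ := exists_derivation_extend (K := M)
    ((derivative' (R := L)).restrictScalars F)
  have he2' : ∀ b : L[X], e2 (algebraMap L[X] M b) = algebraMap L[X] M (derivative b) := he2
  have halg : ∀ c : F, algebraMap F M c = RatFunc.C (RatFunc.C c) := fun c => by
    rw [IsScalarTower.algebraMap_apply F L M]; rfl
  let ι : F[X][X] →ₐ[F] M := ev (algebraMap L[X] M (C RatFunc.X)) (algebraMap L[X] M X)
  have hι : ∀ f : F[X][X], ι f = algebraMap L[X] M (f.map (algebraMap F[X] L)) := by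
    have : ι.toRingHom = (algebraMap L[X] M).comp (mapRingHom (algebraMap F[X] L)) := by
      apply Polynomial.ringHom_ext'
      · apply Polynomial.ringHom_ext
        · intro c
          simp only [ι, halg, AlgHom.toRingHom_eq_coe, RingHom.coe_comp, RingHom.coe_coe,
            Function.comp_apply, ev_C, aeval_C, coe_mapRingHom, map_C]
          rw [RatFunc.algebraMap_C, RatFunc.algebraMap_C]
        · simp [ι, L]
      · simp [ι]
    exact fun f => DFunLike.congr_fun this f
  have hinj : Function.Injective (fun f : F[X][X] => f.map (algebraMap F[X] L)) :=
    Polynomial.map_injective _ (IsFractionRing.injective F[X] L)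
  refine ⟨
    { v := fun a => - a.intDegree
      dx := d2
      dy := e2
      v_mul := ?_
      v_add := ?_
      v_alg := ?_
      v_dx := ?_
      v_dy := ?_
      v_res := ?_ }, ι, ?_, ?_, ?_⟩
  · intro a b ha hb
    rw [RatFunc.intDegree_mul ha hb]; ring
  · intro a b ha hb hab
    have := RatFunc.intDegree_add_le hb hab
    omega
  · intro c hc
    rw [halg, RatFunc.intDegree_C, neg_zero]
  · intro a ha
    have := intDegree_derivation_le d1 d2 hd2 0 (fun p hp => by
      have := natDegree_mapCoeff_le hd1 p; omega) a ha
    omega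
  · intro a ha
    have := intDegree_derivation_le _ e2 he2 1 (fun p hp => by
      have hp' : derivative p ≠ 0 := hp
      have h0 : p.natDegree ≠ 0 := fun h => hp' (derivative_of_natDegree_zero h)
      have := natDegree_derivative_lt h0
      change ((derivative p).natDegree : ℤ) + 1 ≤ _
      omega) a ha
    omega
  · intro a ha ha0
    have ha0 : a.intDegree = 0 := by omega
    obtain ⟨ρ, hres⟩ := exists_residue a ha ha0
    by_cases hc : ∃ c, ρ = RatFunc.C c
    · obtain ⟨c, hc⟩ := hc
      left
      exact ⟨c, by rw [halg, ← hc]; exact hres⟩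
    · right
      refine ⟨RatFunc.C ρ, hres, ?_⟩
      intro h hh
      have htr := RatFunc.transcendental_of_ne_C ρ hc
      have h1 : aeval (RatFunc.C ρ : M) h = RatFunc.C (aeval ρ h) := by
        have : (RatFunc.C ρ : M) = algebraMap L M ρ := rfl
        rw [this, aeval_algebraMap_apply]; rfl
      have h2 : aeval ρ h ≠ 0 := fun h3 => hh ((transcendental_iff.1 htr) h h3)
      rw [h1]
      refine ⟨by simpa using h2, by rw [RatFunc.intDegree_C, neg_zero]⟩
  · intro f g hfg
    rw [hι, hι] at hfg
    exact hinj (IsFractionRing.injective L[X] M hfg)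
  · intro f hf
    change - (ι f).intDegree = _
    rw [hι, RatFunc.intDegree_polynomial, natDegree_map_eq_of_injective]
    exact IsFractionRing.injective F[X] L
  · have e1 : ι (C X) = algebraMap L[X] M (C RatFunc.X) := by simp [ι]
    have e2' : ι X = algebraMap L[X] M X := by simp [ι]
    have e3 : d1 (C RatFunc.X) = 1 := by
      ext n
      rw [hd1, coeff_C, coeff_one]
      split_ifs
      · have : (RatFunc.X : L) = algebraMap F[X] L X := by simp [L]
        rw [this, hd0]
        simp [derivative', L]
      · simp
    simp only [JacVal.J, e1, e2', hd2, he2', e3]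
    simp

/-! ### Automorphisms of the polynomial ring in two variables over a field -/

theorem exists_support {S : Type*} [CommRing S] (a : S[X][X]) :
    ∃ T : Finset (ℕ × ℕ), (∀ t, t ∈ T ↔ (a.coeff t.2).coeff t.1 ≠ 0) ∧
      a = ∑ t ∈ T, C (monomial t.1 ((a.coeff t.2).coeff t.1)) * X ^ t.2 := by
  classical
  let T : Finset (ℕ × ℕ) := a.support.biUnion fun j => (a.coeff j).support.image fun i => (i, j)
  have hT : ∀ t, t ∈ T ↔ (a.coeff t.2).coeff t.1 ≠ 0 := by
    rintro ⟨i, j⟩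
    simp only [T, Finset.mem_biUnion, Finset.mem_image, mem_support_iff, Prod.mk.injEq]
    constructor
    · rintro ⟨j', _, i', h, rfl, rfl⟩; exact h
    · intro h
      exact ⟨j, fun h0 => h (by simp [h0]), i, h, rfl, rfl⟩
  refine ⟨T, hT, ?_⟩
  ext j i
  simp only [finsetSum_coeff, coeff_C_mul, coeff_X_pow, mul_ite, mul_one, mul_zero]
  rw [Finset.sum_eq_single (i, j)]
  · simp
  · rintro ⟨i', j'⟩ _ hne
    by_cases h : j = j'
    · subst h
      simp only [if_true, coeff_monomial]
      rw [if_neg]; rintro rfl; exact hne rfl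
    · simp [h]
  · intro h
    rw [hT] at h
    simp only [not_not] at h
    simp [h]

/-- The Jacobian of a pair of generators is a unit of `F[x, y]`, so it has value `0`. -/
theorem v_J_eq_zero {F M : Type*} [Field F] [Field M] [Algebra F M] (D : JacVal F M)
    (ι : F[X][X] →ₐ[F] M) (hv : ∀ f, f ≠ 0 → D.v (ι f) = - (f.natDegree : ℤ))
    (hJ : D.J (ι (C X)) (ι X) = 1) {f g : F[X][X]} (h : Algebra.adjoin F {f, g} = ⊤) :
    D.J (ι f) (ι g) ≠ 0 ∧ D.v (D.J (ι f) (ι g)) = 0 := by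
  -- if the Jacobian of one generating pair is a multiple of `e`, so are all Jacobians
  have key : ∀ (e : M) (f g : F[X][X]), Algebra.adjoin F {f, g} = ⊤ →
      (∃ u, D.J (ι f) (ι g) = ι u * e) → ∀ a b, ∃ u, D.J (ι a) (ι b) = ι u * e := by
    rintro e f g hfg ⟨u0, hu0⟩
    have step : ∀ c : F[X][X], (∃ u, D.J (ι c) (ι f) = ι u * e) →
        (∃ u, D.J (ι c) (ι g) = ι u * e) → ∀ b, ∃ u, D.J (ι c) (ι b) = ι u * e := by
      intro c h1 h2 b
      have hb : b ∈ Algebra.adjoin F {f, g} := hfg ▸ Algebra.mem_top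
      induction hb using Algebra.adjoin_induction with
      | mem x hx => rcases hx with rfl | rfl; exacts [h1, h2]
      | algebraMap r => exact ⟨0, by rw [AlgHom.commutes]; simp [JacVal.J]⟩
      | add x y _ _ hx hy =>
        obtain ⟨u, hu⟩ := hx
        obtain ⟨w, hw⟩ := hy
        refine ⟨u + w, ?_⟩
        rw [map_add ι u w, add_mul, ← hu, ← hw]; simp only [JacVal.J, map_add]; ring
      | mul x y _ _ hx hy =>
        obtain ⟨u, hu⟩ := hx
        obtain ⟨w, hw⟩ := hy
        refine ⟨y * u + x * w, ?_⟩
        rw [map_add, map_mul ι y u, map_mul ι x w, add_mul, mul_assoc, ← hu, mul_assoc, ← hw]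
        simp only [JacVal.J, map_mul, Derivation.leibniz, smul_eq_mul]; ring
    have sw : ∀ a b, (∃ u, D.J (ι a) (ι b) = ι u * e) → ∃ u, D.J (ι b) (ι a) = ι u * e := by
      rintro a b ⟨u, hu⟩
      exact ⟨-u, by rw [JacVal.J_swap, hu]; simp⟩
    have self : ∀ a, ∃ u, D.J (ι a) (ι a) = ι u * e := fun a =>
      ⟨0, by simp only [JacVal.J, map_zero, zero_mul]; ring⟩
    have hf := step f (self f) ⟨u0, hu0⟩
    have hg := step g (sw _ _ ⟨u0, hu0⟩) (self g)
    exact fun a => step a (sw _ _ (hf a)) (sw _ _ (hg a))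
  have hxy : Algebra.adjoin F {(C X : F[X][X]), X} = ⊤ := by
    rw [eq_top_iff]; intro H _
    rw [mem_adjoin_pair]; exact ⟨H, ev_self H⟩
  obtain ⟨u, hu⟩ := key 1 (C X) X hxy ⟨1, by rw [hJ]; simp⟩ f g
  obtain ⟨w, hw⟩ := key (D.J (ι f) (ι g)) f g h ⟨1, by simp⟩ (C X) X
  rw [hJ] at hw
  have h0 : D.J (ι f) (ι g) ≠ 0 := by
    intro h0; rw [h0] at hw; simp at hw
  refine ⟨h0, ?_⟩
  have hu0 : u ≠ 0 := by rintro rfl; apply h0; rw [hu]; simp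
  have hw0 : w ≠ 0 := by rintro rfl; simp at hw
  have h1 := D.v_mul (ι w) _ (by rintro h; rw [h] at hw; simp at hw) h0
  rw [← hw, JacVal.v_one, hv w hw0] at h1
  have h2 : D.v (D.J (ι f) (ι g)) = - (u.natDegree : ℤ) := by
    rw [hu, mul_one, hv u hu0]
  omega

theorem exists_bezout {p q : ℕ} (hp : 0 < p) (hq : 0 < q) (h : p.Coprime q) :
    ∃ r s : ℕ, r * p = s * q + 1 := by
  rcases eq_or_lt_of_le (Nat.succ_le_of_lt hq) with rfl | hq1
  · exact ⟨1, p - 1, by omega⟩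
  · obtain ⟨m, -, hm⟩ := Nat.exists_mul_mod_eq_one_of_coprime h hq1
    refine ⟨m, p * m / q, ?_⟩
    have := Nat.div_add_mod (p * m) q
    rw [hm] at this
    rw [mul_comm m p, mul_comm _ q]; exact this.symm

/-- The inequality used for a pair of generators of outer degrees `d * p` and `d * q`: it forces
one of the two degrees to divide the other. -/
theorem numeric {d p q N D : ℕ} (hd : 0 < d) (hp : 0 < p) (hq : 0 < q) (hpq : p.Coprime q)
    (hN : 0 < N) (hD : D * (p * q) ≤ N)
    (h : (N : ℤ) * d ≤ D * ((d + d * p + d * q : ℤ) - 2)) : p = 1 ∨ q = 1 := by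
  have hD0 : 0 < D := by
    rcases Nat.eq_zero_or_pos D with rfl | h0
    · have : (0 : ℤ) < N * d := by positivity
      simp at h; omega
    · exact h0
  have h1 : (D : ℤ) * (p * q * d) ≤ D * ((d + d * p + d * q : ℤ) - 2) := by
    refine le_trans ?_ h
    have : (D * (p * q) : ℤ) ≤ N := by exact_mod_cast hD
    nlinarith
  have h2 : (p * q * d : ℤ) ≤ (d + d * p + d * q : ℤ) - 2 :=
    le_of_mul_le_mul_left h1 (by exact_mod_cast hD0)
  have h3 : (p * q : ℤ) < 1 + p + q := by
    have : (d : ℤ) * (p * q) < d * (1 + p + q) := by linarith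
    exact lt_of_mul_lt_mul_left this (by positivity)
  by_contra hcon
  push Not at hcon
  have hp2 : 2 ≤ p := by omega
  have hq2 : 2 ≤ q := by omega
  have h4 : ((p : ℤ) - 2 + 1) * ((q : ℤ) - 2 + 1) < 2 := by linarith
  have h5 : p = 2 ∧ q = 2 := by
    have ha : (0 : ℤ) ≤ (p : ℤ) - 2 := by omega
    have hb : (0 : ℤ) ≤ (q : ℤ) - 2 := by omega
    have hab : (0 : ℤ) ≤ ((p : ℤ) - 2) * ((q : ℤ) - 2) := mul_nonneg ha hb
    constructor <;> nlinarith
  obtain ⟨rfl, rfl⟩ := h5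
  exact absurd hpq (by decide)

theorem map_eval_zero_comp {F : Type*} [Field F] (H : F[X][X]) (c : F) :
    (H.comp (X + C (C c))).map (evalRingHom 0) = (H.map (evalRingHom 0)).comp (X + C c) := by
  rw [Polynomial.map_comp]; simp

theorem J_log {F M : Type*} [Field F] [Field M] [Algebra F M] (D : JacVal F M) {a b : M}
    (ha : a ≠ 0) (hb : b ≠ 0) {p q r s : ℕ} (h : r * p = s * q + 1) :
    D.J (b ^ s / a ^ r) (a ^ q / b ^ p) = b ^ s / a ^ r * (a ^ q / b ^ p) * D.J a b / (a * b) := by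
  have hpow : ∀ (δ : Derivation F M M) (x : M) (n : ℕ), x ≠ 0 → δ (x ^ n) = n * x ^ n * δ x / x := by
    intro δ x n hx
    rw [Derivation.leibniz_pow]
    rcases n with _ | n
    · simp
    · simp only [Nat.add_sub_cancel, nsmul_eq_mul, smul_eq_mul]
      rw [pow_succ]; field_simp
  have hc : (r : M) * p = s * q + 1 := by exact_mod_cast congrArg (Nat.cast : ℕ → M) h
  have ha' := pow_ne_zero r ha
  have hb' := pow_ne_zero p hb
  simp only [JacVal.J, Derivation.leibniz_div, hpow _ _ _ ha, hpow _ _ _ hb, smul_eq_mul]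
  field_simp
  linear_combination a * b * (D.dx a * D.dy b - D.dx b * D.dy a) * hc

/-- The polynomial `H(z, w)` obtained from `a` by the weighted blow-up substitution. -/
theorem exists_weighted {F : Type*} [Field F] (a : F[X][X]) {p q r s : ℕ} (hp : 0 < p)
    (hq : 0 < q) (h : r * p = s * q + 1) (ha : ∀ c : F, a ≠ C (C c)) :
    ∃ (N L : ℕ) (H : F[X][X]) (Q : F[X]) (e D : ℕ), 0 < N ∧ D * (p * q) ≤ N ∧
      H.map (evalRingHom 0) = X ^ e * Q ∧ Q ≠ 0 ∧ Q.natDegree ≤ D ∧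
      ∀ (M : Type _) [Field M] [Algebra F M] (z w φ γ : M), φ * (z ^ p * w ^ s) = 1 →
        γ * (z ^ q * w ^ r) = 1 → ev z w H = z ^ N * w ^ L * ev φ γ a := by
  classical
  obtain ⟨T, hT, haT⟩ := exists_support a
  have hTne : T.Nonempty := by
    rw [Finset.nonempty_iff_ne_empty]
    rintro rfl
    exact ha 0 (by rw [haT]; simp)
  obtain ⟨t0, ht0, hmax⟩ := T.exists_max_image (fun t => p * t.1 + q * t.2) hTne
  set N := p * t0.1 + q * t0.2 with hN
  have hN0 : 0 < N := by
    by_contra h0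
    have hall : ∀ t ∈ T, t = (0, 0) := by
      rintro ⟨i, j⟩ ht
      have h1 := hmax _ ht
      simp only at h1
      have h2 : p * i = 0 := by omega
      have h3 : q * j = 0 := by omega
      simp only [Nat.mul_eq_zero] at h2 h3
      simp only [Prod.mk.injEq]
      omega
    have hT1 : T = {(0, 0)} := Finset.eq_singleton_iff_nonempty_unique_mem.2 ⟨hTne, hall⟩
    rw [hT1] at haT
    exact ha ((a.coeff 0).coeff 0) (by rw [haT]; simp)
  set κ : ℕ × ℕ → ℕ := fun t => s * t.1 + r * t.2 with hκ
  set L := T.sup κ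
  have hL : ∀ t ∈ T, κ t ≤ L := fun t ht => Finset.le_sup ht
  set co : ℕ × ℕ → F := fun t => (a.coeff t.2).coeff t.1 with hco
  set H : F[X][X] := ∑ t ∈ T, C (monomial (N - (p * t.1 + q * t.2)) (co t)) * X ^ (L - κ t) with hH
  set E := T.filter fun t => p * t.1 + q * t.2 = N with hE
  have hEne : E.Nonempty := ⟨t0, by simp [hE, ht0, hN]⟩
  obtain ⟨t1, ht1, hmin⟩ := E.exists_min_image κ hEne
  obtain ⟨t2, ht2, hmax2⟩ := E.exists_max_image κ hEne
  have hEw : ∀ t ∈ E, p * t.1 + q * t.2 = N := fun t ht => (Finset.mem_filter.1 ht).2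
  have hET : ∀ t ∈ E, t ∈ T := fun t ht => (Finset.mem_filter.1 ht).1
  set D := κ t2 - κ t1 with hD
  have h12 : κ t1 ≤ κ t2 := hmin _ ht2
  have hbez : (r : ℤ) * p = s * q + 1 := by exact_mod_cast h
  -- the solutions on the top edge are determined by `κ`
  have hsol : ∀ t ∈ E, ∀ t' ∈ E, (t.1 : ℤ) - t'.1 = q * ((κ t' : ℤ) - κ t) ∧
      (t'.2 : ℤ) - t.2 = p * ((κ t' : ℤ) - κ t) := by
    intro t ht t' ht'
    have e1 : (p : ℤ) * t.1 + q * t.2 = p * t'.1 + q * t'.2 := by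
      exact_mod_cast (hEw t ht).trans (hEw t' ht').symm
    simp only [hκ]
    push_cast
    constructor
    · linear_combination (r : ℤ) * e1 - ((t.1 : ℤ) - t'.1) * hbez
    · linear_combination (s : ℤ) * e1 - ((t'.2 : ℤ) - t.2) * hbez
  have hinj : ∀ t ∈ E, κ t = κ t1 → t = t1 := by
    intro t ht hk
    obtain ⟨e1, e2⟩ := hsol t ht t1 ht1
    rw [hk] at e1 e2
    simp only [sub_self, mul_zero] at e1 e2
    exact Prod.ext (by omega) (by omega)
  set Q : F[X] := ∑ t ∈ E, monomial (κ t2 - κ t) (co t) with hQ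
  refine ⟨N, L, H, Q, L - κ t2, D, hN0, ?_, ?_, ?_, ?_, ?_⟩
  · obtain ⟨e1, -⟩ := hsol t1 ht1 t2 ht2
    have e3 : ((κ t2 : ℤ) - κ t1) = (D : ℤ) := by omega
    rw [e3] at e1
    have e4 : q * D ≤ t1.1 := by
      have : (q * D : ℤ) ≤ t1.1 := by omega
      exact_mod_cast this
    have e5 := hEw t1 ht1
    calc D * (p * q) = p * (q * D) := by ring
      _ ≤ p * t1.1 := Nat.mul_le_mul_left _ e4
      _ ≤ N := by omega
  · rw [hH, Polynomial.map_sum, hQ, Finset.mul_sum, hE, Finset.sum_filter]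
    apply Finset.sum_congr rfl
    intro t ht
    split_ifs with hw
    · have h1 : κ t ≤ κ t2 := hmax2 t (by simp [hE, ht, hw])
      have h2 := hL t2 (hET t2 ht2)
      rw [hw]
      simp only [Nat.sub_self, monomial_zero_left, Polynomial.map_mul, map_C, coe_evalRingHom,
        eval_C, Polynomial.map_pow, map_X]
      rw [X_pow_mul_monomial, C_mul_X_pow_eq_monomial]
      congr 2
      omega
    · have h1 := hmax t ht
      have h2 : N - (p * t.1 + q * t.2) ≠ 0 := by omega
      simp [eval_monomial, zero_pow h2]
  · intro h0
    have h1 : Q.coeff D = co t1 := by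
      rw [hQ, finsetSum_coeff, Finset.sum_eq_single t1]
      · simp [hD]
      · intro t ht hne
        rw [coeff_monomial, if_neg]
        intro h3
        have h4 := hmin t ht
        have h5 := hmax2 t ht
        exact hne (hinj t ht (by omega))
      · intro h; exact absurd ht1 h
    rw [h0, coeff_zero] at h1
    exact (hT t1).1 (hET t1 ht1) h1.symm
  · rw [hQ]
    apply natDegree_sum_le_of_forall_le
    intro t ht
    refine (natDegree_monomial_le _).trans ?_
    have := hmin t ht
    omega
  · intro M _ _ z w φ γ h1 h2
    conv_rhs => rw [haT]
    rw [hH, map_sum, map_sum, Finset.mul_sum]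
    apply Finset.sum_congr rfl
    intro t ht
    have e1 := hmax t ht
    have e2 := hL t ht
    simp only [map_mul, ev_C, aeval_monomial, map_pow, ev_X]
    obtain ⟨n, hn⟩ := Nat.exists_eq_add_of_le e1
    obtain ⟨l, hl⟩ := Nat.exists_eq_add_of_le e2
    have e3 : φ ^ t.1 * γ ^ t.2 * (z ^ (p * t.1 + q * t.2) * w ^ (κ t)) = 1 := by
      calc _ = (φ * (z ^ p * w ^ s)) ^ t.1 * (γ * (z ^ q * w ^ r)) ^ t.2 := by
            simp only [hκ]; ring
        _ = 1 := by rw [h1, h2]; simp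
    have e4 : N - (p * t.1 + q * t.2) = n := by omega
    have e5 : L - κ t = l := by omega
    rw [e4, e5]
    have e6 : N = p * t.1 + q * t.2 + n := by omega
    rw [e6, hl, pow_add z, pow_add w]
    linear_combination (-(algebraMap F M) (co t) * z ^ n * w ^ l) * e3

/-- **Degree reduction for generators of `F[x, y]`**: one of the outer degrees divides the other,
and the larger one can be lowered by subtracting a multiple of a power of the other generator. -/
theorem vdk_step {F : Type*} [Field F] {f g : F[X][X]} (h : Algebra.adjoin F {f, g} = ⊤)
    (hf : 0 < f.natDegree) (hg : 0 < g.natDegree) :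
    ∃ (n : ℕ) (c : F), 0 < n ∧ c ≠ 0 ∧
      ((g.natDegree = n * f.natDegree ∧ (g - c • f ^ n).natDegree < g.natDegree) ∨
       (f.natDegree = n * g.natDegree ∧ (f - c • g ^ n).natDegree < f.natDegree)) := by
  obtain ⟨D, ι, hι, hv, hJ⟩ := exists_jacVal F
  obtain ⟨hJ0, hvJ⟩ := v_J_eq_zero D ι hv hJ h
  have hf0 : f ≠ 0 := by rintro rfl; simp at hf
  have hg0 : g ≠ 0 := by rintro rfl; simp at hg
  have hιne : ∀ f, f ≠ 0 → ι f ≠ 0 := fun f hf h => hf (hι (by simpa using h))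
  obtain ⟨d, p, q, hd, hpq, hpd, hqd⟩ := Nat.exists_coprime' (m := f.natDegree)
    (n := g.natDegree) (Nat.gcd_pos_of_pos_left _ hf)
  have hp : 0 < p := by rcases Nat.eq_zero_or_pos p with rfl | h <;> simp_all
  have hq : 0 < q := by rcases Nat.eq_zero_or_pos q with rfl | h <;> simp_all
  obtain ⟨r, s, hrs⟩ := exists_bezout hp hq hpq
  set φ := ι f with hφ
  set γ := ι g with hγ
  have hφ0 : φ ≠ 0 := hιne f hf0
  have hγ0 : γ ≠ 0 := hιne g hg0
  have hvφ : D.v φ = - (p * d : ℤ) := by rw [hφ, hv f hf0, hpd]; push_cast; ring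
  have hvγ : D.v γ = - (q * d : ℤ) := by rw [hγ, hv g hg0, hqd]; push_cast; ring
  have hbez : (r : ℤ) * p = s * q + 1 := by exact_mod_cast hrs
  -- a monomial change of variables making `z` of value `d = gcd` and `w` of value `0`; it is
  -- inverted by `e1` and `e2` below
  set z := γ ^ s / φ ^ r with hz
  set w := φ ^ q / γ ^ p with hw
  have hz0 : z ≠ 0 := div_ne_zero (pow_ne_zero _ hγ0) (pow_ne_zero _ hφ0)
  have hw0 : w ≠ 0 := div_ne_zero (pow_ne_zero _ hφ0) (pow_ne_zero _ hγ0)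
  have hvz : D.v z = d := by
    rw [hz, JacVal.v_div (pow_ne_zero _ hγ0) (pow_ne_zero _ hφ0), JacVal.v_pow hγ0,
      JacVal.v_pow hφ0, hvφ, hvγ]
    linear_combination (d : ℤ) * hbez
  have hvw : D.v w = 0 := by
    rw [hw, JacVal.v_div (pow_ne_zero _ hφ0) (pow_ne_zero _ hγ0), JacVal.v_pow hγ0,
      JacVal.v_pow hφ0, hvφ, hvγ]
    ring
  have hJzw : D.J z w = z * w * D.J φ γ / (φ * γ) := J_log D hφ0 hγ0 hrs
  have hJzw0 : D.J z w ≠ 0 := by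
    rw [hJzw]; exact div_ne_zero (mul_ne_zero (mul_ne_zero hz0 hw0) hJ0) (mul_ne_zero hφ0 hγ0)
  have hvJzw : D.v (D.J z w) = d + d * p + d * q := by
    rw [hJzw, JacVal.v_div (mul_ne_zero (mul_ne_zero hz0 hw0) hJ0) (mul_ne_zero hφ0 hγ0),
      D.v_mul _ _ (mul_ne_zero hz0 hw0) hJ0, D.v_mul _ _ hz0 hw0, D.v_mul _ _ hφ0 hγ0, hvz, hvw,
      hvJ, hvφ, hvγ]
    ring
  have e1 : φ * (z ^ p * w ^ s) = 1 := by
    rw [hz, hw, div_pow, div_pow, ← pow_mul, ← pow_mul, ← pow_mul, ← pow_mul, hrs, pow_succ,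
      mul_comm p s, mul_comm q s]
    field_simp
  have e2 : γ * (z ^ q * w ^ r) = 1 := by
    rw [hz, hw, div_pow, div_pow, ← pow_mul, ← pow_mul, ← pow_mul, ← pow_mul, mul_comm p r, hrs,
      pow_succ, mul_comm q r]
    field_simp
  -- expressing `x`, which has value `0`, through `f` and `g` forces a large cancellation, that is, a
  -- large value of `H(z, w)`; the blow-up estimate bounds that value in terms of the Jacobian
  obtain ⟨a, hax⟩ : ∃ a : F[X][X], ev f g a = C X := by
    rw [← mem_adjoin_pair, h]; exact Algebra.mem_top
  have hanc : ∀ c : F, a ≠ C (C c) := by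
    rintro c rfl
    have h1 : (C (C c) : F[X][X]) = C X := by simpa using hax
    have h2 := congrArg natDegree (C_injective h1)
    simp at h2
  obtain ⟨N, L, H, Q, e, K, hN, hK, hHQ, hQ0, hQd, hev⟩ := exists_weighted a hp hq hrs hanc
  have hHev : ev z w H = z ^ N * w ^ L * ι (C X) := by
    rw [hev _ z w φ γ e1 e2, hφ, hγ, ← map_ev, hax]
  have hX0 : ι (C X) ≠ 0 := hιne _ (by simp)
  have hvH : D.v (ev z w H) = N * d := by
    rw [hHev, D.v_mul _ _ (mul_ne_zero (pow_ne_zero _ hz0) (pow_ne_zero _ hw0)) hX0,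
      D.v_mul _ _ (pow_ne_zero _ hz0) (pow_ne_zero _ hw0), JacVal.v_pow hz0, JacVal.v_pow hw0,
      hvz, hvw, hv _ (by simp)]
    simp
  have hHmap : H.map (evalRingHom 0) ≠ 0 := by
    rw [hHQ]; exact mul_ne_zero (pow_ne_zero _ X_ne_zero) hQ0
  -- the residue of `w` is a constant, for otherwise `H(z, w)` would be a unit
  rcases JacVal.res hw0 hvw with ⟨c, hc⟩ | ht
  swap
  · have := JacVal.v_ev_of_transcendental (D := D) (z := z) (w := w) (Or.inr (by omega))
      (Or.inr (by omega)) ht H hHmap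
    rw [hvH] at this
    have h1 : (0 : ℤ) < N * d := by positivity
    omega
  set u := w - algebraMap F _ c with hu
  have hJu : D.J z u = D.J z w := JacVal.J_sub_alg _ _ _
  have hu0 : u ≠ 0 := by
    intro h0
    rw [h0] at hJu
    apply hJzw0; rw [← hJu]; simp [JacVal.J]
  have hvu := hc.resolve_left hu0
  have hc0 : c ≠ 0 := by
    rintro rfl
    simp [hu, hvw] at hvu
  set H2 : F[X][X] := H.comp (X + C (C c)) with hH2
  have hev2 : ev z u H2 = ev z w H := by
    rw [hH2, ev_comp_outer]; simp [hu]
  have hcoef : ∃ j ≤ K, (H2.coeff j).coeff 0 ≠ 0 := by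
    set P := X ^ e * Q with hP
    have hP0 : P ≠ 0 := mul_ne_zero (pow_ne_zero _ X_ne_zero) hQ0
    have hPc0 : P.comp (X + C c) ≠ 0 := by
      intro h0
      have := congrArg (fun R => R.comp (X - C c)) h0
      simp only [comp_assoc, zero_comp] at this
      simp at this
      exact hP0 this
    have hroot : rootMultiplicity c P ≤ K := by
      rw [hP, rootMultiplicity_mul hP0]
      have h1 : rootMultiplicity c (X ^ e : F[X]) = 0 := by
        apply rootMultiplicity_eq_zero
        simp [hc0]
      rw [h1, zero_add]
      refine le_trans ?_ hQd
      have h5 := natDegree_le_of_dvd (pow_rootMultiplicity_dvd Q c) hQ0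
      simpa using h5
    refine ⟨rootMultiplicity c P, hroot, ?_⟩
    have h2 : H2.map (evalRingHom 0) = P.comp (X + C c) := by
      rw [hH2, map_eval_zero_comp, hHQ]
    have h3 : (H2.coeff (rootMultiplicity c P)).coeff 0
        = (P.comp (X + C c)).coeff (rootMultiplicity c P) := by
      rw [← h2, coeff_map, coe_evalRingHom, coeff_zero_eq_eval_zero]
    rw [h3, rootMultiplicity_eq_natTrailingDegree]
    simpa using hPc0
  obtain ⟨j, hj, hcj⟩ := hcoef
  have hest := JacVal.v_ev_le (D := D) (D.v (D.J z u)).toNat z u K 0 j H2 hz0 hu0 (by omega) hvu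
    (by rwa [hJu]) (Int.self_le_toNat _) hcj (by omega)
  rw [hev2, hvH, hJu, hvJzw] at hest
  have hfin := numeric hd hp hq hpq hN hK hest.2
  have halg : ∀ x : F[X][X], ι (c • x) = algebraMap F _ c * ι x := fun x => by
    rw [map_smul, Algebra.smul_def]
  rcases hfin with rfl | rfl
  · refine ⟨q, c⁻¹, hq, inv_ne_zero hc0, Or.inl ⟨by rw [hqd, hpd, one_mul], ?_⟩⟩
    have h1 : u = ι (f ^ q - c • g) / γ := by
      rw [hu, hw, map_sub, halg, map_pow, pow_one]; field_simp; rw [hφ, hγ]; ring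
    have h2 : f ^ q - c • g ≠ 0 := by
      intro h0; apply hu0; rw [h1, h0]; simp
    rw [h1, JacVal.v_div (hιne _ h2) hγ0, hv _ h2, hγ, hv _ hg0] at hvu
    have h3 : g - c⁻¹ • f ^ q = (-c⁻¹) • (f ^ q - c • g) := by
      rw [smul_sub, smul_smul]
      simp only [neg_mul, inv_mul_cancel₀ hc0, neg_smul, one_smul]
      abel
    have h4 := natDegree_smul_le (-c⁻¹) (f ^ q - c • g)
    rw [h3]; omega
  · refine ⟨p, c, hp, hc0, Or.inr ⟨by rw [hqd, hpd, one_mul], ?_⟩⟩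
    have h1 : u = ι (f - c • g ^ p) / γ ^ p := by
      rw [hu, hw, map_sub, halg, map_pow, pow_one]
      have := pow_ne_zero p hγ0
      field_simp
      rw [hφ, hγ]
      ring
    have h2 : f - c • g ^ p ≠ 0 := by
      intro h0; apply hu0; rw [h1, h0]; simp
    rw [h1, JacVal.v_div (hιne _ h2) (pow_ne_zero _ hγ0), hv _ h2, JacVal.v_pow hγ0, hvγ] at hvu
    have : (f.natDegree : ℤ) = p * d := by rw [hpd]; push_cast; ring
    have : (p : ℤ) * -((1 : ℕ) * d : ℤ) = - (p * d) := by push_cast; ring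
    omega

theorem ev_C_left {F : Type*} [Field F] (f : F[X]) (g H : F[X][X]) :
    ev (C f) g H = (H.map (compRingHom f)).comp g := by
  induction H using Polynomial.induction_on' with
  | add p q hp hq => simp [hp, hq]
  | monomial n a =>
    rw [← C_mul_X_pow_eq_monomial]
    simp only [map_mul, ev_C, map_pow, ev_X, Polynomial.map_mul, map_C, coe_compRingHom_apply,
      Polynomial.map_pow, map_X, mul_comp, C_comp, X_pow_comp]
    congr 1
    induction a using Polynomial.induction_on' with
    | add p q hp hq => simp [hp, hq]
    | monomial n a => simp [aeval_monomial]

/-- Generators the first of which does not involve the outer variable are triangular. -/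
theorem triangular {F : Type*} [Field F] {f g : F[X][X]} (h : Algebra.adjoin F {f, g} = ⊤)
    (hf : f.natDegree = 0) :
    ∃ (α β γ : F) (h : F[X]), α ≠ 0 ∧ γ ≠ 0 ∧ f = C (C α * X + C β) ∧ g = C (C γ) * X + C h := by
  obtain ⟨f, rfl⟩ := natDegree_eq_zero.1 hf
  obtain ⟨a, ha⟩ : ∃ a : F[X][X], ev (C f) g a = C X := by
    rw [← mem_adjoin_pair, h]; exact Algebra.mem_top
  obtain ⟨b, hb⟩ : ∃ b : F[X][X], ev (C f) g b = X := by
    rw [← mem_adjoin_pair, h]; exact Algebra.mem_top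
  rw [ev_C_left] at ha hb
  have hb1 := congrArg natDegree hb
  rw [natDegree_comp, natDegree_X] at hb1
  have hb2 := mul_eq_one.1 hb1
  have ha1 := congrArg natDegree ha
  rw [natDegree_comp, natDegree_C, hb2.2, mul_one] at ha1
  have hf1 : f.natDegree = 1 := by
    obtain ⟨a0, ha0⟩ := natDegree_eq_zero.1 ha1
    rw [← ha0, C_comp] at ha
    have h1 := C_injective ha
    have h2 : a0 = (a.coeff 0).comp f := by
      have := congrArg (fun r => r.coeff 0) ha0
      simpa using this
    rw [h2] at h1
    have h3 := congrArg natDegree h1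
    rw [natDegree_comp, natDegree_X] at h3
    exact (mul_eq_one.1 h3).2
  obtain ⟨α, hα, β, hαβ⟩ := natDegree_eq_one.1 hf1
  obtain ⟨g1, hg1, g0, hg⟩ := natDegree_eq_one.1 hb2.2
  have hu : IsUnit g1 := by
    have h1 := congrArg leadingCoeff hb
    rw [leadingCoeff_comp (by omega), hb2.1, pow_one, leadingCoeff_X] at h1
    have h2 : g.leadingCoeff = g1 := by
      rw [← hg, leadingCoeff_linear hg1]
    rw [h2] at h1
    exact IsUnit.of_mul_eq_one _ (by rw [mul_comm]; exact h1)
  obtain ⟨γ, hγ, hγ1⟩ := Polynomial.isUnit_iff.1 hu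
  exact ⟨α, β, γ, g0, hα, hγ.ne_zero, by rw [hαβ], by rw [hγ1, hg]⟩

theorem aeval_mem_subalgebra {S B : Type*} [CommRing S] [CommRing B] [Algebra S B] {f : B}
    {L : Subalgebra S B} (hf : f ∈ L) (p : S[X]) : aeval f p ∈ L := by
  have := (aeval (⟨f, hf⟩ : L) p).2
  rwa [← Subalgebra.coe_val, ← aeval_algHom_apply] at this

theorem adjoin_shear {S B : Type*} [CommRing S] [CommRing B] [Algebra S B] (f g : B) (p : S[X]) :
    Algebra.adjoin S {f, g + aeval f p} = Algebra.adjoin S {f, g} := by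
  have key : ∀ g (p : S[X]), Algebra.adjoin S {f, g + aeval f p} ≤ Algebra.adjoin S {f, g} := by
    intro g p
    rw [Algebra.adjoin_le_iff]
    have hf : f ∈ Algebra.adjoin S {f, g} := Algebra.subset_adjoin (by simp)
    have hg : g ∈ Algebra.adjoin S {f, g} := Algebra.subset_adjoin (by simp)
    rintro _ (rfl | rfl)
    · exact hf
    · exact add_mem hg (aeval_mem_subalgebra hf p)
  refine le_antisymm (key g p) ?_
  have := key (g + aeval f p) (-p)
  simpa using this

theorem adjoin_sub_smul_pow {S B : Type*} [CommRing S] [CommRing B] [Algebra S B] (f g : B)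
    (c : S) (n : ℕ) :
    Algebra.adjoin S {f, g - c • f ^ n} = Algebra.adjoin S {f, g} := by
  have := adjoin_shear (S := S) f g (-(C c * X ^ n))
  rw [← this]
  congr 2
  simp [sub_eq_add_neg, Algebra.smul_def]

/-- **Tameness of automorphisms of `F[x, y]`**, as an induction principle. -/
theorem coord_induction {F : Type*} [Field F] (P : F[X][X] → F[X][X] → Prop)
    (base : P (C X) X) (swap : ∀ f g, P f g → P g f)
    (shear : ∀ f g (p : F[X]), P f g → P f (g + aeval f p))
    (scale : ∀ f g (c : F), c ≠ 0 → P f g → P f (c • g))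
    {f g : F[X][X]} (h : Algebra.adjoin F {f, g} = ⊤) : P f g := by
  have hbase : ∀ f g : F[X][X], Algebra.adjoin F {f, g} = ⊤ → f.natDegree = 0 → P f g := by
    intro f g h hf
    obtain ⟨α, β, γ, p, hα, hγ, rfl, rfl⟩ := triangular h hf
    have h1 : P (C (C α * X + C β)) X := by
      have := swap _ _ (shear _ _ (C β) (scale _ _ α hα (swap _ _ base)))
      convert this using 1
      simp [Algebra.smul_def]
    have h2 := shear _ _ (p.comp (C α⁻¹ * (X - C β))) (scale _ _ γ hγ h1)
    convert h2 using 1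
    have h3 : ∀ p q : F[X], aeval (C p : F[X][X]) q = C (q.comp p) := by
      intro p q
      have := ev_C_left p 0 (C q)
      simpa using this
    rw [h3, comp_assoc]
    have h4 : (C α⁻¹ * (X - C β)).comp (C α * X + C β) = (X : F[X]) := by
      simp [← mul_assoc, ← C_mul, hα]
    rw [h4, comp_X]
    congr 1
    rw [Algebra.smul_def]; rfl
  induction hn : f.natDegree + g.natDegree using Nat.strong_induction_on generalizing f g with
  | _ n ih =>
    rcases Nat.eq_zero_or_pos f.natDegree with hf | hf
    · exact hbase _ _ h hf
    rcases Nat.eq_zero_or_pos g.natDegree with hg | hg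
    · exact swap _ _ (hbase _ _ (by rw [Set.pair_comm]; exact h) hg)
    obtain ⟨m, c, hm, hc, ⟨-, hlt⟩ | ⟨-, hlt⟩⟩ := vdk_step h hf hg
    · have := shear _ _ (C c * X ^ m) (ih _ (by omega)
        (by rw [adjoin_sub_smul_pow]; exact h : Algebra.adjoin F {f, g - c • f ^ m} = ⊤) rfl)
      simpa [Algebra.smul_def] using this
    · rw [Set.pair_comm] at h
      have := swap _ _ (shear _ _ (C c * X ^ m) (ih _ (by omega)
        (by rw [adjoin_sub_smul_pow]; exact h : Algebra.adjoin F {g, f - c • g ^ m} = ⊤) rfl))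
      simpa [Algebra.smul_def] using this

theorem leadingCoeff_of_sub {F : Type*} [Field F] {f g : F[X][X]} {n : ℕ} {c : F}
    (hlt : (g - c • f ^ n).natDegree < g.natDegree) (hd : g.natDegree = n * f.natDegree) :
    g.leadingCoeff = C c * f.leadingCoeff ^ n := by
  have h1 : (g - c • f ^ n).coeff g.natDegree = 0 := coeff_eq_zero_of_natDegree_lt hlt
  rw [coeff_sub, coeff_smul, sub_eq_zero] at h1
  have h2 : (f ^ n).coeff g.natDegree = f.leadingCoeff ^ n := by
    rw [hd, coeff_pow_mul_natDegree]
  rw [leadingCoeff, h1, h2, smul_eq_C_mul]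

/-- The leading coefficient of a coordinate with respect to the outer variable is a constant. -/
theorem leadingCoeff_const {F : Type*} [Field F] {f g : F[X][X]}
    (h : Algebra.adjoin F {f, g} = ⊤) (hf : 0 < f.natDegree) :
    ∃ c : F, c ≠ 0 ∧ f.leadingCoeff = C c := by
  have key : ∀ n, ∀ f g : F[X][X], f.natDegree + g.natDegree = n → Algebra.adjoin F {f, g} = ⊤ →
      0 < f.natDegree → (∃ c : F, c ≠ 0 ∧ f.leadingCoeff = C c) ∧
        (0 < g.natDegree → ∃ c : F, c ≠ 0 ∧ g.leadingCoeff = C c) := by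
    intro n
    induction n using Nat.strong_induction_on with
    | _ n ih =>
      intro f g hn h hf
      rcases Nat.eq_zero_or_pos g.natDegree with hg | hg
      · refine ⟨?_, fun h => by omega⟩
        rw [Set.pair_comm] at h
        obtain ⟨α, β, γ, p, hα, hγ, -, rfl⟩ := triangular h hg
        exact ⟨γ, hγ, leadingCoeff_linear (by simpa using hγ)⟩
      obtain ⟨m, c, hm, hc, ⟨hd, hlt⟩ | ⟨hd, hlt⟩⟩ := vdk_step h hf hg
      · obtain ⟨⟨e, he, hle⟩, -⟩ := ih _ (by omega) f (g - c • f ^ m) rfl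
          (by rw [adjoin_sub_smul_pow]; exact h) hf
        refine ⟨⟨e, he, hle⟩, fun _ => ⟨c * e ^ m, mul_ne_zero hc (pow_ne_zero _ he), ?_⟩⟩
        rw [leadingCoeff_of_sub hlt hd, hle]; simp
      · rw [Set.pair_comm] at h
        obtain ⟨⟨e, he, hle⟩, -⟩ := ih _ (by omega) g (f - c • g ^ m) rfl
          (by rw [adjoin_sub_smul_pow]; exact h) hg
        refine ⟨⟨c * e ^ m, mul_ne_zero hc (pow_ne_zero _ he), ?_⟩, fun _ => ⟨e, he, hle⟩⟩
        rw [leadingCoeff_of_sub hlt hd, hle]; simp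
  exact (key _ f g rfl h hf).1

/-! ### Lattices in `K[x, y]` over a discrete valuation ring -/

theorem map2_eq_zero_iff {O k : Type*} [CommRing O] [CommRing k] (σ : O →+* k) (π : O)
    (hσ : ∀ r, σ r = 0 ↔ π ∣ r) (H : O[X][X]) : map2 σ H = 0 ↔ ∃ G, H = π • G := by
  have h1 : map2 σ H = 0 ↔ C (C π) ∣ H := by
    rw [C_dvd_iff_dvd_coeff]
    constructor
    · intro h j
      rw [C_dvd_iff_dvd_coeff]
      intro i
      rw [← hσ, ← coeff_map2, h]; simp
    · intro h
      ext j i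
      rw [coeff_map2]
      simpa [hσ] using (C_dvd_iff_dvd_coeff _ _).1 (h j) i
  rw [h1]
  simp only [Dvd.dvd, Algebra.smul_def]
  rfl

theorem const_of_aeval_eq_zero {k : Type*} [Field k] {H : k[X][X]} {p : k[X]} (hp : p ≠ 0)
    (h : aeval H p = 0) : ∃ c, H = C (C c) := by
  have h1 : (p.map (algebraMap k k[X])).comp H = aeval H p := by
    rw [comp, eval₂_map, aeval_def]; rfl
  rw [← h1, comp_eq_zero_iff] at h
  rcases h with h | ⟨h, hH⟩
  · exact absurd ((Polynomial.map_eq_zero _).1 h) hp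
  · rw [eval_map_algebraMap] at h
    have h2 : p.comp (H.coeff 0) = 0 := by
      rw [← h]; rfl
    rw [comp_eq_zero_iff] at h2
    rcases h2 with h2 | ⟨-, h2⟩
    · exact absurd h2 hp
    · exact ⟨_, by rw [hH, h2]⟩

/-- A surjective endomorphism of a Noetherian ring is injective. -/
theorem injective_of_surjective_noetherian {B : Type*} [CommRing B] [IsNoetherianRing B]
    (f : B →+* B) (hf : Function.Surjective f) : Function.Injective f := by
  have hs : ∀ n : ℕ, Function.Surjective (f ^ n : B →+* B) := by
    intro n
    rw [RingHom.coe_pow]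
    exact hf.iterate n
  let I : ℕ →o Ideal B := ⟨fun n => RingHom.ker (f ^ n), by
    apply monotone_nat_of_le_succ
    intro n x hx
    rw [RingHom.mem_ker] at hx ⊢
    rw [pow_succ', RingHom.mul_def, RingHom.comp_apply, hx, map_zero]⟩
  obtain ⟨n, hn⟩ := monotone_stabilizes_iff_noetherian.2 ‹IsNoetherianRing B› I
  rw [injective_iff_map_eq_zero]
  intro x hx
  obtain ⟨y, rfl⟩ := hs n x
  have h1 : y ∈ I (n + 1) := by
    change y ∈ RingHom.ker (f ^ (n + 1))
    rw [RingHom.mem_ker, pow_succ', RingHom.mul_def, RingHom.comp_apply, hx]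
  rw [← hn (n + 1) (by omega)] at h1
  exact RingHom.mem_ker.1 h1

section Lattice

variable {O K : Type*} [CommRing O] [Field K] [Algebra O K]

/-- The `O`-lattice `O[a, b]` in `K[x, y]`. -/
noncomputable def lat (O : Type*) {K : Type*} [CommRing O] [Field K] [Algebra O K]
    (a b : K[X][X]) : Subalgebra O K[X][X] := Algebra.adjoin O {a, b}

/-- A pair of generators (hence algebraically independent generators) of `K[x, y]`. -/
def Coord {K : Type*} [Field K] (a b : K[X][X]) : Prop := Algebra.adjoin K {a, b} = ⊤

theorem mem_lat {a b c : K[X][X]} : c ∈ lat O a b ↔ ∃ H : O[X][X], ev a b H = c :=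
  mem_adjoin_pair

theorem lat_left (a b : K[X][X]) : a ∈ lat O a b := Algebra.subset_adjoin (by simp)

theorem lat_right (a b : K[X][X]) : b ∈ lat O a b := Algebra.subset_adjoin (by simp)

theorem lat_le {a b : K[X][X]} {L : Subalgebra O K[X][X]} (ha : a ∈ L) (hb : b ∈ L) :
    lat O a b ≤ L :=
  Algebra.adjoin_le (by rintro _ (rfl | rfl) <;> assumption)

theorem lat_swap (a b : K[X][X]) : lat O a b = lat O b a := by rw [lat, lat, Set.pair_comm]

theorem Coord.swap {a b : K[X][X]} (h : Coord a b) : Coord b a := by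
  rw [Coord, Set.pair_comm]; exact h

theorem Coord.injective {a b : K[X][X]} (h : Coord a b) :
    Function.Injective (ev a b : K[X][X] →ₐ[K] K[X][X]) := by
  apply injective_of_surjective_noetherian
    (ev a b : K[X][X] →ₐ[K] K[X][X]).toRingHom
  intro c
  have : c ∈ Algebra.adjoin K {a, b} := by rw [h]; exact Algebra.mem_top
  exact mem_adjoin_pair.1 this

theorem ev_injective [FaithfulSMul O K] {a b : K[X][X]} (h : Coord a b) :
    Function.Injective (ev a b : O[X][X] →ₐ[O] K[X][X]) := by
  intro G H hGH
  rw [← ev_map2 (T := K) _ _ G, ← ev_map2 (T := K) _ _ H] at hGH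
  exact map2_injective (FaithfulSMul.algebraMap_injective O K) (h.injective hGH)

variable {π : O}

theorem smul_cancel [FaithfulSMul O K] (hπ : π ≠ 0) {a b : K[X][X]} (h : π • a = π • b) :
    a = b := by
  have h1 : algebraMap O K π ≠ 0 := fun h0 =>
    hπ (FaithfulSMul.algebraMap_injective O K (by rw [h0, map_zero]))
  rw [← algebraMap_smul K π a, ← algebraMap_smul K π b] at h
  exact smul_right_injective _ h1 h

/-- `O ∩ π L = π O` for a lattice `L`. -/
theorem dvd_of_mem [FaithfulSMul O K] {a b m : K[X][X]} (h : Coord a b) (hm : m ∈ lat O a b) {μ : O}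
    (hμ : algebraMap O K[X][X] μ = π • m) : π ∣ μ := by
  obtain ⟨H, rfl⟩ := mem_lat.1 hm
  have h1 : (C (C μ) : O[X][X]) = π • H := by
    apply ev_injective h
    rw [map_smul, ← hμ, ev_C, aeval_C]
  refine ⟨(H.coeff 0).coeff 0, ?_⟩
  have := congrArg (fun R => (R.coeff 0).coeff 0) h1
  simpa using this

/-- If a polynomial that is nonzero modulo `π` takes a value in `π L` at `c ∈ L`, then `c` is
constant modulo `π L`, because `L / π L` is a polynomial ring over the residue field. -/
theorem const_mod [FaithfulSMul O K] {k : Type*} [Field k] (σ : O →+* k)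
    (hσ : ∀ r, σ r = 0 ↔ π ∣ r) (hσs : Function.Surjective σ) {a b c m : K[X][X]}
    (h : Coord a b) (hc : c ∈ lat O a b) (hm : m ∈ lat O a b) {p : O[X]}
    (hp : p.map σ ≠ 0) (hpm : aeval c p = π • m) :
    ∃ (μ : O), ∃ m' ∈ lat O a b, c = algebraMap O _ μ + π • m' := by
  obtain ⟨H, rfl⟩ := mem_lat.1 hc
  obtain ⟨M, rfl⟩ := mem_lat.1 hm
  have h1 : aeval H p = π • M := by
    apply ev_injective h
    rw [map_smul, ← hpm, aeval_algHom_apply]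
  have h2 : aeval (map2 σ H) (p.map σ) = 0 := by
    have h3 := congrArg (map2 σ) h1
    have h4 : map2 σ (π • M) = 0 := (map2_eq_zero_iff σ π hσ _).2 ⟨M, rfl⟩
    rw [h4] at h3
    rw [← h3, ← ev_C _ 0, ← ev_C H 0, map2_ev]; simp
  obtain ⟨c, hc⟩ := const_of_aeval_eq_zero hp h2
  obtain ⟨μ, rfl⟩ := hσs c
  have h5 : map2 σ (H - C (C μ)) = 0 := by rw [map_sub, hc]; simp
  obtain ⟨G, hG⟩ := (map2_eq_zero_iff σ π hσ _).1 h5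
  refine ⟨μ, ev a b G, mem_lat.2 ⟨G, rfl⟩, ?_⟩
  rw [← map_smul, ← hG, map_sub]; simp

/-- `π • L ⊆ lat (π • a) b` up to the part involving only `b`. -/
theorem split_first (a b c : K[X][X]) (hc : c ∈ lat O (π • a) b) :
    ∃ (p : O[X]) (s : K[X][X]), s ∈ lat O a b ∧ c = aeval b p + π • s := by
  obtain ⟨G, rfl⟩ := mem_lat.1 hc
  induction G using Polynomial.induction_on' with
  | add F G hF hG =>
    obtain ⟨p, s, hs, h1⟩ := hF (mem_lat.2 ⟨_, rfl⟩)
    obtain ⟨q, t, ht, h2⟩ := hG (mem_lat.2 ⟨_, rfl⟩)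
    refine ⟨p + q, s + t, add_mem hs ht, ?_⟩
    rw [map_add, h1, h2, map_add, smul_add]; ring
  | monomial n f =>
    refine ⟨C (f.coeff 0) * X ^ n, a * aeval (π • a) f.divX * b ^ n, ?_, ?_⟩
    · refine mul_mem (mul_mem (lat_left _ _) (aeval_mem_subalgebra ?_ _)) (pow_mem (lat_right _ _) _)
      exact Subalgebra.smul_mem _ (lat_left _ _) _
    · rw [← C_mul_X_pow_eq_monomial, map_mul, map_pow, ev_X, ev_C]
      conv_lhs => rw [← divX_mul_X_add f]
      simp only [map_add, map_mul, aeval_X, aeval_C, map_pow]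
      simp only [Algebra.smul_def]
      ring

theorem lat_smul_le (a b : K[X][X]) : lat O (π • a) b ≤ lat O a b :=
  lat_le (Subalgebra.smul_mem _ (lat_left _ _) _) (lat_right _ _)

end Lattice

section Reach

variable {O K : Type*} [CommRing O] [Field K] [Algebra O K]

/-- `L` is an elementary contraction of `L₁`: for some coordinates `a, b`, `L₁ = O[a, b]` and
`L = O[π a, b]`. -/
def Elem (π : O) (L L₁ : Subalgebra O K[X][X]) : Prop :=
  ∃ a b : K[X][X], Coord a b ∧ L₁ = lat O a b ∧ L = lat O (π • a) b

/-- Lattices obtained from the standard lattice by finitely many elementary contractions. -/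
inductive Reach (π : O) : Subalgebra O K[X][X] → Prop
  | base : Reach π (lat O (C X) X)
  | step {L L₁ : Subalgebra O K[X][X]} : Elem π L L₁ → Reach π L₁ → Reach π L

theorem Elem.le {π : O} {L L₁ : Subalgebra O K[X][X]} (h : Elem π L L₁) : L ≤ L₁ := by
  obtain ⟨a, b, -, rfl, rfl⟩ := h
  exact lat_smul_le a b

theorem Reach.le {π : O} {L : Subalgebra O K[X][X]} (h : Reach π L) : L ≤ lat O (C X) X := by
  induction h with
  | base => exact le_rfl
  | step h _ ih => exact h.le.trans ih

theorem coord_std : Coord (C X : K[X][X]) X := by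
  rw [Coord, eq_top_iff]
  intro H _
  exact mem_adjoin_pair.2 ⟨H, ev_self H⟩

theorem const_add_of_adjoin {π : O} {M : Subalgebra O K[X][X]} {s : Set K[X][X]}
    (hs : ∀ c ∈ s, ∃ μ : O, ∃ m ∈ M, c = algebraMap O _ μ + π • m) {c : K[X][X]}
    (hc : c ∈ Algebra.adjoin O s) : ∃ μ : O, ∃ m ∈ M, c = algebraMap O _ μ + π • m := by
  induction hc using Algebra.adjoin_induction with
  | mem x hx => exact hs x hx
  | algebraMap r => exact ⟨r, 0, zero_mem _, by simp⟩
  | add x y _ _ hx hy =>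
    obtain ⟨μ, m, hm, rfl⟩ := hx
    obtain ⟨ν, n, hn, rfl⟩ := hy
    exact ⟨μ + ν, m + n, add_mem hm hn, by rw [map_add, smul_add]; ring⟩
  | mul x y _ _ hx hy =>
    obtain ⟨μ, m, hm, rfl⟩ := hx
    obtain ⟨ν, n, hn, rfl⟩ := hy
    refine ⟨μ * ν, algebraMap O _ μ * n + algebraMap O _ ν * m + π • (m * n), ?_, ?_⟩
    · exact add_mem (add_mem (mul_mem (Subalgebra.algebraMap_mem _ _) hn)
        (mul_mem (Subalgebra.algebraMap_mem _ _) hm)) (Subalgebra.smul_mem _ (mul_mem hm hn) _)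
    · simp only [Algebra.smul_def, map_mul]; ring

theorem Coord.of_const_add {π μ : O} {x y z : K[X][X]}
    (hy : y = algebraMap O _ μ + π • z) (h : Coord x y) : Coord z x := by
  rw [Coord, eq_top_iff, ← h]
  have hx : x ∈ Algebra.adjoin K {z, x} := Algebra.subset_adjoin (by simp)
  have hz : z ∈ Algebra.adjoin K {z, x} := Algebra.subset_adjoin (by simp)
  apply Algebra.adjoin_le
  rintro _ (rfl | rfl)
  · exact hx
  · rw [hy]
    refine add_mem ?_ ?_
    · rw [IsScalarTower.algebraMap_apply O K]; exact Subalgebra.algebraMap_mem _ _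
    · rw [← algebraMap_smul K]; exact Subalgebra.smul_mem _ hz _

theorem elem_of_const_add {π μ : O} {x y z : K[X][X]}
    (hy : y = algebraMap O _ μ + π • z) (h : Coord x y) : Elem π (lat O x y) (lat O x z) := by
  refine ⟨z, x, h.of_const_add hy, lat_swap _ _, ?_⟩
  have h1 : y - algebraMap O _ μ = π • z := by rw [hy]; ring
  apply le_antisymm
  · refine lat_le (lat_right _ _) ?_
    rw [hy]
    exact add_mem (Subalgebra.algebraMap_mem _ _) (lat_left _ _)
  · refine lat_le ?_ (lat_left _ _)
    rw [← h1]
    exact sub_mem (lat_right _ _) (Subalgebra.algebraMap_mem _ _)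

variable [FaithfulSMul O K] {π : O}

theorem right_not_const (hπu : ¬ IsUnit π) {a b : K[X][X]} (h : Coord a b) (μ : O)
    {m : K[X][X]} (hm : m ∈ lat O a b) : b ≠ algebraMap O _ μ + π • m := by
  intro hb
  obtain ⟨M, rfl⟩ := mem_lat.1 hm
  have h1 : (X : O[X][X]) = C (C μ) + π • M := by
    apply ev_injective h
    rw [map_add, map_smul]
    simpa using hb
  have h2 := congrArg (fun R => (R.coeff 1).coeff 0) h1
  simp only [coeff_X_one, coeff_one_zero, coeff_add, coeff_C_succ, zero_add,
    coeff_smul, smul_eq_mul] at h2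
  exact hπu (IsUnit.of_mul_eq_one _ h2.symm)

theorem left_not_mem (hπu : ¬ IsUnit π) {a b : K[X][X]} (h : Coord a b) :
    a ∉ lat O (π • a) b := by
  intro ha
  obtain ⟨p, s, hs, hps⟩ := split_first a b a ha
  obtain ⟨M, rfl⟩ := mem_lat.1 hs
  have h1 : (C X : O[X][X]) = p.map C + π • M := by
    apply ev_injective h
    rw [map_add, map_smul, ev_C, aeval_X]
    conv_lhs => rw [hps]
    congr 1
    rw [ev_apply, eval₂_map, aeval_def]
    congr 1
    ext; simp
  have h2 := congrArg (fun R => (R.coeff 0).coeff 1) h1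
  simp only [coeff_C_zero, coeff_X_one, coeff_add, coeff_map, coeff_C_succ, zero_add,
    coeff_smul, smul_eq_mul] at h2
  exact hπu (IsUnit.of_mul_eq_one _ h2.symm)

variable {k : Type*} [Field k] (σ : O →+* k)

/-- Comparison of two elementary enlargements `O[x, y]`, `O[x', y']` of the same lattice inside
a lattice `O[u, v]`: the first contains the second unless `y` is constant modulo `π O[u, v]`. -/
theorem half (hπ : π ≠ 0) (hσ : ∀ r, σ r = 0 ↔ π ∣ r) (hσs : Function.Surjective σ)
    {x y x' y' u v : K[X][X]} (huv : Coord u v)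
    (hx' : π • x' ∈ lat O (π • x) y) (hy' : y' ∈ lat O (π • x) y) (hxM : x ∈ lat O u v)
    (hyM : y ∈ lat O u v) (hxM' : x' ∈ lat O u v) :
    lat O x' y' ≤ lat O x y ∨ ∃ μ : O, ∃ m ∈ lat O u v, y = algebraMap O _ μ + π • m := by
  obtain ⟨p, s, hs, hps⟩ := split_first x y _ hx'
  by_cases hp : p.map σ = 0
  · left
    have hp' : C π ∣ p := by
      rw [C_dvd_iff_dvd_coeff]
      intro i
      rw [← hσ, ← coeff_map, hp, coeff_zero]
    obtain ⟨p', rfl⟩ := hp'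
    have h1 : x' = aeval y p' + s := by
      apply smul_cancel hπ
      rw [hps, smul_add, map_mul, aeval_C, ← Algebra.smul_def]
    refine lat_le ?_ (lat_smul_le _ _ hy')
    rw [h1]
    exact add_mem (aeval_mem_subalgebra (lat_right _ _) _) hs
  · right
    refine const_mod σ hσ hσs huv hyM (m := x' - s) (sub_mem hxM' (lat_le hxM hyM hs)) hp ?_
    rw [smul_sub, hps]; ring

/-- When both `y = μ + π z` and `y' = μ' + π z'` are constant modulo `π`, the further enlargement
`O[x, z]` contains `O[x', z']`. -/
theorem le_of_const_add (hπ : π ≠ 0) {x y z x' y' z' u v : K[X][X]} {μ μ' : O} (huv : Coord u v)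
    (hy : y = algebraMap O _ μ + π • z) (hy' : y' = algebraMap O _ μ' + π • z')
    (hx'L : π • x' ∈ lat O (π • x) y) (hy'L : y' ∈ lat O (π • x) y)
    (hx : x ∈ lat O u v) (hz : z ∈ lat O u v) (hx' : x' ∈ lat O u v) (hz' : z' ∈ lat O u v) :
    lat O x' z' ≤ lat O x z := by
  have hC : lat O x z ≤ lat O u v := lat_le hx hz
  have key : ∀ c ∈ lat O (π • x) y, ∃ ν : O, ∃ m ∈ lat O x z, c = algebraMap O _ ν + π • m := by
    intro c hc
    refine const_add_of_adjoin ?_ hc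
    rintro _ (rfl | rfl)
    · exact ⟨0, x, lat_left _ _, by simp⟩
    · exact ⟨μ, z, lat_right _ _, hy⟩
  have fin : ∀ w ∈ lat O u v, ∀ ν : O, ∀ m ∈ lat O x z,
      π • w = algebraMap O _ ν + π • m → w ∈ lat O x z := by
    intro w hw ν m hm h
    obtain ⟨ξ, rfl⟩ := dvd_of_mem (π := π) (m := w - m) huv (sub_mem hw (hC hm))
      (by rw [smul_sub, h]; ring)
    have h1 : w = algebraMap O _ ξ + m := by
      apply smul_cancel hπ
      rw [h, smul_add, map_mul, Algebra.smul_def π (algebraMap O _ ξ)]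
    rw [h1]
    exact add_mem (Subalgebra.algebraMap_mem _ _) hm
  apply lat_le
  · obtain ⟨ν, m, hm, h⟩ := key _ hx'L
    exact fin x' hx' ν m hm h
  · obtain ⟨ν, m, hm, h⟩ := key _ hy'L
    refine fin z' hz' (ν - μ') m hm ?_
    rw [map_sub]
    rw [hy'] at h
    linear_combination h

/-- **Confluence.** An elementary enlargement of a reachable lattice inside the standard lattice is reachable. -/
theorem Reach.up (hπ : π ≠ 0) (hπu : ¬ IsUnit π) (hσ : ∀ r, σ r = 0 ↔ π ∣ r)
    (hσs : Function.Surjective σ)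
    {L : Subalgebra O K[X][X]} (h : Reach π L) : ∀ L₁ : Subalgebra O K[X][X], Elem π L L₁ →
      L₁ ≤ lat O (C X) X → Reach π L₁ := by
  induction h with
  | base =>
    rintro L₁ ⟨a, b, hab, rfl, hL⟩ hle
    exact absurd (hL ▸ hle (lat_left _ _)) (left_not_mem hπu hab)
  | @step L L₂ hE hR ih =>
    rintro L₁ ⟨x, y, hxy, rfl, hL⟩ hle
    obtain ⟨x', y', hxy', rfl, hL'⟩ := id hE
    have hle' := hR.le
    have hx'L : π • x' ∈ lat O (π • x) y := by rw [← hL, hL']; exact lat_left _ _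
    have hy'L : y' ∈ lat O (π • x) y := by rw [← hL, hL']; exact lat_right _ _
    have hxL : π • x ∈ lat O (π • x') y' := by rw [← hL', hL]; exact lat_left _ _
    have hyL : y ∈ lat O (π • x') y' := by rw [← hL', hL]; exact lat_right _ _
    -- no lattice can absorb the other one unless they agree
    have mixed : ∀ {x y x' y' : K[X][X]}, Coord x y → Coord x' y' →
        π • x ∈ lat O (π • x') y' → y ∈ lat O (π • x') y' → lat O x' y' ≤ lat O x y →
        ¬ lat O x y ≤ lat O x' y' → False := by
      intro x y x' y' hxy hxy' hxL hyL h1 h2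
      rcases half σ hπ hσ hσs hxy hxL hyL (h1 (lat_left _ _)) (h1 (lat_right _ _))
        (lat_left _ _) with h3 | ⟨μ, m, hm, h3⟩
      · exact h2 h3
      · obtain ⟨ν, n, hn, h4⟩ : ∃ ν : O, ∃ n ∈ lat O x y, y = algebraMap O _ ν + π • n := by
          refine const_add_of_adjoin ?_ hyL
          rintro _ (rfl | rfl)
          · exact ⟨0, x', h1 (lat_left _ _), by simp⟩
          · exact ⟨μ, m, hm, h3⟩
        exact right_not_const hπu hxy ν hn h4
    by_cases h1 : lat O x' y' ≤ lat O x y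
    · by_cases h2 : lat O x y ≤ lat O x' y'
      · rw [le_antisymm h2 h1]; exact hR
      · exact (mixed hxy hxy' hxL hyL h1 h2).elim
    · by_cases h2 : lat O x y ≤ lat O x' y'
      · exact (mixed hxy' hxy hx'L hy'L h2 h1).elim
      -- modulo `π` both `y` and `y'` are constants, and the two enlargements have the common
      -- elementary enlargement `O[x, z] = O[x', z']`
      · obtain ⟨μ, z, hz, hy⟩ := (half σ hπ hσ hσs coord_std hx'L hy'L (hle (lat_left _ _))
          (hle (lat_right _ _)) (hle' (lat_left _ _))).resolve_left h1
        obtain ⟨μ', z', hz', hy'⟩ := (half σ hπ hσ hσs coord_std hxL hyL (hle' (lat_left _ _))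
          (hle' (lat_right _ _)) (hle (lat_left _ _))).resolve_left h2
        have e1 : lat O x z = lat O x' z' := le_antisymm
          (le_of_const_add hπ coord_std hy' hy hxL hyL (hle' (lat_left _ _)) hz'
            (hle (lat_left _ _)) hz)
          (le_of_const_add hπ coord_std hy hy' hx'L hy'L (hle (lat_left _ _)) hz
            (hle' (lat_left _ _)) hz')
        have hRC : Reach π (lat O x' z') := ih _ (elem_of_const_add hy' hxy')
          (lat_le (hle' (lat_left _ _)) hz')
        refine Reach.step (elem_of_const_add hy hxy) ?_
        rw [e1]; exact hRC

end Reach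

section LatticeThm

variable {O K : Type*} [CommRing O] [Field K] [Algebra O K]

theorem coord_smul {a b : K[X][X]} (h : Coord a b) {c : K} (hc : c ≠ 0) : Coord a (c • b) := by
  rw [Coord, eq_top_iff, ← h]
  have h1 : a ∈ Algebra.adjoin K {a, c • b} := Algebra.subset_adjoin (by simp)
  have h2 : c • b ∈ Algebra.adjoin K {a, c • b} := Algebra.subset_adjoin (by simp)
  apply Algebra.adjoin_le
  rintro _ (rfl | rfl)
  · exact h1
  · have := Subalgebra.smul_mem _ h2 c⁻¹
    rwa [smul_smul, inv_mul_cancel₀ hc, one_smul] at this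

theorem coord_smul_left {a b : K[X][X]} (h : Coord a b) {c : K} (hc : c ≠ 0) : Coord (c • a) b :=
  (coord_smul h.swap hc).swap

theorem coord_pow [FaithfulSMul O K] {π : O} (hπ : π ≠ 0) [IsDomain O] {a b : K[X][X]}
    (h : Coord a b) (m n : ℕ) : Coord (π ^ m • a) (π ^ n • b) := by
  have h1 : ∀ n : ℕ, algebraMap O K (π ^ n) ≠ 0 := fun n h0 =>
    pow_ne_zero n hπ (FaithfulSMul.algebraMap_injective O K (by rw [h0, map_zero]))
  rw [← algebraMap_smul K (π ^ m), ← algebraMap_smul K (π ^ n)]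
  exact coord_smul_left (coord_smul h (h1 n)) (h1 m)

theorem Reach.contract [FaithfulSMul O K] [IsDomain O] {π : O} (hπ : π ≠ 0) {a b : K[X][X]}
    (h : Coord a b) {m n m' n' : ℕ} (hm : m ≤ m') (hn : n ≤ n')
    (hR : Reach π (lat O (π ^ m • a) (π ^ n • b))) :
    Reach π (lat O (π ^ m' • a) (π ^ n' • b)) := by
  have h1 : Reach π (lat O (π ^ m' • a) (π ^ n • b)) := by
    induction m', hm using Nat.le_induction with
    | base => exact hR
    | succ j _ ih =>
      refine Reach.step ⟨π ^ j • a, π ^ n • b, coord_pow hπ h _ _, rfl, ?_⟩ ih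
      rw [smul_smul, ← pow_succ']
  induction n', hn using Nat.le_induction with
  | base => exact h1
  | succ j _ ih =>
    refine Reach.step ⟨π ^ j • b, π ^ m' • a, (coord_pow hπ h _ _).swap, lat_swap _ _, ?_⟩ ih
    rw [smul_smul, ← pow_succ', lat_swap]

theorem Reach.expand [FaithfulSMul O K] [IsDomain O] {π : O} (hπ : π ≠ 0) (hπu : ¬ IsUnit π)
    {k : Type*} [Field k] (σ : O →+* k) (hσ : ∀ r, σ r = 0 ↔ π ∣ r)
    (hσs : Function.Surjective σ) {a b : K[X][X]} (h : Coord a b)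
    (ha : a ∈ lat O (C X : K[X][X]) X) (hb : b ∈ lat O (C X : K[X][X]) X) {m n : ℕ}
    (hR : Reach π (lat O (π ^ m • a) (π ^ n • b))) : Reach π (lat O a b) := by
  have h1 : Reach π (lat O a (π ^ n • b)) := by
    induction m with
    | zero => simpa using hR
    | succ j ih =>
      apply ih
      refine hR.up σ hπ hπu hσ hσs _ ⟨_, _, coord_pow hπ h j n, rfl, ?_⟩
        (lat_le (Subalgebra.smul_mem _ ha _) (Subalgebra.smul_mem _ hb _))
      rw [smul_smul, ← pow_succ']
  clear hR
  induction n with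
  | zero => simpa using h1
  | succ j ih =>
    apply ih
    have h2 := (coord_pow hπ h 0 j).swap
    rw [pow_zero, one_smul] at h2
    refine h1.up σ hπ hπu hσ hσs _ ⟨_, _, h2, lat_swap _ _, ?_⟩
      (lat_le ha (Subalgebra.smul_mem _ hb _))
    rw [smul_smul, ← pow_succ', lat_swap]

variable [IsDomain O] [IsDiscreteValuationRing O] [IsFractionRing O K] {π : O}

theorem exists_pow_smul_integral (hπ : Irreducible π) (p : K[X]) :
    ∃ n : ℕ, ∃ q : O[X], q.map (algebraMap O K) = π ^ n • p := by
  obtain ⟨b, hb0, hb⟩ := IsLocalization.integerNormalization_spec (nonZeroDivisors O) p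
  obtain ⟨n, hn⟩ := IsDiscreteValuationRing.associated_pow_irreducible
    (nonZeroDivisors.ne_zero hb0) hπ
  obtain ⟨u, hu⟩ := hn
  refine ⟨n, C (u : O) * IsLocalization.integerNormalization (nonZeroDivisors O) p, ?_⟩
  rw [Polynomial.map_mul, hb, map_C, ← hu, mul_comm b, mul_smul, ← smul_eq_C_mul, algebraMap_smul]

theorem exists_unit_pow (hπ : Irreducible π) {c : K} (hc : c ≠ 0) :
    ∃ (u : Oˣ) (m n : ℕ), c * algebraMap O K (π ^ n) = algebraMap O K (u * π ^ m) := by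
  obtain ⟨a, b, hb, rfl⟩ := IsFractionRing.div_surjective (A := O) c
  have hb0 := nonZeroDivisors.ne_zero hb
  have ha0 : a ≠ 0 := by rintro rfl; simp at hc
  obtain ⟨m, u, hu⟩ := IsDiscreteValuationRing.eq_unit_mul_pow_irreducible ha0 hπ
  obtain ⟨n, w, hw⟩ := IsDiscreteValuationRing.eq_unit_mul_pow_irreducible hb0 hπ
  refine ⟨u * w⁻¹, m, n, ?_⟩
  have hb1 : algebraMap O K b ≠ 0 := fun h => hb0 (IsFractionRing.injective O K (by simpa using h))
  rw [div_mul_eq_mul_div, div_eq_iff hb1, ← map_mul, ← map_mul]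
  congr 1
  rw [hu, hw]
  push_cast
  linear_combination (-(u : O) * π ^ m * π ^ n) * (Units.inv_mul w)

/-- Every pair of coordinates becomes reachable after scaling, by tameness of automorphisms. -/
theorem exists_reach (hπ : Irreducible π) {a b : K[X][X]} (h : Coord a b) :
    ∃ N : ℕ, Reach π (lat O (π ^ N • a) (π ^ N • b)) := by
  have hπ0 := hπ.ne_zero
  refine (coord_induction (fun a b => Coord a b ∧
    ∃ N : ℕ, Reach π (lat (K := K) O (π ^ N • a) (π ^ N • b))) ?_ ?_ ?_ ?_ h).2
  · refine ⟨coord_std, 0, ?_⟩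
    simpa using Reach.base
  · rintro f g ⟨h, N, hN⟩
    exact ⟨h.swap, N, by rw [lat_swap]; exact hN⟩
  · rintro f g p ⟨h, N, hN⟩
    have h' : Coord f (g + aeval f p) := by
      rw [Coord, adjoin_shear]; exact h
    have hπK : algebraMap O K (π ^ N) ≠ 0 := fun h0 =>
      pow_ne_zero N hπ0 (IsFractionRing.injective O K (by rw [h0, map_zero]))
    obtain ⟨n, q, hq⟩ := exists_pow_smul_integral hπ (p.comp (C (algebraMap O K (π ^ N))⁻¹ * X))
    refine ⟨h', n + N, ?_⟩
    refine Reach.contract hπ0 h' (m := N) (n := n + N) (by omega) le_rfl ?_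
    have h1 := Reach.contract hπ0 h (m' := N) (n' := n + N) le_rfl (by omega) hN
    have h2 : π ^ (n + N) • (g + aeval f p)
        = π ^ (n + N) • g + aeval (π ^ N • f) (π ^ N • q) := by
      rw [smul_add, map_smul, ← aeval_map_algebraMap K _ q, hq, pow_add, mul_comm, mul_smul, mul_smul]
      congr 2
      rw [← algebraMap_smul K (π ^ n) (p.comp _), map_smul, aeval_comp]
      simp only [map_mul, aeval_C, aeval_X]
      rw [← algebraMap_smul K (π ^ N) f, ← Algebra.smul_def, smul_smul, inv_mul_cancel₀ hπK,
        one_smul, algebraMap_smul]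
    rw [h2, lat, adjoin_shear]
    exact h1
  · rintro f g c hc ⟨h, N, hN⟩
    refine ⟨coord_smul h hc, ?_⟩
    obtain ⟨u, m, n, hu⟩ := exists_unit_pow hπ hc
    refine ⟨N + n, ?_⟩
    have h1 : π ^ (N + n) • c • g = (u : O) • π ^ (N + m) • g := by
      rw [← algebraMap_smul K (π ^ (N + n)), ← algebraMap_smul K (u : O),
        ← algebraMap_smul K (π ^ (N + m)), smul_smul, smul_smul]
      congr 1
      rw [pow_add, pow_add, map_mul, map_mul, mul_assoc, mul_comm _ c, hu, map_mul]
      ring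
    have h2 : ∀ (a b : K[X][X]) (u : Oˣ), lat O a ((u : O) • b) ≤ lat O a b := fun a b u =>
      lat_le (lat_left _ _) (Subalgebra.smul_mem _ (lat_right _ _) _)
    have h3 : ∀ (a b : K[X][X]), lat O a ((u : O) • b) = lat O a b := by
      intro a b
      refine le_antisymm (h2 a b u) ?_
      have := h2 a ((u : O) • b) u⁻¹
      rwa [smul_smul, Units.inv_mul, one_smul] at this
    rw [h1, h3]
    exact Reach.contract hπ0 h (by omega) (by omega) hN

theorem map2_eq_ev {O K : Type*} [CommRing O] [Field K] [Algebra O K] (H : O[X][X]) :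
    map2 (algebraMap O K) H = ev (C X : K[X][X]) X H := by
  rw [← ev_map2 (S := O) (T := K), ev_self]

/-- **Coordinates over a discrete valuation ring.** If `f, g ∈ O[x, y]` generate `K[x, y]`, then
either they generate `O[x, y]`, or `O[f, g] = O[π x₁, y₁]` for suitable `x₁, y₁ ∈ O[x, y]`. -/
theorem lattice_theorem (K : Type*) [Field K] [Algebra O K] [IsFractionRing O K]
    (hπ : Irreducible π) {f g : O[X][X]}
    (h : Coord (map2 (algebraMap O K) f) (map2 (algebraMap O K) g)) :
    Algebra.adjoin O {f, g} = ⊤ ∨ ∃ x₁ y₁ α β F G : O[X][X], f = ev (π • x₁) y₁ α ∧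
      g = ev (π • x₁) y₁ β ∧ ev α β F = C X ∧ ev α β G = X := by
  have hσ : ∀ r, Ideal.Quotient.mk (Ideal.span {π}) r = 0 ↔ π ∣ r := fun r => by
    rw [Ideal.Quotient.eq_zero_iff_mem, Ideal.mem_span_singleton]
  have : (Ideal.span {π}).IsMaximal := PrincipalIdealRing.isMaximal_of_irreducible hπ
  let := Ideal.Quotient.field (Ideal.span {π})
  have hinj : Function.Injective (map2 (algebraMap O K)) :=
    map2_injective (IsFractionRing.injective O K)
  have hmem : ∀ H, map2 (algebraMap O K) H ∈ lat O (C X : K[X][X]) X := fun H =>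
    mem_lat.2 ⟨H, (map2_eq_ev (K := K) H).symm⟩
  have hmem' : ∀ c ∈ lat O (C X : K[X][X]) X, ∃ H, map2 (algebraMap O K) H = c := fun c hc => by
    obtain ⟨H, hH⟩ := mem_lat.1 hc
    exact ⟨H, by rw [map2_eq_ev, hH]⟩
  have hev : ∀ a b H : O[X][X], map2 (algebraMap O K) (ev a b H)
      = ev (map2 (algebraMap O K) a) (map2 (algebraMap O K) b) H := fun a b H => by
    rw [map2_ev, ev_map2]
  -- a small multiple of the pair is reachable, and confluence lets the scaling be undone
  obtain ⟨N, hN⟩ := exists_reach hπ h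
  have hR := hN.expand hπ.ne_zero hπ.not_isUnit (Ideal.Quotient.mk (Ideal.span {π})) hσ
    Ideal.Quotient.mk_surjective h (hmem f) (hmem g)
  generalize hL : lat O (map2 (algebraMap O K) f) (map2 (algebraMap O K) g) = L at hR
  cases hR with
  | base =>
    left
    rw [eq_top_iff]
    intro c _
    have h1 := hmem c
    rw [← hL] at h1
    obtain ⟨H, hH⟩ := mem_lat.1 h1
    rw [← hev] at hH
    exact mem_adjoin_pair.2 ⟨H, hinj hH⟩
  | @step _ L₁ hE hR =>
    right
    obtain ⟨a, b, hab, rfl, rfl⟩ := hE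
    obtain ⟨x₁, rfl⟩ := hmem' a (hR.le (lat_left _ _))
    obtain ⟨y₁, rfl⟩ := hmem' b (hR.le (lat_right _ _))
    have hsm : π • map2 (algebraMap O K) x₁ = map2 (algebraMap O K) (π • x₁) := by
      ext j i
      rw [coeff_map2]
      simp [coeff_map2, Algebra.smul_def]
    have hcc : Coord (map2 (algebraMap O K) (π • x₁)) (map2 (algebraMap O K) y₁) := by
      have := coord_pow hπ.ne_zero hab 1 0
      rwa [pow_one, pow_zero, one_smul, hsm] at this
    rw [hsm] at hL
    have hi := ev_injective (O := O) hcc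
    obtain ⟨α, hα⟩ := mem_lat.1 (hL ▸ lat_left _ _ : map2 (algebraMap O K) f ∈ _)
    obtain ⟨β, hβ⟩ := mem_lat.1 (hL ▸ lat_right _ _ : map2 (algebraMap O K) g ∈ _)
    obtain ⟨F, hF⟩ := mem_lat.1 (hL.symm ▸ lat_left _ _ : map2 (algebraMap O K) (π • x₁) ∈
      lat O (map2 (algebraMap O K) f) (map2 (algebraMap O K) g))
    obtain ⟨G, hG⟩ := mem_lat.1 (hL.symm ▸ lat_right _ _ : map2 (algebraMap O K) y₁ ∈
      lat O (map2 (algebraMap O K) f) (map2 (algebraMap O K) g))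
    refine ⟨x₁, y₁, α, β, F, G, hinj (by rw [hev, hα]), hinj (by rw [hev, hβ]), hi ?_, hi ?_⟩
    · rw [ev_ev, hα, hβ, hF]; simp
    · rw [ev_ev, hα, hβ, hG]; simp

end LatticeThm

/-! ### Valuation rings over a principal ideal domain -/

theorem valuation_eq_one {R K₁ Γ : Type*} [CommRing R] [IsDomain R] [IsPrincipalIdealRing R]
    [Field K₁] [Algebra R K₁] [LinearOrderedCommGroupWithZero Γ] {π : R} (hπ : Irreducible π)
    (v : Valuation K₁ Γ)
    (h1 : ∀ r, v (algebraMap R K₁ r) ≤ 1) (h2 : v (algebraMap R K₁ π) < 1) {r : R} (hr : ¬ π ∣ r) :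
    v (algebraMap R K₁ r) = 1 := by
  obtain ⟨a, b, hab⟩ := (hπ.coprime_iff_not_dvd).2 hr
  refine le_antisymm (h1 r) ?_
  by_contra hlt
  rw [not_le] at hlt
  have h3 := congrArg (fun x => v (algebraMap R K₁ x)) hab
  simp only [map_add, map_mul, map_one] at h3
  have h4 : v (algebraMap R K₁ a * algebraMap R K₁ π + algebraMap R K₁ b * algebraMap R K₁ r) < 1 := by
    apply Valuation.map_add_lt
    · rw [map_mul]; exact (mul_le_of_le_one_left' (h1 a)).trans_lt h2
    · rw [map_mul]; exact (mul_le_of_le_one_left' (h1 b)).trans_lt hlt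
  rw [h3] at h4
  exact lt_irrefl _ h4

/-- Elements of strictly increasing value in `[v π, 1)` are linearly independent over `R`. -/
theorem linearIndependent_of_valuation {R K₁ Γ : Type*} [CommRing R] [IsDomain R]
    [IsPrincipalIdealRing R] [Field K₁] [Algebra R K₁] [LinearOrderedCommGroupWithZero Γ] {π : R}
    (hπ : Irreducible π) (hπ0 : algebraMap R K₁ π ≠ 0) (v : Valuation K₁ Γ)
    (h1 : ∀ r, v (algebraMap R K₁ r) ≤ 1) (h2 : v (algebraMap R K₁ π) < 1)
    (c : ℕ → K₁) (hc : StrictMono fun n => v (c n)) (hc1 : ∀ n, v (algebraMap R K₁ π) ≤ v (c n))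
    (hc2 : ∀ n, v (c n) < 1) : LinearIndependent R c := by
  classical
  rw [linearIndependent_iff']
  intro s g hg
  -- a relation all of whose coefficients are divisible by `π` can be divided by `π`
  have red : ∀ g : ℕ → R, ∑ i ∈ s, g i • c i = 0 → ∀ i ∈ s, π ∣ g i := by
    intro g hg
    by_contra hcon
    push Not at hcon
    set t := s.filter fun i => ¬ π ∣ g i with ht
    have htne : t.Nonempty := by
      obtain ⟨i, hi, hgi⟩ := hcon
      exact ⟨i, by simp [ht, hi, hgi]⟩
    set i := t.max' htne
    have hit : i ∈ t := t.max'_mem htne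
    have his : i ∈ s ∧ ¬ π ∣ g i := by simpa [ht] using hit
    have hmax : ∀ j ∈ s, i < j → π ∣ g j := by
      intro j hj hij
      by_contra h
      exact absurd (t.le_max' j (by simp [ht, hj, h])) (not_le.2 hij)
    have hvi : v (c i) ≠ 0 := by
      intro h0
      have := hc1 i
      rw [h0, le_zero_iff, Valuation.zero_iff] at this
      exact hπ0 this
    rw [← Finset.add_sum_erase _ _ his.1] at hg
    have h3 : v (∑ j ∈ s.erase i, g j • c j) < v (c i) := by
      apply Valuation.map_sum_lt _ hvi
      intro j hj
      rw [Algebra.smul_def, map_mul]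
      obtain ⟨hji, hjs⟩ := Finset.mem_erase.1 hj
      rcases lt_or_gt_of_ne hji with hlt | hgt
      · exact lt_of_le_of_lt (mul_le_of_le_one_left' (h1 _)) (hc hlt)
      · obtain ⟨d, hd⟩ := hmax j hjs hgt
        refine lt_of_lt_of_le ?_ (hc1 i)
        rw [hd, map_mul, map_mul, mul_assoc]
        have hvπ : v (algebraMap R K₁ π) ≠ 0 := by rwa [Valuation.ne_zero_iff]
        have h5 : v (algebraMap R K₁ d) * v (c j) < 1 := 
          (mul_le_of_le_one_left' (h1 d)).trans_lt (hc2 j)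
        calc _ < v (algebraMap R K₁ π) * 1 := by
              exact (mul_lt_mul_iff_right₀ (zero_lt_iff.2 hvπ)).2 h5
          _ = _ := mul_one _
    have h4 : ∑ j ∈ s.erase i, g j • c j = - (g i • c i) := by
      linear_combination hg
    rw [h4, Valuation.map_neg, Algebra.smul_def, map_mul, valuation_eq_one hπ v h1 h2 his.2,
      one_mul] at h3
    exact lt_irrefl _ h3
  have all : ∀ n : ℕ, ∀ i ∈ s, π ^ n ∣ g i := by
    intro n
    induction n with
    | zero => simp
    | succ n ih =>
      choose! d hd using ih
      have : ∑ i ∈ s, d i • c i = 0 := by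
        have h3 : algebraMap R K₁ (π ^ n) * ∑ i ∈ s, d i • c i = 0 := by
          rw [← hg, Finset.mul_sum]
          apply Finset.sum_congr rfl
          intro i hi
          rw [hd i hi, Algebra.smul_def, Algebra.smul_def, map_mul]; ring
        rw [map_pow] at h3
        exact (mul_eq_zero.1 h3).resolve_left (pow_ne_zero _ hπ0)
      intro i hi
      obtain ⟨e, he⟩ := red d this i hi
      exact ⟨e, by rw [hd i hi, he]; ring⟩
  intro i hi
  by_contra h0
  obtain ⟨n, a, hna, hn⟩ := WfDvdMonoid.max_power_factor h0 hπ
  obtain ⟨e, he⟩ := all (n + 1) i hi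
  apply hna
  refine ⟨e, ?_⟩
  apply mul_left_cancel₀ (pow_ne_zero n hπ.ne_zero)
  rw [← hn, he]; ring

/-- A valuation ring of a finite extension of `Frac R` that dominates `R_(π)` is discrete. No
separability is assumed; this is the case of the Krull–Akizuki theorem needed below. -/
theorem dvr_of_finite {R K K₁ : Type*} [CommRing R] [IsDomain R] [IsPrincipalIdealRing R]
    [Field K] [Algebra R K] [IsFractionRing R K] [Field K₁] [Algebra K K₁] [Algebra R K₁]
    [IsScalarTower R K K₁] [FiniteDimensional K K₁] {π : R} (hπ : Irreducible π)
    (O : ValuationSubring K₁) (h1 : ∀ r, algebraMap R K₁ r ∈ O)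
    (h2 : O.valuation (algebraMap R K₁ π) < 1) : IsDiscreteValuationRing O := by
  set v := O.valuation with hv
  have h1' : ∀ r, v (algebraMap R K₁ r) ≤ 1 := fun r => (O.valuation_le_one_iff _).2 (h1 r)
  have hinj : Function.Injective (algebraMap R K₁) := by
    rw [IsScalarTower.algebraMap_eq R K K₁]
    exact (algebraMap K K₁).injective.comp (IsFractionRing.injective R K)
  have hπ0 : algebraMap R K₁ π ≠ 0 := fun h => hπ.ne_zero (hinj (by rw [h, map_zero]))
  have hvπ : v (algebraMap R K₁ π) ≠ 0 := by rwa [Valuation.ne_zero_iff]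
  -- every nonzero element divides a power of `π`
  have hpow : ∀ a : O, a ≠ 0 → ∃ n : ℕ, v (algebraMap R K₁ π) ^ n ≤ v a := by
    intro a ha
    let : Algebra R O := ((algebraMap R K₁).codRestrict O.toSubring h1).toAlgebra
    have : IsScalarTower R O K₁ := IsScalarTower.of_algebraMap_eq fun r => rfl
    have halg : IsAlgebraic R a := by
      have h3 : IsAlgebraic K (a : K₁) := IsAlgebraic.of_finite K _
      have h4 : IsAlgebraic R (a : K₁) := (IsFractionRing.isAlgebraic_iff R K K₁).2 h3
      exact (isAlgebraic_algebraMap_iff (R := R) (A := K₁) (Subtype.val_injective)).1 h4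
    obtain ⟨r, hr, s, hs⟩ := halg.exists_nonzero_dvd (mem_nonZeroDivisors_of_ne_zero ha)
    obtain ⟨n, u, hu, rfl⟩ := WfDvdMonoid.max_power_factor hr hπ
    refine ⟨n, ?_⟩
    have h3 : algebraMap R K₁ (π ^ n * u) = a * s := by
      rw [IsScalarTower.algebraMap_apply R O K₁, hs, map_mul]; rfl
    have h4 := congrArg v h3
    rw [map_mul, map_mul, map_mul, valuation_eq_one hπ v h1' h2 hu, mul_one, map_pow, map_pow] at h4
    rw [h4]
    exact mul_le_of_le_one_right' ((O.valuation_le_one_iff _).2 s.2)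
  have hwf : WfDvdMonoid O := by
    refine ⟨wellFounded_iff_isEmpty_descending_chain.2 ⟨fun ⟨f, hf'⟩ => ?_⟩⟩
    have hf0 : ∀ n, f (n + 1) ≠ 0 ∧ v (f n) < v (f (n + 1)) := by
      intro n
      obtain ⟨h3, x, hx, h4⟩ := hf' n
      refine ⟨h3, ?_⟩
      have hx1 : v (x : K₁) < 1 := (O.valuation_lt_one_iff x).1 hx
      have h5 : v (f (n + 1) : K₁) ≠ 0 := by
        rw [Valuation.ne_zero_iff]; exact fun h => h3 (Subtype.ext h)
      rw [h4]
      push_cast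
      rw [map_mul]
      calc _ < v (f (n + 1) : K₁) * 1 := (mul_lt_mul_iff_right₀ (zero_lt_iff.2 h5)).2 hx1
        _ = _ := mul_one _
    have hf : ∀ m n, m < n → f n ≠ 0 ∧ v (f m) < v (f n) := by
      intro m n hmn
      refine ⟨?_, strictMono_nat_of_lt_succ (f := fun n => v (f n)) (fun n => (hf0 n).2) hmn⟩
      obtain ⟨n, rfl⟩ : ∃ n', n = n' + 1 := ⟨n - 1, by omega⟩
      exact (hf0 n).1
    have hle : ∀ n, v (f n) < 1 := fun n =>
      lt_of_lt_of_le (hf n (n + 1) (by omega)).2 ((O.valuation_le_one_iff _).2 (f (n + 1)).2)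
    have hex : ∃ m : ℕ, ∃ i : ℕ, 1 ≤ i ∧ v (algebraMap R K₁ π) ^ m ≤ v (f i) := by
      obtain ⟨n, hn⟩ := hpow (f 1) (hf 0 1 (by omega)).1
      exact ⟨n, 1, le_rfl, hn⟩
    classical
    -- for the least such `m`, the chain divided by `πᵐ` has values in `[v π, 1)` from `i` on, so its
    -- members would be infinitely many independent elements of the finite extension `K₁`
    obtain ⟨i, hi1, hi⟩ := Nat.find_spec hex
    rcases hm : Nat.find hex with _ | m
    · rw [hm, pow_zero] at hi
      exact absurd (hle i) (not_lt.2 hi)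
    · rw [hm] at hi
      have hmin : ∀ j, 1 ≤ j → v (f j) < v (algebraMap R K₁ π) ^ m := by
        intro j hj
        by_contra h
        exact Nat.find_min hex (m := m) (by omega) ⟨j, hj, not_lt.1 h⟩
      have hpm : (0 : O.ValueGroup) < (v (algebraMap R K₁ π) ^ m)⁻¹ := by
        rw [inv_pos]; exact zero_lt_iff.2 (pow_ne_zero _ hvπ)
      have hmono : ∀ a b, a ≤ b → v (f (i + a)) ≤ v (f (i + b)) := by
        intro a b hab
        rcases eq_or_lt_of_le hab with rfl | h
        · exact le_rfl
        · exact (hf (i + a) (i + b) (by omega)).2.le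
      have hvd : ∀ n, v ((f (i + n) : K₁) / algebraMap R K₁ π ^ m)
          = v (f (i + n)) * (v (algebraMap R K₁ π) ^ m)⁻¹ := fun n => by
        rw [map_div₀, map_pow, div_eq_mul_inv]
      have hli := linearIndependent_of_valuation hπ hπ0 v h1' h2
        (fun n => (f (i + n) : K₁) / algebraMap R K₁ π ^ m) ?_ ?_ ?_
      · rw [LinearIndependent.iff_fractionRing R K] at hli
        exact not_finite_iff_infinite.2 (inferInstance : Infinite ℕ) hli.finite
      · intro a b hab
        simp only [hvd]
        exact (mul_lt_mul_iff_left₀ hpm).2 (hf _ _ (by omega)).2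
      · intro n
        rw [hvd, le_mul_inv_iff₀ (zero_lt_iff.2 (pow_ne_zero _ hvπ)), ← pow_succ']
        exact hi.trans (by simpa using hmono 0 n (by omega))
      · intro n
        rw [hvd, mul_inv_lt_iff₀ (zero_lt_iff.2 (pow_ne_zero _ hvπ)), one_mul]
        exact hmin _ (by omega)
  have hpir : IsPrincipalIdealRing O := ((IsBezout.TFAE (R := O)).out 3 1).1 hwf
  refine { hpir, (inferInstance : IsLocalRing O) with not_a_field' := ?_ }
  intro h
  have h3 : (⟨_, h1 π⟩ : O) ∈ IsLocalRing.maximalIdeal O := (O.valuation_lt_one_iff _).2 h2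
  rw [h, Ideal.mem_bot] at h3
  exact hπ0 (congrArg Subtype.val h3)

/-! ### Descent from a large valuation ring to a discrete one -/

/-- The finite set of all coefficients of a bivariate polynomial. -/
theorem finite_coeffs {S : Type*} [CommRing S] (H : S[X][X]) :
    (Set.range fun p : ℕ × ℕ => (H.coeff p.1).coeff p.2).Finite := by
  have h : (Set.range fun p : ℕ × ℕ => (H.coeff p.1).coeff p.2) ⊆
      insert 0 (⋃ j ∈ H.support, ((H.coeff j).coeffs : Set S)) := by
    rintro _ ⟨⟨j, i⟩, rfl⟩
    by_cases h0 : (H.coeff j).coeff i = 0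
    · exact Or.inl h0
    · refine Or.inr ?_
      simp only [Set.mem_iUnion]
      refine ⟨j, ?_, coeff_mem_coeffs h0⟩
      rw [mem_support_iff]
      intro h1
      rw [h1, coeff_zero] at h0
      exact h0 rfl
  refine Set.Finite.subset (Set.Finite.insert _ ?_) h
  exact Set.Finite.biUnion (Finset.finite_toSet _) fun j _ => Finset.finite_toSet _

theorem exists_map2_eq {S T : Type*} [CommRing S] [CommRing T] (σ : S →+* T) (H : T[X][X])
    (h : ∀ i j, ∃ s, σ s = (H.coeff j).coeff i) : ∃ G, map2 σ G = H := by
  have h1 : H ∈ lifts (mapRingHom σ) := by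
    rw [lifts_iff_coeff_lifts]
    intro j
    have h2 : H.coeff j ∈ lifts σ := by
      rw [lifts_iff_coeff_lifts]
      exact fun i => h i j
    obtain ⟨q, hq⟩ := (mem_lifts _).1 h2
    exact ⟨q, hq⟩
  obtain ⟨G, hG⟩ := (mem_lifts _).1 h1
  exact ⟨G, hG⟩

theorem map2_smul {S T : Type*} [CommRing S] [CommRing T] (σ : S →+* T) (s : S) (H : S[X][X]) :
    map2 σ (s • H) = σ s • map2 σ H := by
  ext i j; simp [coeff_map2]

/-- The dichotomy of `lattice_theorem` for a valuation ring `V` of an algebraic extension of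
`Frac R` dominating `R_(π)`: the finitely many coefficients involved generate a finite extension,
on which `V` induces a discrete valuation ring. -/
theorem valuation_dichotomy {R L : Type*} (K : Type*) [CommRing R] [IsDomain R]
    [IsPrincipalIdealRing R]
    [Field K] [Algebra R K] [IsFractionRing R K] [Field L] [Algebra K L] [Algebra R L]
    [IsScalarTower R K L] [Algebra.IsAlgebraic K L] {π : R} (hπ : Irreducible π)
    (V : ValuationSubring L) [Algebra R V] [IsScalarTower R V L]
    (h2 : V.valuation (algebraMap R L π) < 1) {P Q S T : V[X][X]} {r : R} (hr : r ≠ 0)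
    (hS : ev P Q S = algebraMap R V r • C X) (hT : ev P Q T = algebraMap R V r • X) :
    (∃ F G : V[X][X], ev P Q F = C X ∧ ev P Q G = X) ∨
    ∃ ϖ ∈ IsLocalRing.maximalIdeal V, ∃ x₁ y₁ α β F G : V[X][X], P = ev (ϖ • x₁) y₁ α ∧
      Q = ev (ϖ • x₁) y₁ β ∧ ev α β F = C X ∧ ev α β G = X := by
  have h1 : ∀ r, algebraMap R L r ∈ V := fun r => by
    rw [IsScalarTower.algebraMap_apply R V L]; exact (algebraMap R V r).2
  let cf : V[X][X] → Set L := fun H =>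
    Set.image (fun v : V => (v : L)) (Set.range fun p : ℕ × ℕ => (H.coeff p.1).coeff p.2)
  let c : Set L := cf P ∪ cf Q ∪ cf S ∪ cf T
  have hcfin : c.Finite := by
    have h : ∀ H, (cf H).Finite := fun H => (finite_coeffs H).image _
    exact (((h P).union (h Q)).union (h S)).union (h T)
  let K₁ : IntermediateField K L := IntermediateField.adjoin K c
  have : Finite c := hcfin
  have hfd : FiniteDimensional K K₁ := IntermediateField.finiteDimensional_adjoin
    fun x _ => (Algebra.IsAlgebraic.isAlgebraic x).isIntegral
  let O : ValuationSubring K₁ := V.comap (algebraMap K₁ L)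
  have hO : ∀ x : K₁, x ∈ O ↔ (x : L) ∈ V := fun x => Iff.rfl
  let : Algebra R K₁ := ((algebraMap K K₁).comp (algebraMap R K)).toAlgebra
  have : IsScalarTower R K K₁ := IsScalarTower.of_algebraMap_eq fun _ => rfl
  have hRK : ∀ r, ((algebraMap R K₁ r : K₁) : L) = algebraMap R L r := fun r => by
    rw [IsScalarTower.algebraMap_apply R K L]; rfl
  have hO1 : ∀ r, algebraMap R K₁ r ∈ O := fun r => by rw [hO, hRK]; exact h1 r
  let σ : O →+* V := ((algebraMap K₁ L).comp O.subtype).codRestrict V.toSubring fun x => x.2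
  have hσv : ∀ x : O, ((σ x : V) : L) = ((x : K₁) : L) := fun x => rfl
  have hσi : Function.Injective σ := by
    intro x y hxy
    have := congrArg (fun v : V => (v : L)) hxy
    exact Subtype.ext (Subtype.ext this)
  have hσm : ∀ x : O, x ∈ IsLocalRing.maximalIdeal O → σ x ∈ IsLocalRing.maximalIdeal V := by
    intro x hx hu
    apply hx
    obtain ⟨u, hu⟩ := hu
    have hne : (x : K₁) ≠ 0 := by
      intro h
      have h3 : x = 0 := Subtype.ext h
      rw [h3, map_zero] at hu
      exact u.ne_zero hu
    have hinv : ((x : K₁)⁻¹) ∈ O := by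
      rw [hO]
      have h3 : ((x : K₁) : L) * ((u⁻¹ : Vˣ) : V) = 1 := by
        rw [← hσv, ← hu]
        exact congrArg (fun v : V => (v : L)) u.mul_inv
      have h4 : (((x : K₁)⁻¹ : K₁) : L) = ((u⁻¹ : Vˣ) : V) := by
        rw [IntermediateField.coe_inv]
        exact inv_eq_of_mul_eq_one_right h3
      rw [h4]; exact (((u⁻¹ : Vˣ) : V)).2
    exact IsUnit.of_mul_eq_one ⟨_, hinv⟩ (Subtype.ext (mul_inv_cancel₀ hne))
  have hOπ : O.valuation (algebraMap R K₁ π) < 1 := by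
    have h3 : (⟨_, hO1 π⟩ : O) ∈ IsLocalRing.maximalIdeal O := by
      by_contra hcon
      have hu : IsUnit (⟨_, hO1 π⟩ : O) := by simpa using hcon
      have hu2 : IsUnit (⟨_, h1 π⟩ : V) := by
        have := hu.map σ
        convert this using 1
        exact Subtype.ext (hRK π).symm
      exact (V.valuation_lt_one_iff ⟨_, h1 π⟩).2 h2 hu2
    exact (O.valuation_lt_one_iff _).1 h3
  have hdvr : IsDiscreteValuationRing O := dvr_of_finite (K := K) hπ O hO1 hOπ
  have hlift : ∀ H, cf H ⊆ c → ∃ G, map2 σ G = H := by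
    intro H hH
    apply exists_map2_eq
    intro i j
    have h3 : (((H.coeff j).coeff i : V) : L) ∈ K₁ :=
      IntermediateField.subset_adjoin _ _ (hH ⟨_, ⟨(j, i), rfl⟩, rfl⟩)
    exact ⟨⟨⟨_, h3⟩, ((H.coeff j).coeff i).2⟩, rfl⟩
  obtain ⟨P', hP'⟩ := hlift P fun x hx => Or.inl (Or.inl (Or.inl hx))
  obtain ⟨Q', hQ'⟩ := hlift Q fun x hx => Or.inl (Or.inl (Or.inr hx))
  obtain ⟨S', hS'⟩ := hlift S fun x hx => Or.inl (Or.inr hx)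
  obtain ⟨T', hT'⟩ := hlift T fun x hx => Or.inr hx
  have hσr : σ ⟨_, hO1 r⟩ = algebraMap R V r := by
    apply Subtype.ext
    rw [hσv]
    change ((algebraMap R K₁ r : K₁) : L) = algebraMap V L (algebraMap R V r)
    rw [hRK, ← IsScalarTower.algebraMap_apply]
  have hS2 : ev P' Q' S' = (⟨_, hO1 r⟩ : O) • C X := by
    apply map2_injective hσi
    rw [map2_ev, hP', hQ', hS', hS, map2_smul, hσr]; simp
  have hT2 : ev P' Q' T' = (⟨_, hO1 r⟩ : O) • X := by
    apply map2_injective hσi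
    rw [map2_ev, hP', hQ', hT', hT, map2_smul, hσr]; simp
  have hrne : (algebraMap O K₁ ⟨_, hO1 r⟩) ≠ 0 := by
    intro h
    have h3 : algebraMap R K₁ r = 0 := h
    have h4 := hRK r
    rw [h3, IsScalarTower.algebraMap_apply R K L] at h4
    have h5 : algebraMap R K r = 0 := (algebraMap K L).injective (by rw [← h4, map_zero]; rfl)
    exact hr (IsFractionRing.injective R K (by rw [h5, map_zero]))
  have hcoord : Coord (map2 (algebraMap O K₁) P') (map2 (algebraMap O K₁) Q') := by
    have key : ∀ W Z : O[X][X], ev P' Q' W = (⟨_, hO1 r⟩ : O) • Z →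
        map2 (algebraMap O K₁) Z ∈ Algebra.adjoin K₁
          {map2 (algebraMap O K₁) P', map2 (algebraMap O K₁) Q'} := by
      intro W Z h
      have h3 := congrArg (map2 (algebraMap O K₁)) h
      rw [map2_ev, map2_smul] at h3
      have h4 := (eq_inv_smul_iff₀ hrne).2 h3.symm
      rw [h4]
      exact Subalgebra.smul_mem _ (mem_adjoin_pair.2 ⟨_, rfl⟩) _
    have hx := key _ _ hS2
    have hy := key _ _ hT2
    rw [map2_C, Polynomial.map_X] at hx
    rw [map2_X] at hy
    rw [Coord, eq_top_iff]
    intro H _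
    rw [← ev_self H]
    exact Algebra.adjoin_le (S := Algebra.adjoin K₁ _) (by rintro _ (rfl | rfl) <;> assumption)
      (mem_adjoin_pair.2 ⟨H, rfl⟩)
  obtain ⟨ϖ, hϖ⟩ := IsDiscreteValuationRing.exists_irreducible O
  have push : ∀ {x y H Z : O[X][X]}, ev x y H = Z →
      ev (map2 σ x) (map2 σ y) (map2 σ H) = map2 σ Z := by
    intro x y H Z h
    rw [← h, map2_ev]
  rcases lattice_theorem K₁ hϖ hcoord with h | ⟨x₁, y₁, α, β, F, G, h3, h4, h5, h6⟩
  · left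
    obtain ⟨F, hF⟩ := mem_adjoin_pair.1 (show C X ∈ Algebra.adjoin O {P', Q'} by
      rw [h]; exact Algebra.mem_top)
    obtain ⟨G, hG⟩ := mem_adjoin_pair.1 (show X ∈ Algebra.adjoin O {P', Q'} by
      rw [h]; exact Algebra.mem_top)
    refine ⟨map2 σ F, map2 σ G, ?_, ?_⟩
    · rw [← hP', ← hQ', push hF]; simp
    · rw [← hP', ← hQ', push hG]; simp
  · right
    refine ⟨σ ϖ, hσm _ ((IsLocalRing.mem_maximalIdeal _).2 hϖ.not_isUnit), map2 σ x₁, map2 σ y₁,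
      map2 σ α, map2 σ β, map2 σ F, map2 σ G, ?_, ?_, ?_, ?_⟩
    · rw [← map2_smul, push h3.symm, hP']
    · rw [← map2_smul, push h4.symm, hQ']
    · rw [push h5]; simp
    · rw [push h6]; simp

/-! ### Reduction of a special fibre over the ground residue field -/

/-- `Red u w` says that finitely many steps `u ↦ u - c wⁿ`, `w ↦ w - c uⁿ` with `c ∈ k`, `n > 0`
turn one of the polynomials `u, w ∈ k[s, t]` into a constant. -/
inductive Red {k : Type*} [Field k] : k[X][X] → k[X][X] → Prop
  | left (c : k) (w : k[X][X]) : Red (C (C c)) w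
  | right (u : k[X][X]) (c : k) : Red u (C (C c))
  | subLeft (u w : k[X][X]) (c : k) (n : ℕ) : 0 < n → Red (u - C (C c) * w ^ n) w → Red u w
  | subRight (u w : k[X][X]) (c : k) (n : ℕ) : 0 < n → Red u (w - C (C c) * u ^ n) → Red u w

theorem Red.swap {k : Type*} [Field k] {u w : k[X][X]} (h : Red u w) : Red w u := by
  induction h with
  | left c w => exact .right _ _
  | right u c => exact .left _ _
  | subLeft u w c n hn _ ih => exact .subRight _ _ c n hn ih
  | subRight u w c n hn _ ih => exact .subLeft _ _ c n hn ih

section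

variable {k κ : Type*} [Field k] [Field κ] (σ : k →+* κ)

theorem const_of_map2 {u : k[X][X]} {c : κ} (h : map2 σ u = C (C c)) :
    ∃ d : k, u = C (C d) := by
  refine ⟨(u.coeff 0).coeff 0, ?_⟩
  ext j i
  have h1 := congrArg (fun H => (H.coeff j).coeff i) h
  simp only [coeff_map2] at h1
  rw [coeff_C] at h1 ⊢
  split_ifs at h1 ⊢ with hj
  · rw [coeff_C] at h1 ⊢
    split_ifs at h1 ⊢ with hi
    · rw [hi, hj]
    · exact σ.injective (by rw [h1, map_zero])
  · rw [coeff_zero] at h1 ⊢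
    exact σ.injective (by rw [h1, map_zero])

/-- The iterated leading coefficient of a bivariate polynomial. -/
noncomputable def lc2 {S : Type*} [CommRing S] (H : S[X][X]) : S := H.leadingCoeff.leadingCoeff

theorem lc2_map2 (u : k[X][X]) : lc2 (map2 σ u) = σ (lc2 u) := by
  rw [lc2, lc2, map2, coe_mapRingHom, leadingCoeff_map_of_injective
    (Polynomial.map_injective σ σ.injective), coe_mapRingHom, leadingCoeff_map]

theorem lc2_aeval {G : κ[X][X]} (hG : ∀ c, G ≠ C (C c)) (p : κ[X]) :
    lc2 (aeval G p) = p.leadingCoeff * lc2 G ^ p.natDegree := by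
  by_cases hd : G.natDegree = 0
  · obtain ⟨g, rfl⟩ : ∃ g, G = C g := ⟨_, eq_C_of_natDegree_eq_zero hd⟩
    have hg : g.natDegree ≠ 0 := by
      intro h
      exact hG (g.coeff 0) (by rw [← eq_C_of_natDegree_eq_zero h])
    have h1 : aeval (C g) p = C (p.comp g) := by
      have h2 := aeval_algHom_apply (CAlgHom (R := κ) (A := κ[X])) g p
      have h3 : aeval g p = p.comp g := rfl
      rw [h3] at h2
      exact h2
    rw [h1, lc2, lc2, leadingCoeff_C, leadingCoeff_C, leadingCoeff_comp hg]
  · have h1 : aeval G p = (p.map (algebraMap κ κ[X])).comp G := by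
      rw [comp, eval₂_map, aeval_def]; rfl
    rw [h1, lc2, leadingCoeff_comp hd, leadingCoeff_map, natDegree_map, leadingCoeff_mul,
      leadingCoeff_pow, lc2]
    simp

theorem ev_zero_left (G H : κ[X][X]) : ev (0 : κ[X][X]) G H = aeval G (H.map (evalRingHom 0)) := by
  rw [ev_apply, aeval_def, eval₂_map]
  congr 1
  ext <;> simp

/-- If `(α, β)` are coordinates of `κ[x, y]` and the polynomials `u, w` over the smaller field `k`
are obtained by restricting `(α, β)` to the line `x = 0` and substituting `G` for its parameter,
then the reduction of `(α, β)` by elementary steps induces one of `(u, w)` that is defined over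
`k`: the constants are quotients of leading coefficients of `u` and `w`. -/
theorem red_of_line {G : κ[X][X]} (N : ℕ) : ∀ {α β : κ[X][X]} {u w : k[X][X]},
    α.natDegree + β.natDegree ≤ N → Algebra.adjoin κ {α, β} = ⊤ →
    map2 σ u = ev 0 G α → map2 σ w = ev 0 G β → Red u w := by
  induction N with
  | zero =>
    intro α β u w hN h hu hw
    obtain ⟨a, rfl⟩ : ∃ a, α = C a := ⟨_, eq_C_of_natDegree_eq_zero (by omega)⟩
    rw [ev_zero_left, map_C, aeval_C] at hu
    obtain ⟨d, rfl⟩ := const_of_map2 σ hu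
    exact .left _ _
  | succ N ih =>
    have key : ∀ {α β : κ[X][X]} {u w : k[X][X]} (n : ℕ) (c : κ),
        α.natDegree + β.natDegree ≤ N + 1 → Algebra.adjoin κ {α, β} = ⊤ →
        map2 σ u = ev 0 G α → map2 σ w = ev 0 G β → (∀ c, G ≠ C (C c)) → 0 < α.natDegree →
        0 < β.natDegree → 0 < n → β.natDegree = n * α.natDegree →
        (β - c • α ^ n).natDegree < β.natDegree → Red u w := by
      intro α β u w n c hN h hu hw hG hα hβ hn hdeg hlt
      -- the leading coefficients of `α, β` are constants, so they survive the restriction to the line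
      -- `x = 0`, and `c` is the quotient `lc2 w / lc2 u ^ n`, which lies in `k`
      obtain ⟨a, ha, hla⟩ := leadingCoeff_const h hα
      have hlb : β.leadingCoeff = C c * α.leadingCoeff ^ n := leadingCoeff_of_sub hlt hdeg
      have hmap : ∀ (H : κ[X][X]) (b : κ), H.leadingCoeff = C b → b ≠ 0 →
          (H.map (evalRingHom 0)).natDegree = H.natDegree ∧
          (H.map (evalRingHom 0)).leadingCoeff = b := by
        intro H b hb hb0
        have h1 : (evalRingHom (0 : κ)) H.leadingCoeff ≠ 0 := by rw [hb]; simpa using hb0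
        exact ⟨natDegree_map_of_leadingCoeff_ne_zero _ h1, by
          rw [leadingCoeff_map_of_leadingCoeff_ne_zero _ h1, hb]; simp⟩
      have hlb' : β.leadingCoeff = C (c * a ^ n) := by rw [hlb, hla]; simp
      have hc0 : c ≠ 0 := by
        rintro rfl
        rw [zero_smul, sub_zero] at hlt
        exact lt_irrefl _ hlt
      have h1 := hmap α a hla ha
      have h2 := hmap β _ hlb' (mul_ne_zero hc0 (pow_ne_zero _ ha))
      have h3 : σ (lc2 u) = a * lc2 G ^ α.natDegree := by
        rw [← lc2_map2, hu, ev_zero_left, lc2_aeval hG, h1.1, h1.2]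
      have h4 : σ (lc2 w) = c * a ^ n * lc2 G ^ β.natDegree := by
        rw [← lc2_map2, hw, ev_zero_left, lc2_aeval hG, h2.1, h2.2]
      have hG0 : lc2 G ≠ 0 := by
        intro h0
        rw [lc2, leadingCoeff_eq_zero, leadingCoeff_eq_zero] at h0
        exact hG 0 (by simpa using h0)
      have h5 : σ (lc2 w / lc2 u ^ n) = c := by
        rw [map_div₀, map_pow, h3, h4, hdeg]
        field_simp
        ring
      refine .subRight u w (lc2 w / lc2 u ^ n) n hn (ih (α := α) (β := β - c • α ^ n) ?_ ?_ hu ?_)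
      · omega
      · rw [adjoin_sub_smul_pow]; exact h
      · rw [map_sub, map_mul, map_pow, map2_C, Polynomial.map_C, h5, hu, hw, map_sub, map_smul,
          map_pow, Algebra.smul_def]
        rfl
    intro α β u w hN h hu hw
    by_cases hα : α.natDegree = 0
    · obtain ⟨a, rfl⟩ : ∃ a, α = C a := ⟨_, eq_C_of_natDegree_eq_zero hα⟩
      rw [ev_zero_left, map_C, aeval_C] at hu
      obtain ⟨d, rfl⟩ := const_of_map2 σ hu
      exact .left _ _
    by_cases hβ : β.natDegree = 0
    · obtain ⟨a, rfl⟩ : ∃ a, β = C a := ⟨_, eq_C_of_natDegree_eq_zero hβ⟩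
      rw [ev_zero_left, map_C, aeval_C] at hw
      obtain ⟨d, rfl⟩ := const_of_map2 σ hw
      exact .right _ _
    by_cases hG : ∃ c, G = C (C c)
    · obtain ⟨c, rfl⟩ := hG
      have h1 : aeval (C (C c)) (α.map (evalRingHom 0))
          = C (C (eval c (α.map (evalRingHom 0)))) :=
        Polynomial.aeval_algebraMap_apply_eq_algebraMap_eval c (α.map (evalRingHom (0 : κ)))
      rw [ev_zero_left, h1] at hu
      obtain ⟨d, rfl⟩ := const_of_map2 σ hu
      exact .left _ _
    push Not at hG
    obtain ⟨n, c, hn, hc, ⟨h1, h2⟩ | ⟨h1, h2⟩⟩ := vdk_step h (by omega) (by omega)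
    · exact key n c hN h hu hw hG (by omega) (by omega) hn h1 h2
    · exact (key n c (by omega) (by rwa [Set.pair_comm]) hw hu hG (by omega) (by omega) hn h1
        h2).swap

end

/-! ### Improving a generic coordinate pair at a bad prime -/

/-- `X, Y ∈ A` generate `A` after tensoring with the fraction field of `R`. -/
def GenCoord (R : Type*) {A : Type*} [CommRing R] [CommRing A] [Algebra R A] (X Y : A) : Prop :=
  ∀ a : A, ∃ r : R, r ≠ 0 ∧ r • a ∈ Algebra.adjoin R {X, Y}

theorem GenCoord.mono {R A : Type*} [CommRing R] [CommRing A] [Algebra R A] {X Y X' Y' : A}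
    (h : GenCoord R X Y) (hX : X ∈ Algebra.adjoin R {X', Y'}) (hY : Y ∈ Algebra.adjoin R {X', Y'}) :
    GenCoord R X' Y' := by
  intro a
  obtain ⟨r, hr, hra⟩ := h a
  exact ⟨r, hr, Algebra.adjoin_le (by rintro _ (rfl | rfl) <;> assumption) hra⟩

section Lift

variable {R A k : Type*} [CommRing R] [CommRing A] [Algebra R A] [Field k]

theorem biderivation_swap {D : A →ₗ[R] Derivation R A A} (hD : ∀ a, D a a = 0) (a b : A) :
    D a b = - D b a := by
  have h := hD (a + b)
  simp only [map_add, Derivation.add_apply, hD, zero_add, add_zero] at h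
  exact eq_neg_of_add_eq_zero_right h

theorem biderivation_pow {D : A →ₗ[R] Derivation R A A} (hD : ∀ a, D a a = 0) (a b : A) (c : R)
    (n : ℕ) : D a (b - c • a ^ n) = D a b := by
  rw [map_sub, Derivation.map_smul, Derivation.leibniz_pow, hD]
  simp

/-- Lifts a reduction of the special fibre at `π` to `A`: in its course one of the two elements
becomes congruent to a constant `l ∈ R` modulo `π`, and is replaced by its difference quotient.
The value of an alternating biderivation on the pair gets divided by `π`. -/
theorem lift_red {D : A →ₗ[R] Derivation R A A} (hD : ∀ a, D a a = 0) {π : R}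
    {τ : R →+* k} (hτ : Function.Surjective τ) {q : A →+* k[X][X]}
    (hq : ∀ r, q (algebraMap R A r) = C (C (τ r))) (hker : ∀ a, q a = 0 → ∃ b, a = π • b)
    {u w : k[X][X]} (h : Red u w) : ∀ X Y : A, q X = u → q Y = w → GenCoord R X Y →
      ∃ X₁ Y₁, GenCoord R X₁ Y₁ ∧ D X Y = π • D X₁ Y₁ := by
  have hl : ∀ X Y : A, ∀ c : k, q X = C (C c) → GenCoord R X Y →
      ∃ X₁, GenCoord R X₁ Y ∧ ∀ b, D X b = π • D X₁ b := by
    intro X Y c hX hG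
    obtain ⟨l, rfl⟩ := hτ c
    obtain ⟨X₁, hX₁⟩ := hker (X - algebraMap R A l) (by rw [map_sub, hq, hX, sub_self])
    have hX2 : X = algebraMap R A l + π • X₁ := by rw [← hX₁]; ring
    refine ⟨X₁, hG.mono ?_ (Algebra.subset_adjoin (by simp)), fun b => ?_⟩
    · rw [hX2]
      exact add_mem (Subalgebra.algebraMap_mem _ _)
        (Subalgebra.smul_mem _ (Algebra.subset_adjoin (by simp)) _)
    · rw [biderivation_swap hD, hX2, map_add, Derivation.map_algebraMap, zero_add,
        Derivation.map_smul, biderivation_swap hD b X₁, smul_neg, neg_neg]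
  induction h with
  | left c w =>
    intro X Y hX _ hG
    obtain ⟨X₁, h1, h2⟩ := hl X Y c hX hG
    exact ⟨X₁, Y, h1, h2 Y⟩
  | right u c =>
    intro X Y _ hY hG
    obtain ⟨Y₁, h1, h2⟩ := hl Y X c hY (by rw [GenCoord, Set.pair_comm]; exact hG)
    refine ⟨X, Y₁, by rw [GenCoord, Set.pair_comm]; exact h1, ?_⟩
    rw [biderivation_swap hD, h2, biderivation_swap hD X Y₁, smul_neg]
  | subLeft u w c n hn _ ih =>
    intro X Y hX hY hG
    obtain ⟨c, rfl⟩ := hτ c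
    obtain ⟨X₁, Y₁, h1, h2⟩ := ih (X - c • Y ^ n) Y
      (by rw [Algebra.smul_def, map_sub, map_mul, map_pow, hq, hX, hY]) hY
      (by rw [GenCoord, Set.pair_comm, adjoin_sub_smul_pow, Set.pair_comm]; exact hG)
    refine ⟨X₁, Y₁, h1, ?_⟩
    rw [← h2, biderivation_swap hD, biderivation_swap hD _ Y, biderivation_pow hD]
  | subRight u w c n hn _ ih =>
    intro X Y hX hY hG
    obtain ⟨c, rfl⟩ := hτ c
    obtain ⟨X₁, Y₁, h1, h2⟩ := ih X (Y - c • X ^ n) hX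
      (by rw [Algebra.smul_def, map_sub, map_mul, map_pow, hq, hX, hY])
      (by rw [GenCoord, adjoin_sub_smul_pow]; exact hG)
    refine ⟨X₁, Y₁, h1, ?_⟩
    rw [← h2, biderivation_pow hD]

end Lift

/-- The conclusion of `valuation_dichotomy` as a property of a local `R`-algebra `W`. -/
def Dichotomy (R W : Type*) [CommRing R] [CommRing W] [IsLocalRing W] [Algebra R W] : Prop :=
  ∀ (P Q S T : W[X][X]) (r : R), r ≠ 0 → ev P Q S = algebraMap R W r • C X →
    ev P Q T = algebraMap R W r • X →
    (∃ F G : W[X][X], ev P Q F = C X ∧ ev P Q G = X) ∨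
    ∃ ϖ ∈ IsLocalRing.maximalIdeal W, ∃ x₁ y₁ α β F G : W[X][X], P = ev (ϖ • x₁) y₁ α ∧
      Q = ev (ϖ • x₁) y₁ β ∧ ev α β F = C X ∧ ev α β G = X

/-- If the subalgebra `R[P, Q]` is not `π`-saturated in `A`, then the pair `(P, Q)` can be improved
at `π`. Here `e` trivializes `A` over a local ring `V` dominating `R_(π)`, the map `q` is a
trivialization of the fibre of `A` at `π`, and `ρ` compares the two over the residue field of
`V`. -/
theorem step {R A k V : Type*} [CommRing R] [IsDomain R] {π : R}
    [CommRing V] [IsDomain V] [IsLocalRing V] [Algebra R V]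
    (h2 : ∀ r, algebraMap R V r ∈ IsLocalRing.maximalIdeal V ↔ π ∣ r) (hdich : Dichotomy R V)
    [CommRing A] [Algebra R A] (e : A →ₐ[R] V[X][X])
    (hspan : ∀ H, H ∈ Submodule.span V (Set.range e)) [Field k]
    {τ : R →+* k} (hτ : Function.Surjective τ) (hτ0 : ∀ r, τ r = 0 ↔ π ∣ r) {q : A →+* k[X][X]}
    (hq : ∀ r, q (algebraMap R A r) = C (C (τ r))) (hker : ∀ a, q a = 0 → ∃ b, a = π • b)
    (σ : k →+* IsLocalRing.ResidueField V)
    (ρ : V[X][X] →+* (IsLocalRing.ResidueField V)[X][X])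
    (hρ : ∀ v, ρ (C (C v)) = C (C (IsLocalRing.residue V v)))
    (hρe : ∀ a, ρ (e a) = map2 σ (q a))
    {D : A →ₗ[R] Derivation R A A} (hD : ∀ a, D a a = 0) {P Q : A} (hG : GenCoord R P Q)
    {l : R[X][X]} {a' : A} (hl : ev P Q l = π • a') (hl' : ¬ ∃ m, l = π • m) :
    ∃ P₁ Q₁, GenCoord R P₁ Q₁ ∧ D P Q = π • D P₁ Q₁ := by
  let L := FractionRing V
  have hgen : ∀ H : V[X][X], ∃ r : R, r ≠ 0 ∧
      algebraMap R V r • H ∈ Algebra.adjoin V {e P, e Q} := by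
    intro H
    induction hspan H using Submodule.span_induction with
    | mem x hx =>
      obtain ⟨a, rfl⟩ := hx
      obtain ⟨r, hr, hra⟩ := hG a
      refine ⟨r, hr, ?_⟩
      obtain ⟨m, hm⟩ := mem_adjoin_pair.1 hra
      rw [algebraMap_smul, ← map_smul, ← hm, map_ev, ← ev_map2 (T := V)]
      exact mem_adjoin_pair.2 ⟨_, rfl⟩
    | zero => exact ⟨1, one_ne_zero, by rw [smul_zero]; exact zero_mem _⟩
    | add x y _ _ hx hy =>
      obtain ⟨r, hr, hx⟩ := hx
      obtain ⟨s, hs, hy⟩ := hy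
      refine ⟨r * s, mul_ne_zero hr hs, ?_⟩
      rw [smul_add]
      refine add_mem ?_ ?_
      · rw [mul_comm, map_mul, mul_smul]; exact Subalgebra.smul_mem _ hx _
      · rw [map_mul, mul_smul]; exact Subalgebra.smul_mem _ hy _
    | smul v x _ hx =>
      obtain ⟨r, hr, hx⟩ := hx
      exact ⟨r, hr, by rw [smul_comm]; exact Subalgebra.smul_mem _ hx _⟩
  obtain ⟨r, hr, hrX⟩ := hgen (C X)
  obtain ⟨s, hs, hsX⟩ := hgen X
  obtain ⟨S, hS⟩ := mem_adjoin_pair.1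
    (show algebraMap R V (r * s) • C X ∈ Algebra.adjoin V {e P, e Q} by
      rw [mul_comm, map_mul, mul_smul]; exact Subalgebra.smul_mem _ hrX _)
  obtain ⟨T, hT⟩ := mem_adjoin_pair.1
    (show algebraMap R V (r * s) • X ∈ Algebra.adjoin V {e P, e Q} by
      rw [map_mul, mul_smul]; exact Subalgebra.smul_mem _ hsX _)
  rcases hdich _ _ _ _ _ (mul_ne_zero hr hs) hS hT with
    ⟨F, G, hF, hG'⟩ | ⟨ϖ, hϖ, x₁, y₁, α, β, F, G, hP, hQ, hF, hG'⟩
  · exfalso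
    -- the pair generates over `V`, so `V[P, Q]` is saturated and `π` divides `l`
    apply hl'
    have hinv : ∀ H : V[X][X], ev (e P) (e Q) (ev F G H) = H := fun H => by
      rw [ev_ev, hF, hG', ev_self]
    have hcoord : Coord (map2 (algebraMap V L) (e P)) (map2 (algebraMap V L) (e Q)) := by
      rw [Coord, eq_top_iff]
      intro H _
      have hx : ev (map2 (algebraMap V L) (e P)) (map2 (algebraMap V L) (e Q))
          (map2 (algebraMap V L) F) = (C X : L[X][X]) := by rw [← map2_ev, hF]; simp
      have hy : ev (map2 (algebraMap V L) (e P)) (map2 (algebraMap V L) (e Q))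
          (map2 (algebraMap V L) G) = (X : L[X][X]) := by rw [← map2_ev, hG']; simp
      refine mem_adjoin_pair.2 ⟨ev (map2 (algebraMap V L) F) (map2 (algebraMap V L) G) H, ?_⟩
      rw [ev_ev, hx, hy, ev_self]
    have hinj : Function.Injective (ev (e P) (e Q) : V[X][X] →ₐ[V] V[X][X]) := by
      intro H H' hHH
      apply map2_injective (IsFractionRing.injective V L)
      apply hcoord.injective
      rw [← map2_ev, ← map2_ev, hHH]
    have h3 : map2 (algebraMap R V) l = algebraMap R V π • ev F G (e a') := by
      apply hinj
      rw [ev_map2, ← map_ev, hl, map_smul, map_smul, hinv, algebraMap_smul]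
    apply (map2_eq_zero_iff τ π hτ0 l).1
    ext j i
    rw [coeff_map2, coeff_zero, coeff_zero, hτ0]
    rw [← h2]
    have h5 := congrArg (fun H => (H.coeff j).coeff i) h3
    simp only [coeff_map2, coeff_smul, smul_eq_mul] at h5
    rw [h5]
    exact Ideal.mul_mem_right _ _ ((h2 π).2 dvd_rfl)
  · have hϖ0 : ρ (ϖ • x₁) = 0 := by
      rw [Algebra.smul_def, map_mul]
      have h3 : algebraMap V V[X][X] ϖ = C (C ϖ) := rfl
      rw [h3, hρ, (IsLocalRing.residue_eq_zero_iff ϖ).2 hϖ]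
      simp
    have hres : ∀ H : V[X][X], ρ (ev (ϖ • x₁) y₁ H)
        = ev 0 (ρ y₁) (map2 (IsLocalRing.residue V) H) := fun H => by
      rw [ringHom_ev (IsLocalRing.residue V) ρ hρ, hϖ0]
    have htop : Algebra.adjoin (IsLocalRing.ResidueField V)
        {map2 (IsLocalRing.residue V) α, map2 (IsLocalRing.residue V) β} = ⊤ := by
      rw [eq_top_iff]
      intro H _
      refine mem_adjoin_pair.2 ⟨ev (map2 (IsLocalRing.residue V) F)
        (map2 (IsLocalRing.residue V) G) H, ?_⟩
      rw [ev_ev, ← map2_ev, ← map2_ev, hF, hG']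
      simp [ev_self]
    have hred : Red (q P) (q Q) := red_of_line σ _ le_rfl htop
      (by rw [← hρe, hP, hres]) (by rw [← hρe, hQ, hres])
    exact lift_red hD hτ hq hker hred P Q rfl rfl hG

/-! ### Termination -/

/-- Improving a generic coordinate pair prime by prime stops, because each improvement removes a
prime factor from the value `r ∈ R` of the biderivation; and a pair which cannot be improved
generates. -/
theorem exists_generators {R A : Type*} [CommRing R] [IsDomain R] [IsPrincipalIdealRing R]
    [CommRing A] [Algebra R A] (htf : ∀ (r : R) (a b : A), r ≠ 0 → r • a = r • b → a = b)
    (hsat : ∀ (π r : R) (a : A), Irreducible π → algebraMap R A r = π • a → π ∣ r)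
    (D : A →ₗ[R] Derivation R A A)
    (hstep : ∀ (π : R) (P Q : A) (l : R[X][X]) (a : A), Irreducible π → GenCoord R P Q →
      ev P Q l = π • a → (¬ ∃ m, l = π • m) → ∃ P₁ Q₁, GenCoord R P₁ Q₁ ∧ D P Q = π • D P₁ Q₁)
    (r : R) : r ≠ 0 → ∀ P Q : A, GenCoord R P Q → D P Q = algebraMap R A r →
      ∃ P Q : A, Algebra.adjoin R {P, Q} = ⊤ := by
  induction r using (IsWellFounded.wf : WellFounded (DvdNotUnit (α := R))).induction with
  | _ r ih =>
  intro hr P Q hG hD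
  by_cases hbad : ∃ (π : R) (l : R[X][X]) (a : A), Irreducible π ∧ ev P Q l = π • a ∧
      ¬ ∃ m, l = π • m
  · obtain ⟨π, l, a, hπ, hl, hl'⟩ := hbad
    obtain ⟨P₁, Q₁, hG₁, hD₁⟩ := hstep π P Q l a hπ hG hl hl'
    rw [hD] at hD₁
    obtain ⟨s, rfl⟩ := hsat π r _ hπ hD₁
    have hs : s ≠ 0 := right_ne_zero_of_mul hr
    refine ih s ⟨hs, π, hπ.not_isUnit, mul_comm _ _⟩ hs P₁ Q₁ hG₁ ?_
    apply htf π _ _ hπ.ne_zero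
    rw [← hD₁, map_mul, Algebra.smul_def]
  · push Not at hbad
    refine ⟨P, Q, eq_top_iff.2 fun a _ => ?_⟩
    obtain ⟨s, hs, hsa⟩ := hG a
    -- the denominator `s` is removed one prime factor at a time
    clear hD
    induction s using WfDvdMonoid.induction_on_irreducible with
    | zero => exact absurd rfl hs
    | unit u hu =>
      obtain ⟨u, rfl⟩ := hu
      have := Subalgebra.smul_mem _ hsa ((u⁻¹ : Rˣ) : R)
      rwa [smul_smul, Units.inv_mul, one_smul] at this
    | mul s π hs0 hπ ih2 =>
      apply ih2 hs0
      obtain ⟨l, hl⟩ := mem_adjoin_pair.1 hsa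
      rw [mul_smul] at hl
      obtain ⟨m, rfl⟩ := hbad π l _ hπ hl
      rw [map_smul] at hl
      exact mem_adjoin_pair.2 ⟨m, htf π _ _ hπ.ne_zero hl⟩

/-! ### The Jacobian biderivation -/

section Jacobian

variable (K : Type*) [Field K]

/-- Exchange of the two variables. -/
noncomputable def swapVars : K[X][X] →ₐ[K] K[X][X] := ev X (C X)

theorem swapVars_swapVars (H : K[X][X]) : swapVars K (swapVars K H) = H := by
  rw [swapVars, ev_ev]; simp [ev_self]

/-- Partial derivative with respect to the outer variable. -/
noncomputable def dOuter : Derivation K K[X][X] K[X][X] :=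
  Derivation.mk' (derivative.restrictScalars K) fun a b => by
    simp [derivative_mul]; ring

/-- Partial derivative with respect to the inner variable. -/
noncomputable def dInner : Derivation K K[X][X] K[X][X] :=
  Derivation.mk' ((swapVars K).toLinearMap ∘ₗ (derivative.restrictScalars K) ∘ₗ
    (swapVars K).toLinearMap) fun a b => by
    simp [derivative_mul, swapVars_swapVars]; ring

/-- The Jacobian determinant `(f, g) ↦ ∂(f, g)/∂(x, y)`. -/
noncomputable def jac : K[X][X] →ₗ[K] Derivation K K[X][X] K[X][X] where
  toFun f := dInner K f • dOuter K - dOuter K f • dInner K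
  map_add' f g := Derivation.ext fun h => by simp; ring
  map_smul' c f := Derivation.ext fun h => by simp [smul_sub]

theorem jac_self (f : K[X][X]) : jac K f f = 0 := by simp [jac, mul_comm]

theorem jac_std : jac K (C X) X = 1 := by
  simp [jac, dInner, dOuter, swapVars]

end Jacobian

/-- A multiple of the Jacobian determinant restricts to a biderivation of any `R`-lattice of
finite type in `K[x, y]`. -/
theorem exists_biderivation {R A K : Type*} [CommRing R] [IsDomain R] [Field K] [Algebra R K]
    [CommRing A] [Algebra R A] [Algebra.FiniteType R A] (i : A →ₐ[R] K[X][X])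
    (hi : Function.Injective i)
    (hden : ∀ H, ∃ r : R, r ≠ 0 ∧ ∃ a, i a = r • H) :
    ∃ (s : R) (D : A →ₗ[R] Derivation R A A), s ≠ 0 ∧ (∀ a, D a a = 0) ∧
      ∀ a b, i (D a b) = s • jac K (i a) (i b) := by
  classical
  obtain ⟨S, hS⟩ := (inferInstance : Algebra.FiniteType R A).out
  choose d hd0 hd using hden
  let J : A × A → K[X][X] := fun p => jac K (i p.1) (i p.2)
  obtain ⟨s, hs⟩ : ∃ s, s = ∏ p ∈ S ×ˢ S, d (J p) := ⟨_, rfl⟩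
  have hs0 : s ≠ 0 := by rw [hs]; exact Finset.prod_ne_zero_iff.2 fun p _ => hd0 _
  have hbase : ∀ a ∈ S, ∀ b ∈ S, ∃ c, i c = s • jac K (i a) (i b) := by
    intro a ha b hb
    obtain ⟨t, ht⟩ := Finset.dvd_prod_of_mem (fun p => d (J p)) (Finset.mk_mem_product ha hb)
    rw [← hs] at ht
    obtain ⟨c, hc⟩ := hd (J (a, b))
    exact ⟨t • c, by rw [map_smul, hc, ht, smul_smul, mul_comm t]⟩
  have hjs : ∀ f g, jac K f g = - jac K g f := by
    intro f g
    simp [jac]; ring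
  have hjalg : ∀ (f : K[X][X]) (r : R), jac K f (i (algebraMap R A r)) = 0 := by
    intro f r
    rw [AlgHom.commutes, IsScalarTower.algebraMap_apply R K K[X][X], Derivation.map_algebraMap]
  have hgen : ∀ f : K[X][X], (∀ b ∈ S, ∃ c, i c = s • jac K f (i b)) →
      ∀ b, ∃ c, i c = s • jac K f (i b) := by
    intro f hf b
    have hb : b ∈ Algebra.adjoin R (S : Set A) := by rw [hS]; exact Algebra.mem_top
    induction hb using Algebra.adjoin_induction with
    | mem x hx => exact hf x hx
    | algebraMap r => exact ⟨0, by rw [hjalg, smul_zero, map_zero]⟩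
    | add x y _ _ hx hy =>
      obtain ⟨c, hc⟩ := hx
      obtain ⟨c', hc'⟩ := hy
      exact ⟨c + c', by rw [map_add, map_add, map_add, smul_add, hc, hc']⟩
    | mul x y _ _ hx hy =>
      obtain ⟨c, hc⟩ := hx
      obtain ⟨c', hc'⟩ := hy
      refine ⟨x * c' + y * c, ?_⟩
      rw [map_add, map_mul, map_mul, map_mul, hc, hc', Derivation.leibniz, smul_add,
        smul_eq_mul, smul_eq_mul, mul_smul_comm, mul_smul_comm]
  have hall : ∀ a b, ∃ c, i c = s • jac K (i a) (i b) := by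
    intro a
    apply hgen
    intro b hb
    obtain ⟨c, hc⟩ := hgen (i b) (fun a ha => hbase b hb a ha) a
    exact ⟨-c, by rw [map_neg, hc, hjs, smul_neg, neg_neg]⟩
  choose E hE using hall
  let D₀ : A → Derivation R A A := fun a => Derivation.mk'
    { toFun := E a
      map_add' := fun b c => hi (by
        rw [map_add, hE, hE, hE, map_add, map_add, smul_add])
      map_smul' := fun r b => hi (by
        rw [RingHom.id_apply, map_smul, hE, hE, map_smul, Derivation.map_smul_of_tower,
          smul_comm]) }
    fun b c => hi (by
      change i (E a (b * c)) = i (b • E a c + c • E a b)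
      rw [smul_eq_mul, smul_eq_mul, map_add, map_mul, map_mul, hE, hE, hE, map_mul,
        Derivation.leibniz, smul_add, smul_eq_mul, smul_eq_mul, mul_smul_comm, mul_smul_comm])
  have hD₀ : ∀ a b, i (D₀ a b) = s • jac K (i a) (i b) := fun a b => hE a b
  let D : A →ₗ[R] Derivation R A A :=
    { toFun := D₀
      map_add' := fun a b => Derivation.ext fun c => hi (by
        rw [Derivation.add_apply, map_add, hD₀, hD₀, hD₀, map_add, map_add, Derivation.add_apply,
          smul_add])
      map_smul' := fun r a => Derivation.ext fun c => hi (by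
        rw [RingHom.id_apply, Derivation.smul_apply, map_smul, hD₀, hD₀, map_smul,
          ← algebraMap_smul K r (i a), map_smul, Derivation.smul_apply, algebraMap_smul,
          smul_comm]) }
  refine ⟨s, D, hs0, fun a => hi ?_, hD₀⟩
  change i (D₀ a a) = i 0
  rw [hD₀, jac_self, smul_zero, map_zero]

/-! ### Base change -/

section BaseChange

variable {R A : Type*} [CommRing R] [CommRing A] [Algebra R A]

theorem trivial_baseChange {B V : Type*} [CommRing B] [CommRing V] [Algebra R B] [Algebra B V]
    [Algebra R V] [IsScalarTower R B V]
    (φ : (B ⊗[R] A) ≃ₐ[B] MvPolynomial (Fin 2) B) : Nonempty ((V ⊗[R] A) ≃ₐ[V] V[X][X]) :=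
  ⟨(Algebra.TensorProduct.cancelBaseChange R B V V A).symm.trans
    ((Algebra.TensorProduct.congr (AlgEquiv.refl : V ≃ₐ[V] V) φ).trans
      ((MvPolynomial.algebraTensorAlgEquiv B V).trans
        (Polynomial.Bivariate.equivMvPolynomial V).symm))⟩

theorem span_baseChange {V W : Type*} [CommRing V] [CommRing W] [Algebra R V] [Algebra V W]
    (E : (V ⊗[R] A) ≃ₐ[V] W) (H : W) :
    H ∈ Submodule.span V (Set.range fun a : A => E (1 ⊗ₜ a)) := by
  obtain ⟨x, rfl⟩ := E.surjective H
  induction x with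
  | zero => rw [map_zero]; exact zero_mem _
  | add x y hx hy => rw [map_add]; exact add_mem hx hy
  | tmul v a =>
    have h : v ⊗ₜ[R] a = v • ((1 : V) ⊗ₜ[R] a) := by
      rw [TensorProduct.smul_tmul', smul_eq_mul, mul_one]
    rw [h, map_smul]
    exact Submodule.smul_mem _ _ (Submodule.subset_span ⟨a, rfl⟩)

theorem hom_of_baseChange {V W T : Type*} [CommRing V] [CommRing W] [CommRing T] [Algebra R V]
    [Algebra V W] (E : (V ⊗[R] A) ≃ₐ[V] W) (f : V →+* T) (g : A →+* T)
    (hfg : ∀ r, f (algebraMap R V r) = g (algebraMap R A r)) :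
    ∃ ρ : W →+* T, (∀ v, ρ (algebraMap V W v) = f v) ∧ ∀ a, ρ (E (1 ⊗ₜ a)) = g a := by
  let : Algebra R T := (g.comp (algebraMap R A)).toAlgebra
  let f' : V →ₐ[R] T := { f with commutes' := hfg }
  let g' : A →ₐ[R] T := { g with commutes' := fun _ => rfl }
  let h : V ⊗[R] A →ₐ[R] T := Algebra.TensorProduct.lift f' g' fun _ _ => Commute.all _ _
  refine ⟨h.toRingHom.comp E.symm.toAlgHom.toRingHom, fun v => ?_, fun a => ?_⟩
  · change h (E.symm (algebraMap V W v)) = f v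
    rw [AlgEquiv.commutes, Algebra.TensorProduct.algebraMap_apply, Algebra.algebraMap_self,
      RingHom.id_apply, Algebra.TensorProduct.lift_tmul, map_one, mul_one]
    rfl
  · change h (E.symm (E (1 ⊗ₜ a))) = g a
    rw [AlgEquiv.symm_apply_apply, Algebra.TensorProduct.lift_tmul, map_one, one_mul]
    rfl

/-- The generic fibre of a flat algebra contains the algebra as a lattice. -/
theorem generic_fibre [IsDomain R] {K W : Type*} [Field K] [Algebra R K] [IsFractionRing R K]
    [CommRing W] [Algebra K W] [Module.Flat R A] (E : (K ⊗[R] A) ≃ₐ[K] W) :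
    Function.Injective (fun a : A => E (1 ⊗ₜ a)) ∧
    ∀ H, ∃ r : R, r ≠ 0 ∧ ∃ a : A, E (1 ⊗ₜ a) = algebraMap R K r • H := by
  constructor
  · exact E.injective.comp (Algebra.TensorProduct.includeRight_injective (A := K) (B := A)
      (IsFractionRing.injective R K))
  · intro H
    obtain ⟨x, rfl⟩ := E.surjective H
    induction x with
    | zero => exact ⟨1, one_ne_zero, 0, by simp⟩
    | add x y hx hy =>
      obtain ⟨r, hr, a, ha⟩ := hx
      obtain ⟨s, hs, b, hb⟩ := hy
      refine ⟨r * s, mul_ne_zero hr hs, s • a + r • b, ?_⟩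
      rw [TensorProduct.tmul_add, map_add, map_add, smul_add]
      congr 1
      · rw [TensorProduct.tmul_smul, ← algebraMap_smul K s, map_smul, ha, smul_smul, mul_comm r s,
          map_mul]
      · rw [TensorProduct.tmul_smul, ← algebraMap_smul K r, map_smul, hb, smul_smul, map_mul]
    | tmul v a =>
      obtain ⟨x, y, hy, rfl⟩ := IsFractionRing.div_surjective (A := R) v
      have hy0 : y ≠ 0 := nonZeroDivisors.ne_zero hy
      refine ⟨y, hy0, x • a, ?_⟩
      have hyK : algebraMap R K y ≠ 0 := fun h =>
        hy0 (IsFractionRing.injective R K (by rw [h, map_zero]))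
      rw [← map_smul, TensorProduct.smul_tmul', smul_eq_mul, mul_div_cancel₀ _ hyK,
        ← TensorProduct.smul_tmul, Algebra.smul_def, mul_one]

/-- The fibre at a closed point `π = 0` is `A / π A`. -/
theorem special_fibre {k : Type*} [CommRing k] [Algebra R k]
    (hs : Function.Surjective (algebraMap R k)) {π : R}
    (h0 : ∀ r, algebraMap R k r = 0 ↔ π ∣ r) {a : A} (ha : (1 : k) ⊗ₜ[R] a = 0) :
    ∃ b, a = π • b := by
  have hex : Function.Exact (π • (LinearMap.id : R →ₗ[R] R)) (Algebra.linearMap R k) := by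
    intro r
    rw [Algebra.linearMap_apply, h0]
    constructor
    · rintro ⟨s, rfl⟩; exact ⟨s, rfl⟩
    · rintro ⟨s, rfl⟩; exact ⟨s, rfl⟩
  have h1 := rTensor_exact A hex hs
  have h2 : (Algebra.linearMap R k).rTensor A ((1 : R) ⊗ₜ a) = 0 := by
    rw [LinearMap.rTensor_tmul, Algebra.linearMap_apply, map_one, ha]
  obtain ⟨x, hx⟩ := (h1 _).1 h2
  rw [LinearMap.rTensor_smul, LinearMap.rTensor_id] at hx
  refine ⟨TensorProduct.lid R A x, ?_⟩
  have h3 := congrArg (TensorProduct.lid R A) hx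
  simpa using h3.symm

end BaseChange

/-! ### A valuation ring trivializing a form -/

universe u

/-- An `𝔸²`-form becomes trivial over a suitable valuation ring dominating `R_(π)`: such a ring in
an algebraic closure of `Frac R` is integrally closed, so it contains an algebraic closure of
`k`. -/
theorem exists_trivializing {k A : Type*} {R : Type u} [Field k] [CommRing R] [IsDomain R]
    [IsPrincipalIdealRing R] [Algebra k R] [CommRing A] [Algebra R A]
    (hform : Nonempty (((R ⊗[k] AlgebraicClosure k) ⊗[R] A) ≃ₐ[R ⊗[k] AlgebraicClosure k]
      MvPolynomial (Fin 2) (R ⊗[k] AlgebraicClosure k))) {π : R} (hπ : Irreducible π) :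
    ∃ (V : Type u) (_ : CommRing V) (_ : IsDomain V) (_ : IsLocalRing V) (_ : Algebra R V),
      (∀ r, algebraMap R V r ∈ IsLocalRing.maximalIdeal V ↔ π ∣ r) ∧ Dichotomy R V ∧
      Nonempty ((V ⊗[R] A) ≃ₐ[V] V[X][X]) := by
  let K := FractionRing R
  let L := AlgebraicClosure K
  have hRL : Function.Injective (algebraMap R L) := by
    rw [IsScalarTower.algebraMap_eq R K L]
    exact (algebraMap K L).injective.comp (IsFractionRing.injective R K)
  let A₀ : Subring L := (algebraMap R L).range
  let I : Ideal A₀ := Ideal.span {⟨algebraMap R L π, π, rfl⟩}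
  have hI : I ≠ ⊤ := by
    intro h
    rw [Ideal.span_singleton_eq_top] at h
    obtain ⟨⟨_, s, rfl⟩, hs⟩ := h.exists_right_inv
    have h1 : algebraMap R L (π * s) = algebraMap R L 1 := by
      rw [map_mul, map_one]; exact congrArg Subtype.val hs
    exact hπ.not_isUnit (IsUnit.of_mul_eq_one s (hRL h1))
  obtain ⟨V, hV1, hV2⟩ := Ideal.image_subset_nonunits_valuationSubring I hI
  have hRV : ∀ r, algebraMap R L r ∈ V := fun r => hV1 ⟨r, rfl⟩
  have hπV : V.valuation (algebraMap R L π) < 1 :=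
    hV2 ⟨_, Ideal.subset_span rfl, rfl⟩
  let aRV : Algebra R V := ((algebraMap R L).codRestrict V.toSubring hRV).toAlgebra
  have tRVL : IsScalarTower R V L := IsScalarTower.of_algebraMap_eq fun r => rfl
  refine ⟨V, inferInstance, inferInstance, inferInstance, aRV, ?_, ?_, ?_⟩
  · intro r
    rw [V.valuation_lt_one_iff]
    change V.valuation (algebraMap R L r) < 1 ↔ _
    constructor
    · intro h
      by_contra hr
      exact h.ne (valuation_eq_one hπ V.valuation
        (fun r => (V.valuation_le_one_iff _).2 (hRV r)) hπV hr)
    · rintro ⟨s, rfl⟩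
      rw [map_mul, map_mul]
      exact (mul_le_of_le_one_right' ((V.valuation_le_one_iff _).2 (hRV s))).trans_lt hπV
  · intro P Q S T r hr hS hT
    exact valuation_dichotomy K hπ V hπV hr hS hT
  · let akL : Algebra k L := ((algebraMap R L).comp (algebraMap k R)).toAlgebra
    let f : AlgebraicClosure k →ₐ[k] L := IsAlgClosed.lift
    have hf : ∀ x, f x ∈ V := by
      intro x
      have hx : IsIntegral k x := Algebra.IsIntegral.isIntegral x
      obtain ⟨p, hp, hpx⟩ := hx.map f
      have hintegral : IsIntegral V (f x) := by
        refine ⟨p.map ((algebraMap R V).comp (algebraMap k R)), hp.map _, ?_⟩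
        rw [eval₂_map]
        exact hpx
      obtain ⟨y, hy⟩ := (IsIntegrallyClosed.isIntegral_iff (R := V) (K := L)).1 hintegral
      rw [← hy]; exact y.2
    let akV : Algebra k V := ((algebraMap R V).comp (algebraMap k R)).toAlgebra
    let g : AlgebraicClosure k →ₐ[k] V :=
      { (f : AlgebraicClosure k →+* L).codRestrict V.toSubring hf with
        commutes' := fun c => Subtype.ext (f.commutes c) }
    let h : R →ₐ[k] V := { algebraMap R V with commutes' := fun _ => rfl }
    let F : R ⊗[k] AlgebraicClosure k →ₐ[k] V :=
      Algebra.TensorProduct.lift h g fun _ _ => Commute.all _ _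
    let aBV : Algebra (R ⊗[k] AlgebraicClosure k) V := F.toRingHom.toAlgebra
    have tRBV : IsScalarTower R (R ⊗[k] AlgebraicClosure k) V :=
      IsScalarTower.of_algebraMap_eq fun r => by
        change algebraMap R V r = F (algebraMap R (R ⊗[k] AlgebraicClosure k) r)
        rw [Algebra.TensorProduct.algebraMap_apply, Algebra.TensorProduct.lift_tmul, map_one,
          mul_one]
        rfl
    obtain ⟨φ⟩ := hform
    exact trivial_baseChange φ

/-! ### The theorem -/

section Final

variable {R : Type u} {A : Type*} [CommRing R] [CommRing A] [Algebra R A]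

/-- Improvement of a generic coordinate pair at a prime `π`, from the trivializations of the fibre
at `π` and of the form. -/
theorem step_of_form {k : Type*} [Field k] [IsDomain R] [IsPrincipalIdealRing R] [Algebra k R]
    (hform : Nonempty (((R ⊗[k] AlgebraicClosure k) ⊗[R] A) ≃ₐ[R ⊗[k] AlgebraicClosure k]
      MvPolynomial (Fin 2) (R ⊗[k] AlgebraicClosure k))) {π : R} (hπ : Irreducible π)
    {κ : Type*} [Field κ] [Algebra R κ] (hs : Function.Surjective (algebraMap R κ))
    (h0 : ∀ r, algebraMap R κ r = 0 ↔ π ∣ r) (E : (κ ⊗[R] A) ≃ₐ[κ] κ[X][X])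
    {D : A →ₗ[R] Derivation R A A} (hD : ∀ a, D a a = 0) {P Q : A} (hG : GenCoord R P Q)
    {l : R[X][X]} {a : A} (hl : ev P Q l = π • a) (hl' : ¬ ∃ m, l = π • m) :
    ∃ P₁ Q₁, GenCoord R P₁ Q₁ ∧ D P Q = π • D P₁ Q₁ := by
  obtain ⟨V, _, _, _, _, h2, hdich, ⟨EV⟩⟩ := exists_trivializing hform hπ
  let q : A →ₐ[R] κ[X][X] :=
    (E.restrictScalars R).toAlgHom.comp Algebra.TensorProduct.includeRight
  have hq : ∀ a, q a = E (1 ⊗ₜ a) := fun _ => rfl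
  let e : A →ₐ[R] V[X][X] :=
    (EV.restrictScalars R).toAlgHom.comp Algebra.TensorProduct.includeRight
  have hτV : ∀ r, algebraMap R κ r = 0 →
      IsLocalRing.residue V (algebraMap R V r) = 0 := fun r hr => by
    rw [IsLocalRing.residue_eq_zero_iff, h2, ← h0]; exact hr
  let σ : κ →+* IsLocalRing.ResidueField V :=
    (algebraMap R κ).liftOfSurjective hs ⟨(IsLocalRing.residue V).comp (algebraMap R V), hτV⟩
  have hσ : ∀ r, σ (algebraMap R κ r) = IsLocalRing.residue V (algebraMap R V r) := fun r =>
    RingHom.liftOfRightInverse_comp_apply _ _ _ _ r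
  have hqr : ∀ r, q (algebraMap R A r) = C (C (algebraMap R κ r)) := fun r => q.commutes r
  obtain ⟨ρ, hρ, hρe⟩ := hom_of_baseChange EV
    ((C.comp C).comp (IsLocalRing.residue V) :
      V →+* (IsLocalRing.ResidueField V)[X][X]) ((map2 σ).comp q.toRingHom) (fun r => by
        change C (C (IsLocalRing.residue V (algebraMap R V r))) = map2 σ (q (algebraMap R A r))
        rw [hqr, map2_C, Polynomial.map_C, hσ])
  refine step h2 hdich e (span_baseChange EV) hs h0 (q := q.toRingHom) hqr (fun a ha => ?_) σ ρ
    hρ hρe hD hG hl hl'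
  refine special_fibre hs h0 (E.injective ?_)
  rw [map_zero]
  exact ha

/-- A fibration by affine planes which is also a form of the affine plane is trivial. -/
theorem polynomial_of_fibration_of_form {k : Type*} [Field k] [IsDomain R]
    [IsPrincipalIdealRing R] [Algebra k R]
    (hA : IsA2Fibration R A)
    (hform : Nonempty (((R ⊗[k] AlgebraicClosure k) ⊗[R] A) ≃ₐ[R ⊗[k] AlgebraicClosure k]
      MvPolynomial (Fin 2) (R ⊗[k] AlgebraicClosure k))) :
    Nonempty (A ≃ₐ[R] MvPolynomial (Fin 2) R) := by
  obtain ⟨hft, hflat, hfib⟩ := hA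
  have hfib' : ∀ (p : Ideal R) [p.IsPrime], Nonempty ((p.ResidueField ⊗[R] A) ≃ₐ[p.ResidueField]
      p.ResidueField[X][X]) := fun p _ => by
    obtain ⟨φ⟩ := hfib p
    exact ⟨φ.trans (Polynomial.Bivariate.equivMvPolynomial _).symm⟩
  -- the residue field at the zero ideal is the fraction field
  let K := (⊥ : Ideal R).ResidueField
  obtain ⟨E₀⟩ := hfib' ⊥
  obtain ⟨hi, hden⟩ := generic_fibre (K := K) E₀
  let i : A →ₐ[R] K[X][X] :=
    (E₀.restrictScalars R).toAlgHom.comp Algebra.TensorProduct.includeRight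
  have hi : Function.Injective i := hi
  have hden : ∀ H : K[X][X], ∃ r : R, r ≠ 0 ∧ ∃ a, i a = r • H := fun H => by
    obtain ⟨r, hr, a, ha⟩ := hden H
    exact ⟨r, hr, a, by rw [← algebraMap_smul K r H]; exact ha⟩
  have hK0 : ∀ r : R, r ≠ 0 → algebraMap R K r ≠ 0 := fun r hr h =>
    hr (IsFractionRing.injective R K (by rw [h, map_zero]))
  have hcancel : ∀ (r : R) (a b : K[X][X]), r ≠ 0 → r • a = r • b → a = b := by
    intro r a b hr h
    rw [← algebraMap_smul K r a, ← algebraMap_smul K r b] at h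
    exact smul_right_injective _ (hK0 r hr) h
  have htf : ∀ (r : R) (a b : A), r ≠ 0 → r • a = r • b → a = b := by
    intro r a b hr h
    apply hi
    apply hcancel r _ _ hr
    rw [← map_smul, ← map_smul, h]
  have hclosed : ∀ π : R, Irreducible π → ∃ (κ : Type u) (_ : Field κ) (_ : Algebra R κ),
      Function.Surjective (algebraMap R κ) ∧ (∀ r, algebraMap R κ r = 0 ↔ π ∣ r) ∧
      Nonempty ((κ ⊗[R] A) ≃ₐ[κ] κ[X][X]) := by
    intro π hπ
    have hmax : (Ideal.span {π}).IsMaximal := PrincipalIdealRing.isMaximal_of_irreducible hπ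
    have hprime : (Ideal.span {π}).IsPrime := hmax.isPrime
    refine ⟨(Ideal.span {π}).ResidueField, inferInstance, inferInstance,
      Ideal.algebraMap_residueField_surjective _, fun r => ?_, hfib' _⟩
    rw [Ideal.algebraMap_residueField_eq_zero, Ideal.mem_span_singleton]
  have hsat : ∀ (π r : R) (a : A), Irreducible π → algebraMap R A r = π • a → π ∣ r := by
    intro π r a hπ h
    obtain ⟨κ, _, _, hs, h0, ⟨E⟩⟩ := hclosed π hπ
    let q : A →ₐ[R] κ[X][X] :=
      (E.restrictScalars R).toAlgHom.comp Algebra.TensorProduct.includeRight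
    have h1 := congrArg q h
    rw [map_smul, AlgHom.commutes, Algebra.smul_def, IsScalarTower.algebraMap_apply R κ κ[X][X],
      IsScalarTower.algebraMap_apply R κ κ[X][X], (h0 π).2 dvd_rfl, map_zero, zero_mul] at h1
    rw [← h0]
    exact (algebraMap κ κ[X][X]).injective (by rw [h1, map_zero])
  obtain ⟨s, D, hs0, hD, hDi⟩ := exists_biderivation i hi hden
  obtain ⟨r₁, hr₁, P, hP⟩ := hden (C X)
  obtain ⟨r₂, hr₂, Q, hQ⟩ := hden X
  have hGC : GenCoord R P Q := by
    intro a
    -- clear the denominators of the coefficients of `i a`, viewed as a polynomial in `i P`, `i Q`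
    have hPm : i P ∈ Algebra.adjoin R {i P, i Q} := Algebra.subset_adjoin (by simp)
    have hQm : i Q ∈ Algebra.adjoin R {i P, i Q} := Algebra.subset_adjoin (by simp)
    have key : ∀ H : K[X][X], ∃ r : R, r ≠ 0 ∧ r • H ∈ Algebra.adjoin R {i P, i Q} := by
      intro H
      have hH : H ∈ Algebra.adjoin K {(C X : K[X][X]), X} := by
        rw [show Algebra.adjoin K {(C X : K[X][X]), X} = ⊤ from coord_std]
        exact Algebra.mem_top
      induction hH using Algebra.adjoin_induction with
      | mem x hx =>
        rcases hx with rfl | rfl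
        · exact ⟨r₁, hr₁, hP ▸ hPm⟩
        · exact ⟨r₂, hr₂, hQ ▸ hQm⟩
      | algebraMap c =>
        obtain ⟨x, y, hy, rfl⟩ := IsFractionRing.div_surjective (A := R) c
        have hy0 := nonZeroDivisors.ne_zero hy
        refine ⟨y, hy0, ?_⟩
        have h1 : y • algebraMap K K[X][X] (algebraMap R K x / algebraMap R K y) =
            algebraMap R K[X][X] x := by
          rw [Algebra.smul_def, IsScalarTower.algebraMap_apply R K K[X][X],
            IsScalarTower.algebraMap_apply R K K[X][X], ← map_mul, mul_div_cancel₀ _ (hK0 y hy0)]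
        rw [h1]
        exact Subalgebra.algebraMap_mem _ _
      | add u w _ _ hu hw =>
        obtain ⟨r, hr, hu⟩ := hu
        obtain ⟨t, ht, hw⟩ := hw
        refine ⟨r * t, mul_ne_zero hr ht, ?_⟩
        rw [smul_add, mul_comm, mul_smul, mul_comm, mul_smul r t w]
        exact add_mem (Subalgebra.smul_mem _ hu _) (Subalgebra.smul_mem _ hw _)
      | mul u w _ _ hu hw =>
        obtain ⟨r, hr, hu⟩ := hu
        obtain ⟨t, ht, hw⟩ := hw
        refine ⟨r * t, mul_ne_zero hr ht, ?_⟩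
        rw [← smul_mul_smul_comm]
        exact mul_mem hu hw
    obtain ⟨r, hr, h⟩ := key (i a)
    obtain ⟨l, hl⟩ := mem_adjoin_pair.1 h
    refine ⟨r, hr, mem_adjoin_pair.2 ⟨l, hi ?_⟩⟩
    rw [map_ev, hl, map_smul]
  have hDPQ : D P Q = algebraMap R A (s * r₁ * r₂) := by
    apply hi
    rw [hDi, hP, hQ, AlgHom.commutes, Derivation.map_smul_of_tower,
      ← algebraMap_smul K r₁ (C X : K[X][X]), map_smul, Derivation.smul_apply, jac_std,
      algebraMap_smul, smul_smul, smul_smul, Algebra.smul_def, mul_one]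
    congr 1; ring
  obtain ⟨P, Q, htop⟩ := exists_generators htf hsat D (fun π P Q l a hπ hG hl hl' => by
      obtain ⟨κ, _, _, hs, h0, ⟨E⟩⟩ := hclosed π hπ
      exact step_of_form hform hπ hs h0 E hD hG hl hl')
    (s * r₁ * r₂) (mul_ne_zero (mul_ne_zero hs0 hr₁) hr₂) P Q hGC hDPQ
  have hcoord : Coord (i P) (i Q) := by
    rw [Coord, eq_top_iff]
    intro H _
    obtain ⟨r, hr, a, ha⟩ := hden H
    obtain ⟨l, rfl⟩ := mem_adjoin_pair.1 (show a ∈ Algebra.adjoin R {P, Q} by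
      rw [htop]; exact Algebra.mem_top)
    rw [map_ev, ← ev_map2 (T := K), ← algebraMap_smul K r H] at ha
    have h4 := (eq_inv_smul_iff₀ (hK0 r hr)).2 ha.symm
    rw [h4]
    exact Subalgebra.smul_mem _ (mem_adjoin_pair.2 ⟨_, rfl⟩) _
  have hbij : Function.Bijective (ev P Q : R[X][X] →ₐ[R] A) := by
    constructor
    · intro l m hlm
      apply map2_injective (IsFractionRing.injective R K)
      apply hcoord.injective
      rw [ev_map2, ev_map2, ← map_ev, ← map_ev, hlm]
    · intro a
      exact mem_adjoin_pair.1 (show a ∈ Algebra.adjoin R {P, Q} by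
        rw [htop]; exact Algebra.mem_top)
  exact ⟨(AlgEquiv.ofBijective _ hbij).symm.trans (Polynomial.Bivariate.equivMvPolynomial R)⟩

end Final

end A2

/-- **Theorem D.**  Let `k` be a field and `R` a PID containing `k`.  If `A` is an
`𝔸²`-fibration over `R` which is also an `𝔸²`-form over `R` with respect to `k`,
then `A` is a polynomial ring in two variables over `R`. -/
theorem stmt3 (k : Type*) [Field k]
    (R : Type*) [CommRing R] [IsDomain R] [IsPrincipalIdealRing R] [Algebra k R]
    (A : Type*) [CommRing A] [Algebra R A] (hA : IsA2Fibration R A)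
    (hform : Nonempty (((R ⊗[k] AlgebraicClosure k) ⊗[R] A) ≃ₐ[R ⊗[k] AlgebraicClosure k]
      MvPolynomial (Fin 2) (R ⊗[k] AlgebraicClosure k))) :
    Nonempty (A ≃ₐ[R] MvPolynomial (Fin 2) R) := by
  exact A2.polynomial_of_fibration_of_form hA hform
end

section
/- Let C ⊆ D be integral domains and let t ∈ C be a nonzero element such that the localizations satisfy D[1/t] = C[1/t] (as subrings of the fraction field of D) and tD ∩ C = tC. Then C = D. -/
/-!
Every element of `C[1/t]` is carried into `C` by some power of `t`
(`exists_pow_mul_mem_of_mem_closure`). Since `D ⊆ D[1/t] = C[1/t]`, each `d ∈ D` satisfies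
`t ^ n * d ∈ C` for some `n`. The condition `tD ∩ C = tC` lets one factor `t` be cancelled at a
time: `t * y ∈ C` gives `t * y = t * c` with `c ∈ C`, so `y = c ∈ C` as `D` is a domain. Hence
`d ∈ C`.
-/

set_option synthInstance.maxHeartbeats 1000000
set_option maxHeartbeats 1000000

/-- Elements of `C[1/t]`, as the subring generated by `C` and `t⁻¹`, have the form `c / t ^ n`. -/
theorem exists_pow_mul_mem_of_mem_closure {D K : Type*} [CommRing D] [Field K] (f : D →+* K)
    (C : Subring D) (t : D) (htC : t ∈ C) (ht : f t ≠ 0) (z : K)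
    (hz : z ∈ Subring.closure (f '' (C : Set D) ∪ {(f t)⁻¹})) :
    ∃ n : ℕ, ∃ c ∈ C, f t ^ n * z = f c := by
  induction hz using Subring.closure_induction with
  | mem x hx =>
    rcases hx with ⟨c, hc, rfl⟩ | rfl
    · exact ⟨0, c, hc, by simp⟩
    · exact ⟨1, 1, C.one_mem, by simp [ht]⟩
  | zero => exact ⟨0, 0, C.zero_mem, by simp⟩
  | one => exact ⟨0, 1, C.one_mem, by simp⟩
  | add x y _ _ hx hy =>
    obtain ⟨n, c, hc, hx⟩ := hx
    obtain ⟨m, d, hd, hy⟩ := hy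
    refine ⟨n + m, t ^ m * c + t ^ n * d,
      C.add_mem (C.mul_mem (C.pow_mem htC m) hc) (C.mul_mem (C.pow_mem htC n) hd), ?_⟩
    simp only [map_add, map_mul, map_pow, ← hx, ← hy]
    ring
  | neg x _ hx =>
    obtain ⟨n, c, hc, hx⟩ := hx
    exact ⟨n, -c, C.neg_mem hc, by simp [← hx]⟩
  | mul x y _ _ hx hy =>
    obtain ⟨n, c, hc, hx⟩ := hx
    obtain ⟨m, d, hd, hy⟩ := hy
    refine ⟨n + m, c * d, C.mul_mem hc hd, ?_⟩
    simp only [map_mul, ← hx, ← hy]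
    ring

/-- **Elementary lemma.**  Let `C ⊆ D` be integral domains and `t ∈ C` a nonzero element
such that `D[1/t] = C[1/t]` (inside the fraction field of `D`) and `t·D ∩ C = t·C`.
Then `C = D`. -/
theorem stmt6 (D : Type*) [CommRing D] [IsDomain D] (C : Subring D)
    (t : D) (htC : t ∈ C) (ht : t ≠ 0)
    (hloc :
      Subring.closure
          ((algebraMap D (FractionRing D)) '' (C : Set D) ∪
            {(algebraMap D (FractionRing D) t)⁻¹}) =
        Subring.closure
          (Set.range (algebraMap D (FractionRing D)) ∪
            {(algebraMap D (FractionRing D) t)⁻¹}))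
    (hcap : {x : D | ∃ y : D, x = t * y} ∩ (C : Set D) = {x : D | ∃ y ∈ C, x = t * y}) :
    C = ⊤ := by
  have hinj : Function.Injective (algebraMap D (FractionRing D)) :=
    IsFractionRing.injective D (FractionRing D)
  have cancel : ∀ y : D, t * y ∈ C → y ∈ C := by
    intro y hy
    have hmem : t * y ∈ {x : D | ∃ y ∈ C, x = t * y} := hcap ▸ ⟨⟨y, rfl⟩, hy⟩
    obtain ⟨c, hc, h⟩ := hmem
    rwa [mul_left_cancel₀ ht h]
  have cancel_pow : ∀ (n : ℕ) (y : D), t ^ n * y ∈ C → y ∈ C := by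
    intro n
    induction n with
    | zero => intro y hy; simpa using hy
    | succ n ih =>
      intro y hy
      exact cancel y (ih _ (by rwa [pow_succ, mul_assoc] at hy))
  rw [eq_top_iff]
  intro d _
  have hd : algebraMap D (FractionRing D) d ∈ Subring.closure
      ((algebraMap D (FractionRing D)) '' (C : Set D) ∪
        {(algebraMap D (FractionRing D) t)⁻¹}) := by
    rw [hloc]
    exact Subring.subset_closure (Or.inl ⟨d, rfl⟩)
  obtain ⟨n, c, hc, h⟩ := exists_pow_mul_mem_of_mem_closure _ C t htC
    ((map_ne_zero_iff _ hinj).2 ht) _ hd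
  rw [← map_pow, ← map_mul] at h
  exact cancel_pow n d (by rwa [hinj h])
end

section
/- Let k be a field, R a ring containing k, and A an R-algebra. Suppose there exists a field extension L of k such that A ⊗_k L is isomorphic as an (R ⊗_k L)-algebra to a polynomial ring in n variables over R ⊗_k L. Then A is a finitely generated R-algebra, and there exists a finitely generated field extension L̃ of k contained in L such that A ⊗_k L̃ is isomorphic as an (R ⊗_k L̃)-algebra to a polynomial ring in n variables over R ⊗_k L̃. -/
/-!
Write `S = R ⊗[k] L` and `S' = R ⊗[k] L'`. Since `L` is free and nonzero over `k`, the `R`-algebra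
`S` is faithfully flat, so finite generation of `A` descends from `S ⊗[R] A ≅ S[X₁, …, Xₙ]`.

Since `L'` is a direct summand of the `k`-vector space `L`, the inclusion `S' → S` has an `R`-linear
retraction. Hence `S' ⊗[R] A` and `S'[X₁, …, Xₙ]` are subalgebras of `S ⊗[R] A` and
`S[X₁, …, Xₙ]`, and the given isomorphism `e` restricts to an isomorphism between them as soon as it
sends finitely many generators of `A` into `S'[X₁, …, Xₙ]` and its inverse sends the variables into
`S' ⊗[R] A` (`nonempty_algEquiv_of_mem_range`). These conditions hold once `S'` contains a certain
finite subset of `S` (`exists_finite_nonempty_algEquiv`), and every element of `S` lies in `S'` as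
soon as `L'` contains a suitable finite subset of `L` (`exists_finset_mem_range`).
-/

set_option synthInstance.maxHeartbeats 4000000
set_option maxHeartbeats 4000000

open TensorProduct

/-- If `S' → S` has an `R`-linear retraction `g` and the isomorphism `e` matches the generators of
`S' ⊗[R] A` and of `S'[X₁, …, Xₙ]` up to elements of these subrings, then `e` restricts to an
isomorphism of the subrings. The retraction makes `S' ⊗[R] A → S ⊗[R] A` injective although `A`
need not be flat over `R`. -/
lemma nonempty_algEquiv_of_mem_range {R S S' A σ : Type*} [CommRing R] [CommRing S] [CommRing S']
    [CommRing A] [Algebra R S] [Algebra R S'] [Algebra S' S] [IsScalarTower R S' S] [Algebra R A]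
    (e : (S ⊗[R] A) ≃ₐ[S] MvPolynomial σ S)
    (g : S →ₗ[R] S') (hg : ∀ s, g (algebraMap S' S s) = s)
    (t : Set A) (ht : Algebra.adjoin R t = ⊤)
    (h₁ : ∀ a ∈ t, e (1 ⊗ₜ a) ∈ (MvPolynomial.map (σ := σ) (algebraMap S' S)).range)
    (h₂ : ∀ i, e.symm (MvPolynomial.X i) ∈
      (Algebra.TensorProduct.map (Algebra.ofId S' S) (AlgHom.id R A)).range) :
    Nonempty ((S' ⊗[R] A) ≃ₐ[S'] MvPolynomial σ S') := by
  let ι : S' ⊗[R] A →ₐ[S'] S ⊗[R] A :=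
    Algebra.TensorProduct.map (Algebra.ofId S' S) (AlgHom.id R A)
  let f : S' ⊗[R] A →ₐ[S'] MvPolynomial σ S := (e.restrictScalars S').toAlgHom.comp ι
  let j : MvPolynomial σ S' →ₐ[S'] MvPolynomial σ S := MvPolynomial.mapAlgHom (Algebra.ofId S' S)
  have hι : Function.Injective ι := by
    refine Function.LeftInverse.injective (g := g.rTensor A) fun x ↦ ?_
    induction x with
    | zero => simp
    | add x y hx hy => rw [map_add, map_add, hx, hy]
    | tmul s a => simp [ι, Algebra.ofId_apply, hg]
  have hf : Function.Injective f := e.injective.comp hι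
  have hj : Function.Injective j :=
    MvPolynomial.map_injective _ (Function.LeftInverse.injective hg)
  have hA : ∀ a, e (1 ⊗ₜ a) ∈ j.range := by
    intro a
    have ha : a ∈ Algebra.adjoin R t := ht ▸ Algebra.mem_top
    induction ha using Algebra.adjoin_induction with
    | mem x hx => exact h₁ x hx
    | algebraMap r =>
      refine ⟨MvPolynomial.C (algebraMap R S' r), ?_⟩
      have : (1 : S) ⊗ₜ[R] algebraMap R A r = algebraMap S (S ⊗[R] A) (algebraMap R S r) := by
        rw [Algebra.TensorProduct.algebraMap_apply, Algebra.algebraMap_eq_smul_one (A := A),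
          TensorProduct.tmul_smul, TensorProduct.smul_tmul',
          ← Algebra.algebraMap_eq_smul_one, Algebra.algebraMap_self, RingHom.id_apply]
      rw [this, e.commutes, MvPolynomial.algebraMap_eq, IsScalarTower.algebraMap_apply R S' S]
      exact MvPolynomial.map_C _ _
    | add x y _ _ hx hy =>
      rw [TensorProduct.tmul_add, map_add]
      exact add_mem hx hy
    | mul x y _ _ hx hy =>
      rw [← one_mul (1 : S), ← Algebra.TensorProduct.tmul_mul_tmul, map_mul]
      exact mul_mem hx hy
  have hrange : f.range = j.range := by
    apply le_antisymm
    · rintro _ ⟨x, rfl⟩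
      induction x with
      | zero => exact (map_zero f) ▸ zero_mem _
      | add x y hx hy => exact (map_add f x y) ▸ add_mem hx hy
      | tmul s a =>
        have : s ⊗ₜ[R] a = s • ((1 : S') ⊗ₜ[R] a) := by
          rw [TensorProduct.smul_tmul', smul_eq_mul, mul_one]
        change f (s ⊗ₜ[R] a) ∈ _
        rw [this, map_smul]
        refine Subalgebra.smul_mem _ ?_ s
        have : f ((1 : S') ⊗ₜ[R] a) = e (1 ⊗ₜ a) := by simp [f, ι]
        rw [this]
        exact hA a
    · rintro _ ⟨p, rfl⟩
      change j p ∈ _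
      induction p using MvPolynomial.induction_on with
      | C s =>
        have : j (MvPolynomial.C s) = algebraMap S' _ s := j.commutes s
        rw [this]
        exact Subalgebra.algebraMap_mem _ s
      | add p q hp hq => exact (map_add j p q) ▸ add_mem hp hq
      | mul_X p i hp =>
        rw [map_mul]
        refine mul_mem hp ?_
        obtain ⟨y, hy⟩ := h₂ i
        refine ⟨y, ?_⟩
        have hjX : j (MvPolynomial.X i) = MvPolynomial.X i := MvPolynomial.map_X _ _
        rw [hjX]
        exact (congrArg e hy).trans (e.apply_symm_apply _)
  exact ⟨(AlgEquiv.ofInjective f hf).trans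
    ((Subalgebra.equivOfEq _ _ hrange).trans (AlgEquiv.ofInjective j hj).symm)⟩

/-- For `A` of finite type, an isomorphism `S ⊗[R] A ≅ S[X₁, …, Xₙ]` descends to every
`R`-linear retract subring `S'` of `S` containing a certain finite set: the coefficients of the
images of generators of `A`, and the first components of tensors expressing the preimages of the
variables. -/
lemma exists_finite_nonempty_algEquiv.{u} {R S A σ : Type*} [CommRing R] [CommRing S]
    [CommRing A] [Algebra R S] [Algebra R A] [Finite σ] [Algebra.FiniteType R A]
    (e : (S ⊗[R] A) ≃ₐ[S] MvPolynomial σ S) :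
    ∃ Z : Set S, Z.Finite ∧ ∀ (S' : Type u) [CommRing S'] [Algebra R S'] [Algebra S' S]
      [IsScalarTower R S' S] (g : S →ₗ[R] S') (_ : ∀ s, g (algebraMap S' S s) = s)
      (_ : Z ⊆ Set.range (algebraMap S' S)),
      Nonempty ((S' ⊗[R] A) ≃ₐ[S'] MvPolynomial σ S') := by
  classical
  obtain ⟨t, ht⟩ := (inferInstance : Algebra.FiniteType R A).out
  have key : ∀ i, ∃ s : Finset (S × A),
      e.symm (MvPolynomial.X i) = ∑ p ∈ s, p.1 ⊗ₜ[R] p.2 :=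
    fun i ↦ TensorProduct.exists_finset _
  choose s hs using key
  refine ⟨(⋃ a ∈ t, ((e (1 ⊗ₜ a)).coeffs : Set S)) ∪ ⋃ i, ((s i).image Prod.fst : Finset S),
    ?_, ?_⟩
  · exact (t.finite_toSet.biUnion fun a _ ↦ Finset.finite_toSet _).union
      (Set.finite_iUnion fun i ↦ Finset.finite_toSet _)
  · intro S' _ _ _ _ g hg hZ
    refine nonempty_algEquiv_of_mem_range e g hg t ht (fun a ha ↦ ?_) fun i ↦ ?_
    · refine MvPolynomial.mem_range_map_iff_coeffs_subset.2 ?_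
      intro c hc
      exact hZ (Or.inl (Set.mem_biUnion ha hc))
    · rw [hs i]
      refine sum_mem fun p hp ↦ ?_
      obtain ⟨c, hc⟩ : p.1 ∈ Set.range (algebraMap S' S) :=
        hZ (Or.inr (Set.mem_iUnion.2 ⟨i, by simpa using ⟨p.2, hp⟩⟩))
      refine ⟨c ⊗ₜ p.2, ?_⟩
      simp [Algebra.ofId_apply, hc]

lemma exists_finset_mem_range {k R L : Type*} [Field k] [CommRing R] [Algebra k R]
    [Field L] [Algebra k L] (z : R ⊗[k] L) :
    ∃ T : Finset L, ∀ B : Subalgebra k L, (T : Set L) ⊆ B →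
      z ∈ (Algebra.TensorProduct.map (AlgHom.id R R) B.val).range := by
  classical
  obtain ⟨s, rfl⟩ := TensorProduct.exists_finset z
  refine ⟨s.image Prod.snd, fun B hB ↦ sum_mem fun p hp ↦ ?_⟩
  have hpB : p.2 ∈ B := hB (by simpa using ⟨p.1, hp⟩)
  exact ⟨p.1 ⊗ₜ ⟨p.2, hpB⟩, by simp⟩

/-- Let `k` be a field, `R` a ring containing `k`, and `A` an `R`-algebra.  Suppose
`A ⊗_k L` is a polynomial ring in `n` variables over `R ⊗_k L` for some field extension
`L` of `k`.  Then `A` is a finitely generated `R`-algebra, and there is a finitely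
generated subextension `L'` of `L/k` such that `A ⊗_k L'` is already a polynomial ring in
`n` variables over `R ⊗_k L'`. -/
theorem stmt7 (k : Type*) [Field k]
    (R : Type*) [CommRing R] [Algebra k R]
    (A : Type*) [CommRing A] [Algebra R A]
    (L : Type*) [Field L] [Algebra k L] (n : ℕ)
    (h : Nonempty (((R ⊗[k] L) ⊗[R] A) ≃ₐ[R ⊗[k] L] MvPolynomial (Fin n) (R ⊗[k] L))) :
    Algebra.FiniteType R A ∧
      ∃ L' : IntermediateField k L, L'.FG ∧
        Nonempty (((R ⊗[k] L'.toSubalgebra) ⊗[R] A) ≃ₐ[R ⊗[k] L'.toSubalgebra]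
          MvPolynomial (Fin n) (R ⊗[k] L'.toSubalgebra)) := by
  obtain ⟨e⟩ := h
  have hfin : Algebra.FiniteType (R ⊗[k] L) ((R ⊗[k] L) ⊗[R] A) :=
    Algebra.FiniteType.equiv inferInstance e.symm
  have hA : Algebra.FiniteType R A :=
    Algebra.FiniteType.of_finiteType_tensorProduct_of_faithfullyFlat (R ⊗[k] L)
  refine ⟨hA, ?_⟩
  obtain ⟨Z, hZ, H⟩ := exists_finite_nonempty_algEquiv e
  choose T hT using exists_finset_mem_range (k := k) (R := R) (L := L)
  let L' : IntermediateField k L := IntermediateField.adjoin k (⋃ z ∈ Z, (T z : Set L))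
  refine ⟨L', IntermediateField.fg_adjoin_of_finite
    (hZ.biUnion fun z _ ↦ Finset.finite_toSet _), ?_⟩
  let φ : R ⊗[k] L'.toSubalgebra →ₐ[R] R ⊗[k] L :=
    Algebra.TensorProduct.map (AlgHom.id R R) L'.toSubalgebra.val
  let _ : Algebra (R ⊗[k] L'.toSubalgebra) (R ⊗[k] L) := φ.toRingHom.toAlgebra
  have : IsScalarTower R (R ⊗[k] L'.toSubalgebra) (R ⊗[k] L) :=
    IsScalarTower.of_algebraMap_eq fun r ↦ (φ.commutes r).symm
  obtain ⟨g, hg⟩ := L'.toSubalgebra.val.toLinearMap.exists_leftInverse_of_injective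
    (LinearMap.ker_eq_bot.2 Subtype.val_injective)
  refine H _ (g.baseChange R) (fun x ↦ ?_) fun z hz ↦ ?_
  · change g.baseChange R (φ x) = x
    induction x with
    | zero => simp
    | add x y hx hy => rw [map_add, map_add, hx, hy]
    | tmul r l =>
      have hl : g (l : L) = l := LinearMap.congr_fun hg l
      exact congrArg (r ⊗ₜ[k] ·) hl
  · exact hT z L'.toSubalgebra fun l hl ↦
      IntermediateField.subset_adjoin k _ (Set.mem_biUnion hz hl)
end
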